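/- arXiv:2010.06754 — 2 statements merged into one kernel-verified Lean document; each statement's English description precedes it below -/
import Mathlib

section
/- There exist constants c > 0 and an integer m₀ ≥ 3 such that the following holds for every integer m ≥ m₀. Let s ↦ (u_s, Ω_s), s ∈ [0, ∞), be a curve with values in C²(𝕋) × (0, 1/2), continuous with respect to the C²(𝕋) × ℝ topology, satisfying: (A1) each u_s is even, (2π/m)-periodic, has zero mean over 𝕋 (equivalently u_s(θ) = Σ_{n=1}^∞ a_n cos(nmθ)), and u_s > −1; (A2) for each s, the domain D^{u_s} = {r(cos θ, sin θ) : 0 ≤ r < 1 + u_s(θ), θ ∈ 𝕋} together with Ω_s is a solution of the rotating patch equation; (A3) for each s > 0, u_s′(θ) < 0 for all θ ∈ (0, π/m); (A4) u_0 = 0 and Ω_0 = (m−1)/(2m). Then ‖u_s‖_{L∞(𝕋)} ≤ c/m for all s ≥ 0. -/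
/-!
By (A3) and the symmetries, the boundary of `D^{u_s}` is `r = q (cos (m θ))` with `q` increasing on
`[-1, 1]`. Let `ρ = q (-1) ≤ 1 ≤ q 1 = R` be the extreme radii, `ψ` the relative stream function
minus its boundary value. Zero mean bounds `|u_s|` by the oscillation `R - ρ`, so it suffices to
bound the latter by `400 / m`. It is continuous in `s` and vanishes at `s = 0`, and if it is at
most `400 / m` then it is at most `376 / m` (`osc_improve`, `patch_improve`); hence it never takes
the value `390 / m`.

The improvement rests on the circle average `Φ(s)` of `ψ` over `|z|² = s`, for `ρ² ≤ s ≤ R²`.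

* By `m`-fold symmetry the potential is within `12π / m²` of its circle averages (`pot_le_avg`,
  `pot_ge_avg`), and by a reflection argument it is monotone in `cos (m θ)` on circles
  (`pot_angular`). As every circle considered meets the boundary, `ψ ≤ 0` inside the domain and
  `0 ≤ ψ ≤ 12 / m²` outside (`stream_sign`). Averaging, `Φ(s) ≤ 12 F(s) / m²`, where `F(s)` is the
  proportion of the circle outside the domain (`avg_upper`).
* Comparison with an explicit function, harmonic off the `m` rays on which the radius is minimal,
  shows `ψ ≥ -2 (1 - 2Ω) / m` inside the domain (`slit_bound`), hence the same for `Φ`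
  (`avg_lower`).
* `Φ'(s) = ((1 - 2Ω) s - J(s)) / (4 s)`, where `π J(s)` is the area of the part of the disk
  `|z|² < s` outside the domain (`hasDerivAt_potT`), and `J` is convex with slope `F`
  (`Jfun_bounds`).

These facts force `R² - ρ² ≤ 376 / m`, uniformly in `Ω < 1/2` (`ode_bound`): first `Φ` increases
until `J` is comparable to `1 - 2Ω`, which takes a length `O(1/m)`, and afterwards it decreases
quadratically, which can last only for another length `O(1/m)`.
-/

open MeasureTheory Set Real Bornology

noncomputable section

/-- The plane `ℝ²`. -/
abbrev R2 : Type := EuclideanSpace ℝ (Fin 2)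

/-- The point of `ℝ²` with given coordinates. -/
def pt (a b : ℝ) : R2 := (EuclideanSpace.equiv (Fin 2) ℝ).symm ![a, b]

/-- The 2D Newtonian potential kernel `N(x) = (1/(2π)) log |x|`. -/
def nker (x : R2) : ℝ := (1 / (2 * π)) * Real.log ‖x‖

/-- The convolution `1_D * N`. -/
def patchConv (D : Set R2) (x : R2) : ℝ := ∫ y in D, nker (x - y)

/-- The relative stream function `Ψ(x) = (1_D * N)(x) − (Ω/2)|x|²`. -/
def streamFun (D : Set R2) (Ω : ℝ) (x : R2) : ℝ := patchConv D x - Ω / 2 * ‖x‖ ^ 2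

/-- `(D, Ω)` is a solution of the rotating patch equation: `D` is a bounded open
simply connected set whose boundary is a `C²` Jordan curve, and `Ψ` is constant
on `∂D`. -/
def IsPatchSolution (D : Set R2) (Ω : ℝ) : Prop :=
  IsOpen D ∧ IsBounded D ∧ SimplyConnectedSpace D ∧
  (∃ γ : ℝ → R2,
      ContDiff ℝ 2 γ ∧ Function.Periodic γ (2 * π) ∧
      Set.InjOn γ (Set.Ico 0 (2 * π)) ∧ (∀ t, deriv γ t ≠ 0) ∧
      Set.range γ = frontier D) ∧
  (∃ c : ℝ, ∀ x ∈ frontier D, streamFun D Ω x = c)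

/-- Rotation of the plane by angle `α` about the origin. -/
def rot (α : ℝ) (x : R2) : R2 :=
  pt (Real.cos α * x 0 - Real.sin α * x 1) (Real.sin α * x 0 + Real.cos α * x 1)

/-- `D` is `m`-fold symmetric. -/
def MFoldSymmetric (m : ℕ) (D : Set R2) : Prop := rot (2 * π / m) '' D = D

/-- Polar coordinates point `r(cos θ, sin θ)`. -/
def polar (r θ : ℝ) : R2 := pt (r * Real.cos θ) (r * Real.sin θ)

/-- The star-shaped domain with polar graph boundary `1 + u`. -/
def polarDomain (u : ℝ → ℝ) : Set R2 :=
  {x | ∃ r θ : ℝ, 0 ≤ r ∧ r < 1 + u θ ∧ x = polar r θ}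

/-- The polar graph `{(1+u(θ))(cos θ, sin θ)}`. -/
def polarGraph (u : ℝ → ℝ) : Set R2 := {x | ∃ θ : ℝ, x = polar (1 + u θ) θ}

/-- `L^∞` norm of a (continuous periodic) function on the torus. -/
def supNorm (u : ℝ → ℝ) : ℝ := ⨆ θ : ℝ, |u θ|

/-- The Fraenkel asymmetry. -/
def fraenkel (D : Set R2) : ℝ :=
  sInf (Set.range fun x : R2 =>
    (volume (symmDiff D (Metric.ball x (Real.sqrt ((volume D).toReal / π))))).toReal
      / (volume D).toReal)

/-- Asymmetry with respect to the unit disk centered at the origin. -/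
def asym0 (D : Set R2) : ℝ :=
  (volume (symmDiff D (Metric.ball (0 : R2) 1))).toReal / π

/-- The Laplacian in the plane. -/
def lap (p : R2 → ℝ) (x : R2) : ℝ :=
  ∑ i : Fin 2,
    fderiv ℝ (fun y => fderiv ℝ p y (EuclideanSpace.single i 1)) x (EuclideanSpace.single i 1)

/-- The radial function `g(r) = ℋ¹(∂B_r ∩ D)/(2πr)`, as a function on the plane. -/
def sliceg (D : Set R2) (y : R2) : ℝ :=
  (μH[1] (Metric.sphere (0 : R2) ‖y‖ ∩ D)).toReal / (2 * π * ‖y‖)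

/-- Convolution of `f` with the Newtonian potential over the plane. -/
def convN (f : R2 → ℝ) (x : R2) : ℝ := ∫ y, f y * nker (x - y)

/-! ### Logarithmic potentials in the plane -/

/-- The logarithmic potential `∫_E log |z - y| dy`, which is `2π` times the Newtonian potential
of `E`. -/
def pot (E : Set ℂ) (z : ℂ) : ℝ := ∫ y in E, Real.log ‖z - y‖

/-- The truncated potential `∫_E log max(δ, |z - y|) dy`. It is the average of `pot E` over the
circle of radius `δ` about `z`, see `circleAverage_pot`. -/
def potT (E : Set ℂ) (z : ℂ) (δ : ℝ) : ℝ := ∫ y in E, Real.log (max δ ‖z - y‖)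

lemma integral_norm_complex (f : ℝ → ℝ) :
    ∫ x : ℂ, f ‖x‖ = 2 * π * ∫ y in Ioi (0 : ℝ), y * f y := by
  rw [integral_fun_norm_addHaar (volume : Measure ℂ) f, measureReal_def, Complex.volume_ball]
  simp [Complex.finrank_real_complex, mul_assoc]

lemma integrableOn_mul_log (r : ℝ) : IntegrableOn (fun y : ℝ => y * Real.log y) (Ioo 0 r) := by
  have h : Continuous (fun y : ℝ => y * Real.log y) := Real.continuous_mul_log
  exact (h.integrableOn_Icc (a := 0) (b := r)).mono_set Ioo_subset_Icc_self

lemma integrableOn_log_ball (r : ℝ) :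
    IntegrableOn (fun x : ℂ => Real.log ‖x‖) (Metric.ball 0 r) := by
  rw [integrableOn_fun_norm_addHaar (volume : Measure ℂ) (f := Real.log)]
  simpa [Complex.finrank_real_complex] using integrableOn_mul_log r

lemma integrableOn_log_sub {E : Set ℂ} (hb : IsBounded E) (z : ℂ) :
    IntegrableOn (fun y : ℂ => Real.log ‖z - y‖) E := by
  obtain ⟨r, hr⟩ := hb.subset_ball z
  refine IntegrableOn.mono_set ?_ hr
  have h := integrableOn_log_ball r
  have hmp : MeasurePreserving (fun y : ℂ => z - y) volume volume :=
    Measure.measurePreserving_sub_left volume z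
  have hpre : Metric.ball z r = (fun y : ℂ => z - y) ⁻¹' Metric.ball 0 r := by
    ext y; simp [Complex.dist_eq, norm_sub_rev]
  rw [hpre]
  exact (hmp.integrableOn_comp_preimage (Homeomorph.subLeft z).measurableEmbedding).2 h

/-- The mass defect of the truncation on a full disk. -/
lemma integral_ball_trunc {δ : ℝ} (hδ : 0 < δ) (z : ℂ) :
    ∫ y in Metric.ball z δ, (Real.log δ - Real.log ‖z - y‖) = π * δ ^ 2 / 2 := by
  have hmp : MeasurePreserving (fun y : ℂ => z - y) volume volume :=
    Measure.measurePreserving_sub_left volume z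
  have hpre : Metric.ball z δ = (fun y : ℂ => z - y) ⁻¹' Metric.ball 0 δ := by
    ext y; simp [Complex.dist_eq, norm_sub_rev]
  rw [hpre, hmp.setIntegral_preimage_emb (Homeomorph.subLeft z).measurableEmbedding
    (fun w => Real.log δ - Real.log ‖w‖)]
  have h1 : ∫ w in Metric.ball (0:ℂ) δ, (Real.log δ - Real.log ‖w‖)
      = ∫ w : ℂ, (Iio δ).indicator (fun t => Real.log δ - Real.log t) ‖w‖ := by
    rw [← integral_indicator measurableSet_ball]
    congr 1; ext w
    simp [indicator]
  rw [h1, integral_norm_complex]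
  have h2 : ∫ y in Ioi (0:ℝ), y * (Iio δ).indicator (fun t => Real.log δ - Real.log t) y
      = ∫ y in (0:ℝ)..δ, (y * Real.log δ - y * Real.log y) := by
    rw [intervalIntegral.integral_of_le hδ.le, integral_Ioc_eq_integral_Ioo,
      ← integral_indicator measurableSet_Ioi, ← integral_indicator measurableSet_Ioo]
    congr 1; ext y
    by_cases h0 : 0 < y <;> by_cases h1 : y < δ <;> simp [indicator, h0, h1, mul_sub]
  rw [h2]
  have h3 : ∫ y in (0:ℝ)..δ, (y * Real.log δ - y * Real.log y) = δ ^ 2 / 4 := by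
    have hF : ContinuousOn (fun y : ℝ => y ^ 2 / 2 * Real.log δ - (y * (y * Real.log y) / 2 - y ^ 2 / 4))
        (Icc 0 δ) := by
      have := Real.continuous_mul_log
      fun_prop
    rw [intervalIntegral.integral_eq_sub_of_hasDerivAt_of_le hδ.le hF]
    · simp; ring
    · intro y hy
      have hl := Real.hasDerivAt_log hy.1.ne'
      have := (((hasDerivAt_id y).pow 2).div_const 2).mul_const (Real.log δ) |>.sub
        ((((hasDerivAt_id y).mul ((hasDerivAt_id y).mul hl)).div_const 2).sub
          (((hasDerivAt_id y).pow 2).div_const 4))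
      have hy0 := hy.1.ne'
      refine (this.congr_deriv ?_)
      simp; field_simp; ring
    · have := Real.continuous_mul_log
      exact (Continuous.intervalIntegrable (by fun_prop) _ _)
  rw [h3]; ring

lemma continuous_log_max {δ : ℝ} (hδ : 0 < δ) : Continuous (fun t : ℝ => Real.log (max δ t)) :=
  (continuous_const.max continuous_id).log (fun _ => (lt_max_of_lt_left hδ).ne')

lemma integrableOn_logT {E : Set ℂ} (hb : IsBounded E) {δ : ℝ} (hδ : 0 < δ) (z : ℂ) :
    IntegrableOn (fun y : ℂ => Real.log (max δ ‖z - y‖)) E := by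
  obtain ⟨r, hr⟩ := hb.subset_closedBall z
  have hc : Continuous (fun y : ℂ => Real.log (max δ ‖z - y‖)) :=
    (continuous_log_max hδ).comp (by fun_prop)
  exact (hc.continuousOn.integrableOn_compact (isCompact_closedBall z r)).mono_set hr

/-- Truncation only changes the kernel inside the disk of radius `δ`. -/
lemma potT_sub_pot {E : Set ℂ} (hE : MeasurableSet E) (hb : IsBounded E) {δ : ℝ} (hδ : 0 < δ) (z : ℂ) :
    potT E z δ - pot E z = ∫ y in E ∩ Metric.ball z δ, (Real.log δ - Real.log ‖z - y‖) := by
  rw [potT, pot, ← integral_sub (integrableOn_logT hb hδ z) (integrableOn_log_sub hb z),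
    ← setIntegral_indicator measurableSet_ball]
  refine setIntegral_congr_fun hE fun y _ => ?_
  by_cases h : y ∈ Metric.ball z δ
  · simp only [indicator_of_mem h]
    rw [Metric.mem_ball, Complex.dist_eq, norm_sub_rev] at h
    rw [max_eq_left h.le]
  · simp only [indicator_of_notMem h]
    rw [Metric.mem_ball, Complex.dist_eq, norm_sub_rev, not_lt] at h
    rw [max_eq_right h]; ring

lemma potT_sub_pot_of_subset {E : Set ℂ} (hE : MeasurableSet E) (hb : IsBounded E) {δ : ℝ}
    (hδ : 0 < δ) (z : ℂ) (hs : Metric.ball z δ ⊆ E) :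
    potT E z δ = pot E z + π * δ ^ 2 / 2 := by
  have := potT_sub_pot hE hb hδ z
  rw [inter_eq_self_of_subset_right hs, integral_ball_trunc hδ] at this
  linarith

lemma potT_sub_pot_bounds {E : Set ℂ} (hE : MeasurableSet E) (hb : IsBounded E) {δ : ℝ}
    (hδ : 0 < δ) (z : ℂ) :
    |potT E z δ - pot E z| ≤ π * δ ^ 2 / 2 := by
  have hnn : ∀ y ∈ Metric.ball z δ, 0 ≤ Real.log δ - Real.log ‖z - y‖ ∨ y = z := by
    intro y hy
    rw [Metric.mem_ball, Complex.dist_eq, norm_sub_rev] at hy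
    by_cases h : y = z
    · exact Or.inr h
    · left
      have : 0 < ‖z - y‖ := by rw [norm_pos_iff, sub_ne_zero]; exact fun h' => h h'.symm
      have := Real.log_le_log this hy.le
      linarith
  have hae : ∀ᵐ y ∂(volume.restrict (Metric.ball z δ)), 0 ≤ Real.log δ - Real.log ‖z - y‖ := by
    rw [ae_restrict_iff' measurableSet_ball]
    have : ∀ᵐ y : ℂ, y ≠ z := by simp [ae_iff]
    filter_upwards [this] with y hy hyb
    exact (hnn y hyb).resolve_right hy
  have hInt : IntegrableOn (fun y => Real.log δ - Real.log ‖z - y‖) (Metric.ball z δ) :=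
    (integrableOn_const measure_ball_lt_top.ne).sub (integrableOn_log_sub Metric.isBounded_ball z)
  rw [potT_sub_pot hE hb hδ, abs_of_nonneg, ← integral_ball_trunc hδ z]
  · exact setIntegral_mono_set hInt hae (inter_subset_right.eventuallyLE)
  · exact integral_nonneg_of_ae (ae_restrict_of_ae_restrict_of_subset inter_subset_right hae)

lemma continuous_potT {E : Set ℂ} (hE : MeasurableSet E) (hb : IsBounded E) {δ : ℝ} (hδ : 0 < δ) :
    Continuous (fun z => potT E z δ) := by
  obtain ⟨r, hr⟩ := hb.subset_closedBall 0
  have : potT E = fun z δ => ∫ y in E, Real.log (max δ ‖z - y‖) := rfl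
  rw [continuous_iff_continuousAt]
  intro z₀
  have hfin : volume E ≠ ⊤ := hb.measure_lt_top.ne
  refine continuousAt_of_dominated (F := fun z y => Real.log (max δ ‖z - y‖))
    (bound := fun _ => |Real.log δ| + |Real.log (max δ (‖z₀‖ + 1 + r))|) ?_ ?_ ?_ ?_
  · refine Filter.Eventually.of_forall fun z => ?_
    exact ((continuous_log_max hδ).comp (by fun_prop : Continuous fun y : ℂ => ‖z - y‖)).aestronglyMeasurable
  · filter_upwards [Metric.ball_mem_nhds z₀ one_pos] with z hz
    rw [ae_restrict_iff' hE]
    refine Filter.Eventually.of_forall fun y hy => ?_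
    have h1 : ‖z - y‖ ≤ ‖z₀‖ + 1 + r := by
      have hy' := hr hy
      rw [mem_closedBall_zero_iff] at hy'
      rw [mem_ball_iff_norm] at hz
      have h3 : ‖z - y‖ ≤ ‖z - z₀‖ + ‖z₀‖ + ‖y‖ := by
        calc ‖z - y‖ = ‖(z - z₀) + z₀ - y‖ := by ring_nf
          _ ≤ _ := (norm_sub_le _ _).trans (by gcongr; exact norm_add_le _ _)
      linarith
    have h2 : Real.log δ ≤ Real.log (max δ ‖z - y‖) := Real.log_le_log hδ (le_max_left _ _)
    have h3 : Real.log (max δ ‖z - y‖) ≤ Real.log (max δ (‖z₀‖ + 1 + r)) :=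
      Real.log_le_log (lt_max_of_lt_left hδ) (max_le_max le_rfl h1)
    rw [Real.norm_eq_abs, abs_le]
    constructor
    · have := neg_abs_le (Real.log δ); have := abs_nonneg (Real.log (max δ (‖z₀‖ + 1 + r))); linarith
    · have := le_abs_self (Real.log (max δ (‖z₀‖ + 1 + r))); have := abs_nonneg (Real.log δ); linarith
  · exact integrableOn_const hfin
  · refine Filter.Eventually.of_forall fun y => ?_
    exact ((continuous_log_max hδ).comp (by fun_prop : Continuous fun z : ℂ => ‖z - y‖)).continuousAt

lemma continuous_pot {E : Set ℂ} (hE : MeasurableSet E) (hb : IsBounded E) : Continuous (pot E) := by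
  have hu : TendstoUniformly (fun (n : ℕ) z => potT E z (1 / ((n : ℝ) + 1))) (pot E) Filter.atTop := by
    rw [Metric.tendstoUniformly_iff]
    intro ε hε
    have ht : Filter.Tendsto (fun n : ℕ => π * (1 / ((n : ℝ) + 1)) ^ 2 / 2) Filter.atTop (nhds (π * 0 ^ 2 / 2)) :=
      ((tendsto_one_div_add_atTop_nhds_zero_nat.pow 2).const_mul π).div_const 2
    have h0 : π * (0:ℝ) ^ 2 / 2 < ε := by simpa using hε
    filter_upwards [ht.eventually (gt_mem_nhds h0)] with n hn z
    rw [dist_comm, Real.dist_eq]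
    exact (potT_sub_pot_bounds hE hb (by positivity) z).trans_lt hn
  exact hu.continuous (Filter.Frequently.of_forall fun n => continuous_potT hE hb (by positivity))

/-- The average of `log |· - y|` over the circle of radius `r` about `c` is `log max(r, |c - y|)`;
integrate over `y ∈ E`. -/
lemma circleAverage_pot {E : Set ℂ} (hE : MeasurableSet E) (hb : IsBounded E) {r : ℝ} (hr : 0 < r) (c : ℂ) :
    circleAverage (pot E) c r = potT E c r := by
  have hfin : IsFiniteMeasure (volume.restrict E) := ⟨by simpa using hb.measure_lt_top⟩
  have hmeas : Measurable (fun p : ℝ × ℂ => Real.log ‖circleMap c r p.1 - p.2‖) := by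
    have : Continuous (fun p : ℝ × ℂ => circleMap c r p.1 - p.2) := by fun_prop
    exact Real.measurable_log.comp this.norm.measurable
  -- a bound uniform in the angle, needed to exchange the two integrals
  obtain ⟨s, hs⟩ := hb.subset_closedBall c
  have hbd : ∀ θ : ℝ, ∫ y in E, ‖Real.log ‖circleMap c r θ - y‖‖ ≤
      ∫ w in Metric.ball (0:ℂ) (r + |s| + 1), ‖Real.log ‖w‖‖ := by
    intro θ
    set z := circleMap c r θ
    have hsub : E ⊆ (fun y : ℂ => z - y) ⁻¹' Metric.ball 0 (r + |s| + 1) := by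
      intro y hy
      have hy' := hs hy
      rw [mem_closedBall_iff_norm] at hy'
      have hz : ‖z - c‖ = r := by simp [z, circleMap, abs_of_pos hr]
      simp only [mem_preimage, mem_ball_zero_iff]
      calc ‖z - y‖ = ‖(z - c) - (y - c)‖ := by ring_nf
        _ ≤ r + s := (norm_sub_le _ _).trans (by rw [hz]; linarith)
        _ < _ := by have := le_abs_self s; linarith
    have hmp : MeasurePreserving (fun y : ℂ => z - y) volume volume :=
      Measure.measurePreserving_sub_left volume z
    rw [← hmp.setIntegral_preimage_emb (Homeomorph.subLeft z).measurableEmbedding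
      (fun w => ‖Real.log ‖w‖‖)]
    refine setIntegral_mono_set ?_ ?_ hsub.eventuallyLE
    · exact (hmp.integrableOn_comp_preimage (Homeomorph.subLeft z).measurableEmbedding
        (f := fun w => ‖Real.log ‖w‖‖)).2 (integrableOn_log_ball _).norm
    · exact Filter.Eventually.of_forall fun y => norm_nonneg _
  have hInt : Integrable (fun p : ℝ × ℂ => Real.log ‖circleMap c r p.1 - p.2‖)
      ((volume.restrict (Ioc 0 (2 * π))).prod (volume.restrict E)) := by
    rw [integrable_prod_iff hmeas.aestronglyMeasurable]
    refine ⟨Filter.Eventually.of_forall fun θ => (integrableOn_log_sub hb (circleMap c r θ) :), ?_⟩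
    refine Integrable.mono' (integrable_const
      (∫ w in Metric.ball (0:ℂ) (r + |s| + 1), ‖Real.log ‖w‖‖)) ?_ ?_
    · exact (hmeas.norm.stronglyMeasurable.integral_prod_right').aestronglyMeasurable
    · refine Filter.Eventually.of_forall fun θ => ?_
      rw [Real.norm_of_nonneg (integral_nonneg fun y => norm_nonneg _)]
      exact hbd θ
  rw [circleAverage_def, intervalIntegral.integral_of_le (by positivity)]
  simp only [pot]
  rw [integral_integral_swap (f := fun θ y => Real.log ‖circleMap c r θ - y‖) hInt, potT, ← integral_smul]
  refine setIntegral_congr_fun hE fun y _ => ?_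
  have h := circleAverage_log_norm_sub_const_eq_log_radius_add_posLog (a := y) (c := c) hr.ne'
  rw [circleAverage_def, intervalIntegral.integral_of_le (by positivity)] at h
  rw [h, posLog_eq_log_max_one (by positivity), ← Real.log_mul hr.ne' (by positivity)]
  congr 1
  rw [mul_max_of_nonneg _ _ hr.le]
  field_simp

/-! ### Potentials of `m`-fold symmetric sets -/

/-- Invariance of a planar set under the rotations by multiples of `2π/m`. -/
def MFold (m : ℕ) (E : Set ℂ) : Prop := ∀ ζ : ℂ, ζ ^ m = 1 → ∀ y, ζ * y ∈ E ↔ y ∈ E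

lemma measurePreserving_mul_unit {ζ : ℂ} (hζ : ‖ζ‖ = 1) :
    MeasurePreserving (fun y : ℂ => ζ * y) volume volume := by
  have h := (rotation ⟨ζ, by simpa [Submonoid.unitSphere] using hζ⟩).measurePreserving
  exact h

lemma measurableEmbedding_mul_unit {ζ : ℂ} (hζ : ‖ζ‖ = 1) :
    MeasurableEmbedding (fun y : ℂ => ζ * y) :=
  measurableEmbedding_mulLeft₀ (by rw [← norm_ne_zero_iff, hζ]; exact one_ne_zero)

lemma ae_pow_ne {m : ℕ} (hm : m ≠ 0) (p : ℂ) : ∀ᵐ y : ℂ, y ^ m ≠ p := by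
  have hf : {y : ℂ | y ^ m = p}.Finite := by
    have := (Polynomial.nthRoots m p).toFinset.finite_toSet
    refine this.subset fun y hy => ?_
    simpa [Polynomial.mem_nthRoots (Nat.pos_of_ne_zero hm)] using hy
  rw [ae_iff]
  simpa using hf.measure_zero volume

lemma log_pow_sub_pow {m : ℕ} (hm : m ≠ 0) {z y : ℂ} (h : y ^ m ≠ z ^ m) :
    Real.log ‖z ^ m - y ^ m‖ = ∑ ζ ∈ Polynomial.nthRootsFinset m (1 : ℂ), Real.log ‖z - ζ * y‖ := by
  have hp := Complex.isPrimitiveRoot_exp m hm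
  have h1 := hp.pow_sub_pow_eq_prod_sub_mul z y (Nat.pos_of_ne_zero hm)
  have h0 : z ^ m - y ^ m ≠ 0 := sub_ne_zero.2 h.symm
  rw [h1, norm_prod, Real.log_prod]
  intro ζ hζ h2
  rw [norm_eq_zero] at h2
  exact h0 (h1.trans (Finset.prod_eq_zero hζ h2))

lemma integrableOn_log_mul {E : Set ℂ} (hb : IsBounded E) {m : ℕ}
    (hs : MFold m E) (hm : m ≠ 0) {ζ : ℂ} (hζ : ζ ^ m = 1) (z : ℂ) :
    IntegrableOn (fun y => Real.log ‖z - ζ * y‖) E ∧ ∫ y in E, Real.log ‖z - ζ * y‖ = pot E z := by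
  have h1 : ‖ζ‖ = 1 := Complex.norm_eq_one_of_pow_eq_one hζ hm
  have hpre : (fun y : ℂ => ζ * y) ⁻¹' E = E := by ext y; exact hs ζ hζ y
  have hmp := measurePreserving_mul_unit h1
  have hme := measurableEmbedding_mul_unit h1
  constructor
  · have := (hmp.integrableOn_comp_preimage hme (s := E)
      (f := fun y => Real.log ‖z - y‖)).2 (integrableOn_log_sub hb z)
    rwa [hpre] at this
  · have := hmp.setIntegral_preimage_emb hme (fun y => Real.log ‖z - y‖) E
    rwa [hpre] at this

lemma integrableOn_log_pow {E : Set ℂ} (hb : IsBounded E) {m : ℕ}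
    (hs : MFold m E) (hm : m ≠ 0) (z : ℂ) :
    IntegrableOn (fun y => Real.log ‖z ^ m - y ^ m‖) E := by
  have : IntegrableOn (fun y => ∑ ζ ∈ Polynomial.nthRootsFinset m (1 : ℂ), Real.log ‖z - ζ * y‖) E := by
    refine integrable_finsetSum _ fun ζ hζ => ?_
    rw [Polynomial.mem_nthRootsFinset (Nat.pos_of_ne_zero hm)] at hζ
    exact (integrableOn_log_mul hb hs hm hζ z).1
  refine this.congr (ae_restrict_of_ae ?_)
  filter_upwards [ae_pow_ne hm (z ^ m)] with y hy
  exact (log_pow_sub_pow hm hy).symm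

/-- Summing the kernel over the rotations that preserve `E`, since
`z ^ m - y ^ m = ∏ (z - ζ y)` over the `m`-th roots of unity `ζ`. -/
lemma pot_mfold {E : Set ℂ} (hb : IsBounded E) {m : ℕ}
    (hs : MFold m E) (hm : m ≠ 0) (z : ℂ) :
    ∫ y in E, Real.log ‖z ^ m - y ^ m‖ = m * pot E z := by
  have h1 : ∫ y in E, Real.log ‖z ^ m - y ^ m‖
      = ∫ y in E, ∑ ζ ∈ Polynomial.nthRootsFinset m (1 : ℂ), Real.log ‖z - ζ * y‖ := by
    refine integral_congr_ae (ae_restrict_of_ae ?_)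
    filter_upwards [ae_pow_ne hm (z ^ m)] with y hy
    exact log_pow_sub_pow hm hy
  have hmem : ∀ ζ ∈ Polynomial.nthRootsFinset m (1 : ℂ), ζ ^ m = 1 := fun ζ hζ => by
    rwa [Polynomial.mem_nthRootsFinset (Nat.pos_of_ne_zero hm)] at hζ
  rw [h1, integral_finsetSum _ fun ζ hζ => (integrableOn_log_mul hb hs hm (hmem ζ hζ) z).1,
    Finset.sum_congr rfl fun ζ hζ => (integrableOn_log_mul hb hs hm (hmem ζ hζ) z).2,
    Finset.sum_const, (Complex.isPrimitiveRoot_exp m hm).card_nthRootsFinset, nsmul_eq_mul]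

/-- The radial profile `(min(r,t)/max(r,t))^m` dominating the oscillating part of the kernel. -/
def kerK (m : ℕ) (r t : ℝ) : ℝ := (min r t / max r t) ^ m

/-- From `log |1 - w| ≤ |w|`, where `w` is the quotient of the smaller of `z ^ m`, `y ^ m` by the
larger. -/
lemma kernel_bound {m : ℕ} {z y : ℂ} (hz : z ≠ 0) (h : y ^ m ≠ z ^ m) :
    Real.log ‖z ^ m - y ^ m‖ ≤ m * Real.log (max ‖z‖ ‖y‖) + kerK m ‖z‖ ‖y‖ := by
  have hz' : 0 < ‖z‖ := norm_pos_iff.2 hz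
  have hM : 0 < max ‖z‖ ‖y‖ := lt_max_of_lt_left hz'
  have hk : 0 ≤ kerK m ‖z‖ ‖y‖ := by unfold kerK; positivity
  have h1 : ‖z ^ m - y ^ m‖ ≤ (max ‖z‖ ‖y‖) ^ m * (1 + kerK m ‖z‖ ‖y‖) := by
    have : (max ‖z‖ ‖y‖) ^ m * (1 + kerK m ‖z‖ ‖y‖) = ‖z‖ ^ m + ‖y‖ ^ m := by
      have h2 : (max ‖z‖ ‖y‖) ^ m * (1 + kerK m ‖z‖ ‖y‖) = (max ‖z‖ ‖y‖) ^ m + (min ‖z‖ ‖y‖) ^ m := by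
        unfold kerK; rw [div_pow]; field_simp
      rw [h2]
      rcases le_total ‖z‖ ‖y‖ with h | h
      · rw [max_eq_right h, min_eq_left h, add_comm]
      · rw [max_eq_left h, min_eq_right h]
    rw [this]
    simpa using norm_sub_le (z ^ m) (y ^ m)
  have h0 : 0 < ‖z ^ m - y ^ m‖ := norm_pos_iff.2 (sub_ne_zero.2 h.symm)
  calc Real.log ‖z ^ m - y ^ m‖ ≤ Real.log ((max ‖z‖ ‖y‖) ^ m * (1 + kerK m ‖z‖ ‖y‖)) :=
        Real.log_le_log h0 h1
    _ = m * Real.log (max ‖z‖ ‖y‖) + Real.log (1 + kerK m ‖z‖ ‖y‖) := by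
        rw [Real.log_mul (by positivity) (by positivity), Real.log_pow]
    _ ≤ _ := by
        have := Real.log_le_sub_one_of_pos (show 0 < 1 + kerK m ‖z‖ ‖y‖ by positivity)
        linarith

lemma kerK_integral {m : ℕ} (hm : 3 ≤ m) {r : ℝ} (hr : 0 < r) :
    IntegrableOn (fun t => t * kerK m r t) (Ioi 0) ∧
    ∫ t in Ioi (0:ℝ), t * kerK m r t = r ^ 2 / (m + 2) + r ^ 2 / (m - 2) := by
  have hm' : (3:ℝ) ≤ m := by exact_mod_cast hm
  have e1 : EqOn (fun t => t * kerK m r t) (fun t => t ^ (m+1) / r ^ m) (Ioc 0 r) := by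
    intro t ht
    simp only [kerK, min_eq_right ht.2, max_eq_left ht.2, div_pow]; ring
  have e2 : EqOn (fun t => t * kerK m r t) (fun t => r ^ m * t ^ ((1:ℝ) - m)) (Ioi r) := by
    intro t ht
    have ht' : r ≤ t := (le_of_lt ht)
    have h0 : 0 < t := hr.trans ht
    simp only [kerK, min_eq_left ht', max_eq_right ht', div_pow]
    rw [Real.rpow_sub h0, Real.rpow_one, Real.rpow_natCast]; ring
  have i1 : IntegrableOn (fun t => t ^ (m+1) / r ^ m) (Ioc 0 r) :=
    (Continuous.integrableOn_Icc (by fun_prop) (a := 0) (b := r)).mono_set Ioc_subset_Icc_self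
  have ha : (1:ℝ) - m < -1 := by linarith
  have i2 : IntegrableOn (fun t => r ^ m * t ^ ((1:ℝ) - m)) (Ioi r) :=
    (integrableOn_Ioi_rpow_of_lt ha hr).const_mul _
  have j1 := i1.congr_fun e1.symm measurableSet_Ioc
  have j2 := i2.congr_fun e2.symm measurableSet_Ioi
  have hu : Ioi (0:ℝ) = Ioc 0 r ∪ Ioi r := (Ioc_union_Ioi_eq_Ioi hr.le).symm
  refine ⟨by rw [hu]; exact j1.union j2, ?_⟩
  rw [hu, setIntegral_union (Ioc_disjoint_Ioi le_rfl) measurableSet_Ioi j1 j2,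
    setIntegral_congr_fun measurableSet_Ioc e1, setIntegral_congr_fun measurableSet_Ioi e2,
    integral_const_mul, integral_Ioi_rpow_of_lt ha hr, ← intervalIntegral.integral_of_le hr.le,
    intervalIntegral.integral_div, integral_pow]
  have : (1:ℝ) - m + 1 = 2 - m := by ring
  rw [this, Real.rpow_sub hr, Real.rpow_natCast]
  have h2 : (m:ℝ) - 2 ≠ 0 := by linarith
  have h3 : (2:ℝ) - m ≠ 0 := by linarith
  have h4 : (m:ℝ) + 2 ≠ 0 := by linarith
  push_cast
  congr 1
  · field_simp; ring_nf
  · norm_num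
    field_simp; ring

lemma kerK_integrable {m : ℕ} (hm : 3 ≤ m) {r : ℝ} (hr : 0 < r) :
    Integrable (fun y : ℂ => kerK m r ‖y‖) := by
  rw [integrable_fun_norm_addHaar (volume : Measure ℂ) (f := kerK m r)]
  simpa [Complex.finrank_real_complex] using (kerK_integral hm hr).1

/-- The potential of an `m`-fold set exceeds its own circle average by `O(m⁻²)` at most. -/
lemma pot_le_avg {E : Set ℂ} (hb : IsBounded E) {m : ℕ}
    (hs : MFold m E) (hm : 10 ≤ m) {z : ℂ} (hz : z ≠ 0) (hz2 : ‖z‖ ^ 2 ≤ 2) :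
    pot E z ≤ potT E 0 ‖z‖ + 12 * π / m ^ 2 := by
  have hm0 : m ≠ 0 := by omega
  have hm' : (10:ℝ) ≤ m := by exact_mod_cast hm
  have hz' : 0 < ‖z‖ := norm_pos_iff.2 hz
  have hK := kerK_integrable (m := m) (by omega) hz'
  have hKv : ∫ y : ℂ, kerK m ‖z‖ ‖y‖ = 2 * π * (‖z‖ ^ 2 / (m + 2) + ‖z‖ ^ 2 / (m - 2)) := by
    rw [integral_norm_complex, (kerK_integral (by omega) hz').2]
  have hT := integrableOn_logT hb hz' 0
  have h1 : ∫ y in E, Real.log ‖z ^ m - y ^ m‖ ≤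
      ∫ y in E, (m * Real.log (max ‖z‖ ‖0 - y‖) + kerK m ‖z‖ ‖y‖) := by
    refine integral_mono_ae (integrableOn_log_pow hb hs hm0 z)
      ((hT.const_mul _).add hK.integrableOn) (ae_restrict_of_ae ?_)
    filter_upwards [ae_pow_ne hm0 (z ^ m)] with y hy
    simpa using kernel_bound hz hy
  rw [pot_mfold hb hs hm0, integral_add (hT.const_mul _) hK.integrableOn, integral_const_mul] at h1
  have h2 : ∫ y in E, kerK m ‖z‖ ‖y‖ ≤ ∫ y : ℂ, kerK m ‖z‖ ‖y‖ :=
    setIntegral_le_integral hK (Filter.Eventually.of_forall fun y => by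
      simp only [kerK, Pi.zero_apply]; positivity)
  have h3 : ‖z‖ ^ 2 / (m + 2) + ‖z‖ ^ 2 / (m - 2) ≤ 6 / (m:ℝ) := by
    have hp : (0:ℝ) < m - 2 := by linarith
    have : ‖z‖ ^ 2 / (m + 2) + ‖z‖ ^ 2 / (m - 2) ≤ 2 / (m + 2) + 2 / ((m:ℝ) - 2) := by gcongr
    refine this.trans ?_
    rw [div_add_div _ _ (by positivity) hp.ne', div_le_div_iff₀ (by positivity) (by positivity)]
    nlinarith
  have h4 : (m:ℝ) * pot E z ≤ m * potT E 0 ‖z‖ + 2 * π * (6 / m) := by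
    have : 2 * π * (‖z‖ ^ 2 / (m + 2) + ‖z‖ ^ 2 / (m - 2)) ≤ 2 * π * (6 / m) := by gcongr
    unfold potT; linarith
  have h5 : (m:ℝ) * potT E 0 ‖z‖ + 2 * π * (6 / m) = m * (potT E 0 ‖z‖ + 12 * π / m ^ 2) := by
    field_simp; ring
  rw [h5] at h4
  exact le_of_mul_le_mul_left h4 (by positivity)

lemma pot_ball_rot (R : ℝ) {ζ : ℂ} (hζ : ‖ζ‖ = 1) (z : ℂ) :
    pot (Metric.ball 0 R) (ζ * z) = pot (Metric.ball 0 R) z := by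
  have hpre : (fun y : ℂ => ζ * y) ⁻¹' Metric.ball 0 R = Metric.ball 0 R := by
    ext y; simp [hζ]
  have := (measurePreserving_mul_unit hζ).setIntegral_preimage_emb
    (measurableEmbedding_mul_unit hζ) (fun y => Real.log ‖ζ * z - y‖) (Metric.ball 0 R)
  rw [hpre] at this
  rw [pot, ← this, pot]
  congr 1; ext y
  rw [← mul_sub, norm_mul, hζ, one_mul]

lemma pot_ball_radial (R : ℝ) {z : ℂ} (hz : z ≠ 0) :
    pot (Metric.ball 0 R) z = potT (Metric.ball 0 R) 0 ‖z‖ := by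
  have hz' : 0 < ‖z‖ := norm_pos_iff.2 hz
  rw [← circleAverage_pot measurableSet_ball Metric.isBounded_ball hz' 0]
  refine (circleAverage_const_on_circle ?_).symm
  intro w hw
  have hw' : ‖w‖ = ‖z‖ := by simpa using hw
  have : w = (w / z) * z := by field_simp
  rw [this]
  exact pot_ball_rot R (by rw [norm_div, hw', div_self hz'.ne']) z

/-- The companion of `pot_le_avg`, obtained by applying it to the complement of `E` in a disk, as
the potential of a disk is radial. -/
lemma pot_ge_avg {E : Set ℂ} (hE : MeasurableSet E) {m : ℕ} {R : ℝ} (hb : E ⊆ Metric.ball 0 R)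
    (hs : MFold m E) (hm : 10 ≤ m) {z : ℂ} (hz : z ≠ 0) (hz2 : ‖z‖ ^ 2 ≤ 2) :
    potT E 0 ‖z‖ - 12 * π / m ^ 2 ≤ pot E z := by
  have hz' : 0 < ‖z‖ := norm_pos_iff.2 hz
  have hs' : MFold m (Metric.ball 0 R \ E) := by
    intro ζ hζ y
    have h1 : ‖ζ‖ = 1 := Complex.norm_eq_one_of_pow_eq_one hζ (by omega)
    simp only [mem_sdiff, hs ζ hζ y, mem_ball_zero_iff, norm_mul, h1, one_mul]
  have hbb : IsBounded (Metric.ball (0:ℂ) R) := Metric.isBounded_ball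
  have h1 := pot_le_avg (hbb.subset sdiff_subset) hs' hm hz hz2
  have e1 : pot (Metric.ball 0 R \ E) z = pot (Metric.ball 0 R) z - pot E z :=
    setIntegral_sdiff hE (integrableOn_log_sub hbb z) hb
  have e2 : potT (Metric.ball 0 R \ E) 0 ‖z‖ = potT (Metric.ball 0 R) 0 ‖z‖ - potT E 0 ‖z‖ :=
    setIntegral_sdiff hE (integrableOn_logT hbb hz' 0) hb
  rw [e1, e2, pot_ball_radial R hz] at h1
  linarith

/-! ### Angular monotonicity of the potential -/

/-- `cos (m arg z)`, the angular variable of an `m`-fold even profile. -/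
def ang (m : ℕ) (z : ℂ) : ℝ := Real.cos (m * z.arg)

lemma pow_re_eq (m : ℕ) (z : ℂ) : (z ^ m).re = ‖z‖ ^ m * ang m z := by
  conv_lhs => rw [← Complex.norm_mul_exp_arg_mul_I z]
  rw [mul_pow, ← Complex.exp_nat_mul, ← Complex.ofReal_pow, Complex.re_ofReal_mul]
  have : (m : ℂ) * (z.arg * Complex.I) = ((m * z.arg : ℝ) : ℂ) * Complex.I := by push_cast; ring
  rw [this, Complex.exp_ofReal_mul_I_re, ang]

lemma ang_eq_div {m : ℕ} {z : ℂ} (hz : z ≠ 0) : ang m z = (z ^ m).re / ‖z‖ ^ m := by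
  have : 0 < ‖z‖ := norm_pos_iff.2 hz
  rw [pow_re_eq]; field_simp

lemma ang_mem (m : ℕ) (z : ℂ) : ang m z ∈ Icc (-1:ℝ) 1 := ⟨Real.neg_one_le_cos _, Real.cos_le_one _⟩

/-- A radial profile: the boundary radius as an increasing function of `cos (m θ)`. -/
structure Prof (q : ℝ → ℝ) : Prop where
  cont : Continuous q
  mono : StrictMonoOn q (Icc (-1) 1)
  pos : 0 < q (-1)

/-- The star-shaped domain `r < q (cos (m θ))`. -/
def dom (m : ℕ) (q : ℝ → ℝ) : Set ℂ := {z | ‖z‖ < q (ang m z)}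

lemma Prof.lower {q : ℝ → ℝ} (hq : Prof q) {x : ℝ} (hx : x ∈ Icc (-1:ℝ) 1) : q (-1) ≤ q x :=
  hq.mono.monotoneOn (by simp) hx hx.1

lemma Prof.upper {q : ℝ → ℝ} (hq : Prof q) {x : ℝ} (hx : x ∈ Icc (-1:ℝ) 1) : q x ≤ q 1 :=
  hq.mono.monotoneOn hx (by simp) hx.2

lemma dom_subset_ball {m : ℕ} {q : ℝ → ℝ} (hq : Prof q) : dom m q ⊆ Metric.ball 0 (q 1) := by
  intro z hz
  rw [mem_ball_zero_iff]
  exact lt_of_lt_of_le hz (hq.upper (ang_mem m z))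

lemma ball_subset_dom {m : ℕ} {q : ℝ → ℝ} (hq : Prof q) : Metric.ball 0 (q (-1)) ⊆ dom m q := by
  intro z hz
  rw [mem_ball_zero_iff] at hz
  exact lt_of_lt_of_le hz (hq.lower (ang_mem m z))

lemma dom_bounded {m : ℕ} {q : ℝ → ℝ} (hq : Prof q) : IsBounded (dom m q) :=
  Metric.isBounded_ball.subset (dom_subset_ball hq)

lemma measurable_ang (m : ℕ) : Measurable (ang m) :=
  Real.measurable_cos.comp (Complex.measurable_arg.const_mul _)

lemma dom_measurable {m : ℕ} {q : ℝ → ℝ} (hq : Prof q) : MeasurableSet (dom m q) :=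
  measurableSet_lt continuous_norm.measurable (hq.cont.measurable.comp (measurable_ang m))

lemma ang_mul_root {m : ℕ} {ζ : ℂ} (hζ : ζ ^ m = 1) (hm : m ≠ 0) (z : ℂ) : ang m (ζ * z) = ang m z := by
  by_cases hz : z = 0
  · simp [hz]
  have h1 : ‖ζ‖ = 1 := Complex.norm_eq_one_of_pow_eq_one hζ hm
  have h0 : ζ ≠ 0 := by rw [← norm_ne_zero_iff, h1]; exact one_ne_zero
  rw [ang_eq_div (mul_ne_zero h0 hz), ang_eq_div hz, mul_pow, hζ, norm_mul, h1]; simp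

lemma dom_mfold {m : ℕ} (hm : m ≠ 0) (q : ℝ → ℝ) : MFold m (dom m q) := by
  intro ζ hζ y
  have h1 : ‖ζ‖ = 1 := Complex.norm_eq_one_of_pow_eq_one hζ hm
  simp only [dom, mem_ofPred_eq, ang_mul_root hζ hm, norm_mul, h1, one_mul]

/-- Coordinate form of `reflection_dist`, with `p1 = x1 + i y1`, `p2 = x2 + i y2`, `P = X + i Y`:
the displacement of `P` under the reflection is a multiple of `p1 - p2`, so comparing real parts
tells on which side of the axis `P` lies. -/
lemma reflection_ineq {x1 y1 x2 y2 X Y L : ℝ} (h1 : x1 ^ 2 + y1 ^ 2 = L) (h2 : x2 ^ 2 + y2 ^ 2 = L)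
    (hL : 0 < L) (h12 : x2 ≤ x1)
    (h : (x1 * x2 - y1 * y2) * X + (x1 * y2 + x2 * y1) * Y < L * X) :
    0 ≤ (x1 - x2) * X + (y1 - y2) * Y := by
  have key : ((x1 - x2) ^ 2 + (y1 - y2) ^ 2) *
      (L * X - ((x1 * x2 - y1 * y2) * X + (x1 * y2 + x2 * y1) * Y)) =
      2 * L * (x1 - x2) * ((x1 - x2) * X + (y1 - y2) * Y) := by
    grind
  by_contra hc
  push Not at hc
  have hne : 0 < (x1 - x2) ^ 2 + (y1 - y2) ^ 2 := by
    by_contra h0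
    have ha : x1 - x2 = 0 := by nlinarith [sq_nonneg (x1 - x2), sq_nonneg (y1 - y2)]
    have hb : y1 - y2 = 0 := by nlinarith [sq_nonneg (x1 - x2), sq_nonneg (y1 - y2)]
    rw [ha, hb] at hc; simp at hc
  have hpos : 0 < ((x1 - x2) ^ 2 + (y1 - y2) ^ 2) *
      (L * X - ((x1 * x2 - y1 * y2) * X + (x1 * y2 + x2 * y1) * Y)) := mul_pos hne (by linarith)
  rw [key] at hpos
  have : 2 * L * (x1 - x2) * ((x1 - x2) * X + (y1 - y2) * Y) ≤ 0 :=
    mul_nonpos_of_nonneg_of_nonpos (by have := sub_nonneg.2 h12; positivity) hc.le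
  linarith

/-- The map `P ↦ ω * conj P` is the reflection exchanging `p1` and `p2`. If it decreases the real
part of `P`, then `P` is at least as close to `p1`, the point with the larger real part, as to
`p2`. -/
lemma reflection_dist {p1 p2 P ω : ℂ} (h : ‖p1‖ = ‖p2‖) (h0 : p1 ≠ 0) (hre : p2.re ≤ p1.re)
    (hω : ω * (‖p1‖ ^ 2 : ℝ) = p1 * p2) (hP : (ω * (starRingEnd ℂ) P).re < P.re) :
    ‖p1 - P‖ ≤ ‖p2 - P‖ := by
  have hL : 0 < ‖p1‖ ^ 2 := by have := norm_pos_iff.2 h0; positivity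
  have e1 : p1.re ^ 2 + p1.im ^ 2 = ‖p1‖ ^ 2 := by
    rw [← Complex.normSq_eq_norm_sq, Complex.normSq_apply]; ring
  have e2 : p2.re ^ 2 + p2.im ^ 2 = ‖p1‖ ^ 2 := by
    rw [h, ← Complex.normSq_eq_norm_sq, Complex.normSq_apply]; ring
  have c1 : ω.re * ‖p1‖ ^ 2 = p1.re * p2.re - p1.im * p2.im := by
    have := congrArg Complex.re hω
    simpa [-Complex.ofReal_pow] using this
  have c2 : ω.im * ‖p1‖ ^ 2 = p1.re * p2.im + p2.re * p1.im := by
    have := congrArg Complex.im hω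
    simp [-Complex.ofReal_pow] at this
    linarith
  have c3 : ω.re * P.re + ω.im * P.im < P.re := by simpa using hP
  have := reflection_ineq e1 e2 hL hre (X := P.re) (Y := P.im) (by
    rw [← c1, ← c2]; nlinarith)
  rw [← sq_le_sq₀ (norm_nonneg _) (norm_nonneg _), ← Complex.normSq_eq_norm_sq,
    ← Complex.normSq_eq_norm_sq, Complex.normSq_apply, Complex.normSq_apply]
  simp only [Complex.sub_re, Complex.sub_im]
  nlinarith

lemma measurePreserving_refl {ω : ℂ} (hω : ‖ω‖ = 1) :
    MeasurePreserving (fun y : ℂ => ω * (starRingEnd ℂ) y) volume volume :=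
  (measurePreserving_mul_unit hω).comp Complex.conjLIE.measurePreserving

/-- Angular monotonicity: on a circle, the potential of `dom m q` decreases as `cos (m θ)` increases.
By `pot_mfold` this concerns the integral of `log |z1 ^ m - y ^ m| - log |z2 ^ m - y ^ m|`, which is
odd under the mirror map `σ` of the plane whose `m`-th power exchanges `z1 ^ m` and `z2 ^ m`. Hence
only points whose mirror image is outside the domain contribute, and since `q` increases, these are
the points closer to `z1 ^ m` in the variable `y ^ m`. -/
lemma pot_angular {m : ℕ} (hm : m ≠ 0) {q : ℝ → ℝ} (hq : Prof q) {z1 z2 : ℂ} (hn : ‖z1‖ = ‖z2‖)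
    (ha : ang m z2 ≤ ang m z1) : pot (dom m q) z1 ≤ pot (dom m q) z2 := by
  by_cases hz : z1 = 0
  · have : z2 = 0 := by rw [← norm_eq_zero, ← hn, hz, norm_zero]
    rw [hz, this]
  have hr : 0 < ‖z1‖ := norm_pos_iff.2 hz
  set D := dom m q with hD
  have hb : IsBounded D := dom_bounded hq
  have hDm : MeasurableSet D := dom_measurable hq
  have hs : MFold m D := dom_mfold hm q
  set ω : ℂ := z1 * z2 / (‖z1‖ ^ 2 : ℝ) with hω
  have hω1 : ‖ω‖ = 1 := by
    rw [hω, norm_div, norm_mul, ← hn, Complex.norm_real, Real.norm_of_nonneg (by positivity)]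
    field_simp
  have hωc : ω * (starRingEnd ℂ) ω = 1 := by
    rw [Complex.mul_conj, Complex.normSq_eq_norm_sq, hω1]; simp
  set σ : ℂ → ℂ := fun y => ω * (starRingEnd ℂ) y with hσ
  have hσσ : ∀ y, σ (σ y) = y := by
    intro y; simp only [hσ, map_mul, Complex.conj_conj]
    rw [← mul_assoc, hωc, one_mul]
  have hσn : ∀ y, ‖σ y‖ = ‖y‖ := by intro y; simp [hσ, hω1]
  have hσm : ∀ y, (σ y) ^ m = ω ^ m * (starRingEnd ℂ) (y ^ m) := by
    intro y; simp only [hσ, mul_pow, map_pow]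
  have hmp : MeasurePreserving σ volume volume := measurePreserving_refl hω1
  have hme : MeasurableEmbedding σ := by
    let e : ℂ ≃ₜ ℂ := ⟨⟨σ, σ, hσσ, hσσ⟩, by fun_prop, by fun_prop⟩
    exact e.measurableEmbedding
  set p1 := z1 ^ m
  set p2 := z2 ^ m
  have hp10 : p1 ≠ 0 := pow_ne_zero _ hz
  have hpn : ‖p1‖ = ‖p2‖ := by simp [p1, p2, hn]
  have hpre : p2.re ≤ p1.re := by
    simp only [p1, p2, pow_re_eq, ← hn]; gcongr
  have hωm : ω ^ m * (‖p1‖ ^ 2 : ℝ) = p1 * p2 := by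
    have hr' : (‖z1‖ : ℂ) ≠ 0 := by exact_mod_cast hr.ne'
    simp only [hω, p1, p2, norm_pow, div_pow, mul_pow]
    push_cast
    field_simp
    ring
  have hdist : ∀ p p' : ℂ, ω ^ m * (starRingEnd ℂ) p' = p → ∀ y, ‖p - (σ y) ^ m‖ = ‖p' - y ^ m‖ := by
    intro p p' h y
    rw [hσm, ← h, ← mul_sub, norm_mul, norm_pow, hω1, one_pow, one_mul, ← map_sub, Complex.norm_conj]
  have hc2 : (starRingEnd ℂ) p2 * p2 = (‖p1‖ ^ 2 : ℝ) := by
    rw [mul_comm, Complex.mul_conj, Complex.normSq_eq_norm_sq, hpn]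
  have hc1 : (starRingEnd ℂ) p1 * p1 = (‖p1‖ ^ 2 : ℝ) := by
    rw [mul_comm, Complex.mul_conj, Complex.normSq_eq_norm_sq]
  have hL0 : ((‖p1‖ ^ 2 : ℝ) : ℂ) ≠ 0 := by
    have := norm_pos_iff.2 hp10
    exact_mod_cast (by positivity : ‖p1‖ ^ 2 ≠ 0)
  have hs12 : ω ^ m * (starRingEnd ℂ) p2 = p1 := by
    apply mul_right_cancel₀ hL0
    calc _ = (ω ^ m * (‖p1‖ ^ 2 : ℝ)) * (starRingEnd ℂ) p2 := by ring
      _ = p1 * ((starRingEnd ℂ) p2 * p2) := by rw [hωm]; ring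
      _ = _ := by rw [hc2]
  have hs21 : ω ^ m * (starRingEnd ℂ) p1 = p2 := by
    apply mul_right_cancel₀ hL0
    calc _ = (ω ^ m * (‖p1‖ ^ 2 : ℝ)) * (starRingEnd ℂ) p1 := by ring
      _ = p2 * ((starRingEnd ℂ) p1 * p1) := by rw [hωm]; ring
      _ = _ := by rw [hc1]
  set d : ℂ → ℝ := fun y => Real.log ‖p1 - y ^ m‖ - Real.log ‖p2 - y ^ m‖ with hd
  have hdσ : ∀ y, d (σ y) = - d y := by
    intro y
    simp only [hd, hdist p1 p2 hs12, hdist p2 p1 hs21]; ring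
  have hdi : IntegrableOn d D :=
    (integrableOn_log_pow hb hs hm z1).sub (integrableOn_log_pow hb hs hm z2)
  have hI : ∫ y in D, d y = m * pot D z1 - m * pot D z2 := by
    rw [← pot_mfold hb hs hm, ← pot_mfold hb hs hm]
    exact integral_sub (integrableOn_log_pow hb hs hm z1) (integrableOn_log_pow hb hs hm z2)
  have hI2 : ∫ y in σ ⁻¹' D, d y = - ∫ y in D, d y := by
    have := hmp.setIntegral_preimage_emb hme d D
    rw [← this, ← integral_neg]
    congr 1; ext y; rw [hdσ, neg_neg]
  have hdi2 : IntegrableOn d (σ ⁻¹' D) := by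
    have h := (hmp.integrableOn_comp_preimage hme (s := D) (f := d)).2 hdi
    refine h.neg.congr (Filter.Eventually.of_forall fun y => ?_)
    simp [hdσ]
  -- sign of `d` where exactly one of `y`, `σ y` lies in `D`
  have hsign : ∀ y, y ∈ D → σ y ∉ D → ‖p1 - y ^ m‖ ≤ ‖p2 - y ^ m‖ := by
    intro y hy hσy
    have hy0 : y ≠ 0 := by
      rintro rfl
      apply hσy; simpa [hσ] using hy
    have hlt : ang m (σ y) < ang m y := by
      by_contra hc
      push Not at hc
      apply hσy
      have h1 : ‖y‖ < q (ang m y) := hy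
      have h2 := hq.mono.monotoneOn (ang_mem m y) (ang_mem m (σ y)) hc
      show ‖σ y‖ < q (ang m (σ y))
      rw [hσn]; linarith
    refine reflection_dist hpn hp10 hpre hωm ?_
    rw [← hσm, pow_re_eq, pow_re_eq, hσn]
    have := norm_pos_iff.2 hy0
    gcongr
  have hmain : ∫ y, (D.indicator d y - (σ ⁻¹' D).indicator d y) ≤ 0 := by
    refine integral_nonpos_of_ae ?_
    filter_upwards [ae_pow_ne hm p1, ae_pow_ne hm p2] with y hy1 hy2
    have n1 : 0 < ‖p1 - y ^ m‖ := norm_pos_iff.2 (sub_ne_zero.2 hy1.symm)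
    have n2 : 0 < ‖p2 - y ^ m‖ := norm_pos_iff.2 (sub_ne_zero.2 hy2.symm)
    by_cases h1 : y ∈ D <;> by_cases h2 : y ∈ σ ⁻¹' D
    · simp [h1, h2]
    · rw [indicator_of_mem h1, indicator_of_notMem h2]
      have := Real.log_le_log n1 (hsign y h1 h2)
      simp only [hd, Pi.zero_apply]; linarith
    · rw [indicator_of_notMem h1, indicator_of_mem h2]
      have h3 := hsign (σ y) h2 (by rwa [hσσ])
      rw [hdist p1 p2 hs12, hdist p2 p1 hs21] at h3
      have := Real.log_le_log n2 h3
      simp only [hd, Pi.zero_apply]; linarith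
    · simp [h1, h2]
  have hm2 : MeasurableSet (σ ⁻¹' D) := hmp.measurable hDm
  rw [integral_sub (hdi.integrable_indicator hDm) (hdi2.integrable_indicator hm2),
    integral_indicator hDm, integral_indicator hm2, hI2, hI] at hmain
  have hmp' : (0:ℝ) < m := by exact_mod_cast Nat.pos_of_ne_zero hm
  have : (m:ℝ) * pot D z1 ≤ m * pot D z2 := by linarith
  exact le_of_mul_le_mul_left this hmp'

/-! ### The slit barrier -/

lemma circleAverage_normSq (c : ℂ) (δ : ℝ) :
    circleAverage (fun z : ℂ => ‖z‖ ^ 2) c δ = ‖c‖ ^ 2 + δ ^ 2 := by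
  have h : ∀ θ : ℝ, ‖circleMap c δ θ‖ ^ 2 =
      (‖c‖ ^ 2 + δ ^ 2) + (2 * δ * c.re * Real.cos θ + 2 * δ * c.im * Real.sin θ) := by
    intro θ
    rw [← Complex.normSq_eq_norm_sq, ← Complex.normSq_eq_norm_sq, Complex.normSq_apply,
      Complex.normSq_apply]
    simp only [circleMap, Complex.add_re, Complex.add_im, Complex.re_ofReal_mul,
      Complex.im_ofReal_mul, Complex.exp_ofReal_mul_I_re, Complex.exp_ofReal_mul_I_im]
    nlinarith [Real.sin_sq_add_cos_sq θ]
  rw [circleAverage_def]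
  simp only [h]
  generalize ‖c‖ ^ 2 + δ ^ 2 = A
  rw [intervalIntegral.integral_add, intervalIntegral.integral_add,
    intervalIntegral.integral_const_mul, intervalIntegral.integral_const_mul, integral_cos,
    integral_sin]
  · simp
    field_simp
  all_goals exact Continuous.intervalIntegrable (by fun_prop) _ _

/-- Maximum principle for continuous functions having, at each point of the open set, the mean value
property for one circle about that point. -/
lemma max_principle {D : Set ℂ} (hD : IsOpen D) (hb : IsBounded D) {f : ℂ → ℝ} {M : ℝ}
    (hf : ContinuousOn f (closure D))
    (hmv : ∀ c ∈ D, ∃ δ > 0, Metric.closedBall c δ ⊆ D ∧ circleAverage f c δ = f c)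
    (hM : ∀ z ∈ frontier D, f z ≤ M) : ∀ z ∈ D, f z ≤ M := by
  intro z0 hz0
  by_contra hc
  push Not at hc
  obtain ⟨K, hK⟩ := (hb.closure).subset_closedBall 0
  set η : ℝ := (f z0 - M) / (2 * (K ^ 2 + 1)) with hη
  have hη0 : 0 < η := by
    have : 0 < f z0 - M := by linarith
    positivity
  have hηK : η * K ^ 2 < f z0 - M := by
    have h1 : η * (K ^ 2 + 1) = (f z0 - M) / 2 := by rw [hη]; field_simp
    nlinarith
  have hcomp : IsCompact (closure D) := hb.isCompact_closure
  obtain ⟨c, hcD, hmax⟩ := hcomp.exists_isMaxOn ⟨z0, subset_closure hz0⟩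
    (hf.add (f := f) (g := fun z => η * ‖z‖ ^ 2) (by fun_prop))
  have hmax' : ∀ z ∈ closure D, f z + η * ‖z‖ ^ 2 ≤ f c + η * ‖c‖ ^ 2 := fun z hz => hmax hz
  have hcK : ‖c‖ ^ 2 ≤ K ^ 2 := by
    have := hK hcD
    rw [mem_closedBall_zero_iff] at this
    have := norm_nonneg c
    gcongr
  have hcin : c ∈ D := by
    by_contra hcn
    have hfr : c ∈ frontier D := by rw [hD.frontier_eq]; exact ⟨hcD, hcn⟩
    have h1 := hM c hfr
    have h2 := hmax' z0 (subset_closure hz0)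
    have h3 : 0 ≤ η * ‖z0‖ ^ 2 := by positivity
    have h4 : η * ‖c‖ ^ 2 ≤ η * K ^ 2 := by gcongr
    linarith
  obtain ⟨δ, hδ, hball, havg⟩ := hmv c hcin
  have hsph : Metric.sphere c |δ| ⊆ closure D := by
    rw [abs_of_pos hδ]
    exact Metric.sphere_subset_closedBall.trans (hball.trans subset_closure)
  have i1 : CircleIntegrable f c δ := by
    apply ContinuousOn.circleIntegrable'
    exact hf.mono hsph
  have i2 : CircleIntegrable (fun z : ℂ => η • ‖z‖ ^ 2) c δ := by
    apply ContinuousOn.circleIntegrable'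
    fun_prop
  have e1 : circleAverage (fun z => f z + η • ‖z‖ ^ 2) c δ = f c + η * (‖c‖ ^ 2 + δ ^ 2) := by
    rw [circleAverage_fun_add i1 i2, havg, circleAverage_fun_smul, circleAverage_normSq, smul_eq_mul]
  have e2 : circleAverage (fun z => f z + η • ‖z‖ ^ 2) c δ ≤ f c + η * ‖c‖ ^ 2 :=
    circleAverage_mono_on_of_le_circle (i1.add i2) fun z hz => hmax' z (hsph hz)
  have : 0 < η * δ ^ 2 := by positivity
  nlinarith

lemma sqrt_cpow (w : ℂ) : (w ^ (1 / 2 : ℂ)) ^ 2 = w ∧ 0 ≤ (w ^ (1 / 2 : ℂ)).re := by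
  constructor
  · simp
  · by_cases hw : w = 0
    · simp [hw]
    · rw [Complex.cpow_def_of_ne_zero hw, Complex.exp_re]
      have : (Complex.log w * (1 / 2)).im = w.arg / 2 := by
        rw [Complex.mul_im]; simp [Complex.log_im]; ring
      rw [this]
      have h1 := Complex.neg_pi_lt_arg w
      have h2 := Complex.arg_le_pi w
      exact mul_nonneg (Real.exp_pos _).le (Real.cos_nonneg_of_mem_Icc ⟨by linarith, by linarith⟩)

/-- Size of `1 + √(1+ζ)`. -/
lemma one_add_sqrt_bounds (ζ : ℂ) :
    1 + (1 + ζ) ^ (1 / 2 : ℂ) ≠ 0 ∧ ‖ζ‖ ≤ ‖1 + (1 + ζ) ^ (1 / 2 : ℂ)‖ ^ 2 ∧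
    (1 ≤ ‖ζ‖ → ‖1 + (1 + ζ) ^ (1 / 2 : ℂ)‖ ^ 2 ≤ 9 * ‖ζ‖) := by
  obtain ⟨h1, h2⟩ := sqrt_cpow (1 + ζ)
  set η := (1 + ζ) ^ (1 / 2 : ℂ)
  refine ⟨?_, ?_, ?_⟩
  · intro h
    have := congrArg Complex.re h
    simp at this
    linarith
  · have e : ζ = (η - 1) * (1 + η) := by linear_combination -h1
    have h3 : ‖η - 1‖ ≤ ‖1 + η‖ := by
      rw [← sq_le_sq₀ (norm_nonneg _) (norm_nonneg _), ← Complex.normSq_eq_norm_sq,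
        ← Complex.normSq_eq_norm_sq, Complex.normSq_apply, Complex.normSq_apply]
      simp only [Complex.sub_re, Complex.sub_im, Complex.add_re, Complex.add_im, Complex.one_re,
        Complex.one_im]
      nlinarith
    calc ‖ζ‖ = ‖η - 1‖ * ‖1 + η‖ := by rw [← norm_mul, ← e]
      _ ≤ ‖1 + η‖ * ‖1 + η‖ := by gcongr
      _ = _ := by ring
  · intro hζ
    have h3 : ‖η‖ ^ 2 ≤ 2 * ‖ζ‖ := by
      rw [← norm_pow, h1]
      refine (norm_add_le _ _).trans ?_
      simp; linarith
    have h4 : ‖1 + η‖ ≤ 1 + ‖η‖ := by simpa using norm_add_le 1 η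
    have h5 : ‖1 + η‖ ^ 2 ≤ (1 + ‖η‖) ^ 2 := by gcongr
    nlinarith [sq_nonneg (‖η‖ - 1)]

/-- A harmonic function on the plane slit along the `m` rays `z^m < -ρ^m`. It differs from
`(m / 2) log (|z| / ρ)` by a bounded amount outside the disk of radius `ρ`
(`slit_lower`, `slit_upper`). -/
def slit (m : ℕ) (ρ : ℝ) (z : ℂ) : ℝ :=
  Real.log ‖1 + (1 + (z / ρ) ^ m) ^ (1 / 2 : ℂ)‖

lemma norm_zeta (m : ℕ) {ρ : ℝ} (hρ : 0 < ρ) (z : ℂ) : ‖(z / ρ) ^ m‖ = (‖z‖ / ρ) ^ m := by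
  rw [norm_pow, norm_div, Complex.norm_real, Real.norm_of_nonneg hρ.le]

lemma slit_lower {m : ℕ} {ρ : ℝ} (hρ : 0 < ρ) {z : ℂ} (hz : z ≠ 0) :
    m * Real.log (‖z‖ / ρ) ≤ 2 * slit m ρ z := by
  obtain ⟨-, h2, -⟩ := one_add_sqrt_bounds ((z / ρ) ^ m)
  rw [norm_zeta m hρ] at h2
  have hz' := norm_pos_iff.2 hz
  have := Real.log_le_log (by positivity) h2
  rw [Real.log_pow, Real.log_pow] at this
  simpa [slit] using this

lemma log_nine : Real.log 9 ≤ 3 := by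
  rw [Real.log_le_iff_le_exp (by norm_num)]
  have h := Real.exp_one_gt_d9
  have : Real.exp 3 = Real.exp 1 ^ 3 := by rw [← Real.exp_nat_mul]; norm_num
  rw [this]
  calc (9:ℝ) ≤ 2.7 ^ 3 := by norm_num
    _ ≤ _ := by gcongr; linarith

lemma slit_upper {m : ℕ} {ρ : ℝ} (hρ : 0 < ρ) {z : ℂ} (hz : ρ ≤ ‖z‖) :
    2 * slit m ρ z ≤ m * Real.log (‖z‖ / ρ) + 3 := by
  obtain ⟨h1, -, h3⟩ := one_add_sqrt_bounds ((z / ρ) ^ m)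
  rw [norm_zeta m hρ] at h3
  have h4 : 1 ≤ ‖z‖ / ρ := by rwa [le_div_iff₀ hρ, one_mul]
  have h5 := h3 (one_le_pow₀ h4)
  have h1' := norm_pos_iff.2 h1
  have := Real.log_le_log (by positivity) h5
  rw [Real.log_pow, Real.log_mul (by norm_num) (by positivity), Real.log_pow] at this
  have h9 := log_nine
  unfold slit
  push_cast at this
  linarith

lemma zeta_real (m : ℕ) (ρ : ℝ) (z : ℂ) :
    ((z / ρ) ^ m).re = (‖z‖ / ρ) ^ m * ang m z := by
  rw [div_pow, ← Complex.ofReal_pow, Complex.div_ofReal_re, pow_re_eq, div_pow]; ring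

/-- If `1 + ζ` meets the slit then `z` lies on a ray where the profile is minimal. -/
lemma ang_of_slit {m : ℕ} {ρ : ℝ} (hρ : 0 < ρ) {z : ℂ} (hz : z ≠ 0)
    (him : (1 + (z / ρ) ^ m).im = 0) (hre : ((z / ρ) ^ m).re < 0) :
    ang m z = -1 ∧ ((z / ρ) ^ m).re = - (‖z‖ / ρ) ^ m := by
  have hz' := norm_pos_iff.2 hz
  have him' : ((z / ρ) ^ m).im = 0 := by simpa using him
  have h1 : ((z / ρ) ^ m).re = - (‖z‖ / ρ) ^ m := by
    rw [← norm_zeta m hρ z, ← Complex.abs_re_eq_norm.2 him', abs_of_neg hre, neg_neg]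
  refine ⟨?_, h1⟩
  rw [zeta_real m ρ] at h1
  have : (‖z‖ / ρ) ^ m ≠ 0 := by positivity
  have h2 : (‖z‖ / ρ) ^ m * ang m z = (‖z‖ / ρ) ^ m * (-1) := by rw [h1]; ring
  exact mul_left_cancel₀ this h2

lemma continuousAt_ang {m : ℕ} {z : ℂ} (hz : z ≠ 0) : ContinuousAt (ang m) z := by
  have h : ContinuousAt (fun z : ℂ => (z ^ m).re / ‖z‖ ^ m) z := by
    have : ‖z‖ ^ m ≠ 0 := pow_ne_zero _ (norm_ne_zero_iff.2 hz)
    exact ContinuousAt.div (by fun_prop) (by fun_prop) this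
  refine h.congr ?_
  filter_upwards [isOpen_ne.mem_nhds hz] with w hw
  exact (ang_eq_div hw).symm

lemma closure_dom {m : ℕ} {q : ℝ → ℝ} (hq : Prof q) {z : ℂ} (hz : z ∈ closure (dom m q)) :
    ‖z‖ ≤ q (ang m z) := by
  by_cases h0 : z = 0
  · rw [h0, norm_zero]
    exact (hq.pos.le).trans (hq.lower (ang_mem m 0))
  by_contra hc
  push Not at hc
  have hcq : ContinuousAt (fun w => q (ang m w)) z :=
    ContinuousAt.comp (f := ang m) (g := q) hq.cont.continuousAt (continuousAt_ang h0)
  have hev := hcq.eventually_lt continuous_norm.continuousAt hc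
  obtain ⟨w, hw, hwD⟩ := mem_closure_iff_nhds.1 hz _ hev
  have h1 : ‖w‖ < q (ang m w) := hwD
  have h2 : q (ang m w) < ‖w‖ := hw
  linarith

lemma frontier_dom {m : ℕ} {q : ℝ → ℝ} (hq : Prof q) (ho : IsOpen (dom m q)) {z : ℂ}
    (hz : z ∈ frontier (dom m q)) : ‖z‖ = q (ang m z) := by
  rw [ho.frontier_eq] at hz
  exact le_antisymm (closure_dom hq hz.1) (not_lt.1 hz.2)

lemma mem_frontier_dom {m : ℕ} {q : ℝ → ℝ} (hq : Prof q) (ho : IsOpen (dom m q)) {z : ℂ}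
    (hz : ‖z‖ = q (ang m z)) : z ∈ frontier (dom m q) := by
  rw [ho.frontier_eq]
  refine ⟨?_, fun h => (ne_of_lt h) hz⟩
  have hz0 : 0 < ‖z‖ := by rw [hz]; exact hq.pos.trans_le (hq.lower (ang_mem m z))
  have hlim : Filter.Tendsto (fun t : ℝ => (t : ℂ) * z) (nhdsWithin 1 (Iio 1)) (nhds z) := by
    have : Continuous (fun t : ℝ => (t : ℂ) * z) := by fun_prop
    have h2 := this.tendsto 1
    simp only [Complex.ofReal_one, one_mul] at h2
    exact h2.mono_left nhdsWithin_le_nhds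
  refine mem_closure_of_tendsto hlim ?_
  have h01 : Ioo (0:ℝ) 1 ∈ nhdsWithin (1:ℝ) (Iio 1) := Ioo_mem_nhdsLT one_pos
  filter_upwards [h01] with t ht
  show ‖(t:ℂ) * z‖ < q (ang m (t * z))
  have : ang m (t * z) = ang m z := by unfold ang; rw [Complex.arg_real_mul _ ht.1]
  rw [this, ← hz, norm_mul, Complex.norm_real, Real.norm_of_nonneg ht.1.le]
  nlinarith [ht.2]

lemma slit_harmonic {m : ℕ} (hm : m ≠ 0) {q : ℝ → ℝ} (hq : Prof q) {z : ℂ} (hz : z ∈ dom m q) :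
    InnerProductSpace.HarmonicAt (slit m (q (-1))) z := by
  have hsl : 1 + (z / (q (-1) : ℂ)) ^ m ∈ Complex.slitPlane := by
    by_contra hc
    rw [Complex.mem_slitPlane_iff] at hc
    push Not at hc
    have hre : ((z / (q (-1) : ℂ)) ^ m).re ≤ -1 := by
      have := hc.1; simp only [Complex.add_re, Complex.one_re] at this; linarith
    have hz0 : z ≠ 0 := by
      rintro rfl
      simp [hm] at hre
      norm_num at hre
    obtain ⟨h1, h2⟩ := ang_of_slit hq.pos hz0 hc.2 (by linarith)
    have h3 : ‖z‖ < q (-1) := by have : ‖z‖ < q (ang m z) := hz; rwa [h1] at this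
    have h4 : ‖z‖ / q (-1) < 1 := by rw [div_lt_one hq.pos]; exact h3
    have h5 : (‖z‖ / q (-1)) ^ m < 1 := pow_lt_one₀ (div_nonneg (norm_nonneg _) hq.pos.le) h4 hm
    linarith
  refine AnalyticAt.harmonicAt_log_norm (f := fun z => 1 + (1 + (z / (q (-1) : ℂ)) ^ m) ^ (1 / 2 : ℂ)) ?_
    (one_add_sqrt_bounds _).1
  refine analyticAt_const.add (AnalyticAt.cpow ?_ analyticAt_const hsl)
  exact analyticAt_const.add ((analyticAt_id.div_const).pow m)

lemma slit_continuousAt {m : ℕ} (hm : m ≠ 0) {q : ℝ → ℝ} (hq : Prof q) {z : ℂ}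
    (hz : ‖z‖ ≤ q (ang m z)) : ContinuousAt (slit m (q (-1))) z := by
  have hor : 0 ≤ (1 + (z / (q (-1) : ℂ)) ^ m).re ∨ (1 + (z / (q (-1) : ℂ)) ^ m).im ≠ 0 := by
    by_contra hc
    push Not at hc
    have hre : ((z / (q (-1) : ℂ)) ^ m).re < -1 := by
      have := hc.1; simp only [Complex.add_re, Complex.one_re] at this; linarith
    have hz0 : z ≠ 0 := by
      rintro rfl
      simp [hm] at hre
      norm_num at hre
    obtain ⟨h1, h2⟩ := ang_of_slit hq.pos hz0 hc.2 (by linarith)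
    rw [h1] at hz
    have h4 : ‖z‖ / q (-1) ≤ 1 := by rw [div_le_one hq.pos]; exact hz
    have h5 : (‖z‖ / q (-1)) ^ m ≤ 1 := pow_le_one₀ (div_nonneg (norm_nonneg _) hq.pos.le) h4
    linarith
  have h1 : ContinuousAt (fun z : ℂ => (1 + (z / (q (-1) : ℂ)) ^ m) ^ (1 / 2 : ℂ)) z := by
    refine ContinuousAt.comp (f := fun z : ℂ => 1 + (z / (q (-1) : ℂ)) ^ m)
      (g := fun w : ℂ => w ^ (1 / 2 : ℂ)) ?_ (by fun_prop)
    exact Complex.continuousAt_cpow_const_of_re_pos hor (by norm_num)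
  exact ((continuousAt_const.add h1).norm).log (norm_ne_zero_iff.2 (one_add_sqrt_bounds _).1)

/-- If `dom m q` rotates steadily, then on its part outside the inscribed disk the stream function
relative to its boundary value `c₀` is at least `-2 (1 - 2Ω) / m`.

With `ρ = q (-1)`, subtracting the Laplacian leaves a function `f`, harmonic in the domain, whose
boundary values are `(1 - 2Ω) (|z|² - ρ²) / 4` minus a multiple of the barrier `slit`. The barrier
dominates a multiple of `log (|z| / ρ)`, so `f` is at most quadratic in the width of the boundary
annulus on the frontier, hence inside. The barrier exceeds that logarithm by `O(1)` only, which
gives the bound. The domain avoids the slits because `q` is minimal in their directions. -/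
lemma slit_bound {m : ℕ} (hm : m ≠ 0) {q : ℝ → ℝ} (hq : Prof q) (ho : IsOpen (dom m q))
    {Ω c₀ : ℝ} (hΩ : Ω < 1 / 2)
    (hst : ∀ z ∈ frontier (dom m q), pot (dom m q) z / (2 * π) - Ω / 2 * ‖z‖ ^ 2 = c₀)
    (hρ1 : q (-1) ≤ 1) (hρ2 : 1 / 2 ≤ q (-1) ^ 2) (hW : (q 1 ^ 2 - q (-1) ^ 2) ^ 2 ≤ 1 / m)
    {z : ℂ} (hz : z ∈ dom m q) (hzρ : q (-1) ≤ ‖z‖) :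
    -(2 * (1 - 2 * Ω) / m) ≤ pot (dom m q) z / (2 * π) - Ω / 2 * ‖z‖ ^ 2 - c₀ := by
  set D := dom m q with hDdef
  set ρ := q (-1) with hρ
  have hρ0 : 0 < ρ := hq.pos
  have hb : IsBounded D := dom_bounded hq
  have hDm : MeasurableSet D := dom_measurable hq
  have hm0 : (0:ℝ) < m := by exact_mod_cast Nat.pos_of_ne_zero hm
  set ε := 1 - 2 * Ω with hε
  have hε0 : 0 < ε := by linarith
  set κ := ε * ρ ^ 2 / 2 * (2 / m) with hκ
  have hκ0 : 0 ≤ κ := by positivity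
  -- `log` comparisons in the variable `y = (r/ρ)²`
  have hlog : ∀ r, ρ ≤ r → Real.log (r / ρ) = Real.log (r ^ 2 / ρ ^ 2) / 2 := by
    intro r hr
    rw [← div_pow, Real.log_pow]; push_cast; ring
  set f : ℂ → ℝ := fun z => ((c₀ - ε * ρ ^ 2 / 4) + (-1 / (2 * π)) • pot D z)
      + ((1 / 4 : ℝ) • ‖z‖ ^ 2 + (-κ) • slit m ρ z) with hf
  have hpc : Continuous (pot D) := continuous_pot hDm hb
  have hfD : ∀ z ∈ D, f z ≤ ε * (q 1 ^ 2 - ρ ^ 2) ^ 2 / 2 := by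
    refine max_principle ho hb ?_ ?_ ?_
    · intro w hw
      have h1 : ContinuousAt (slit m ρ) w := slit_continuousAt hm hq (closure_dom hq hw)
      refine ContinuousAt.continuousWithinAt ?_
      fun_prop
    · intro c hc
      obtain ⟨δ, hδ, hball⟩ := Metric.nhds_basis_closedBall.mem_iff.1 (ho.mem_nhds hc)
      refine ⟨δ, hδ, hball, ?_⟩
      have hharm : InnerProductSpace.HarmonicOnNhd (slit m ρ) (Metric.closedBall c |δ|) := by
        rw [abs_of_pos hδ]
        exact fun w hw => slit_harmonic hm hq (hball hw)
      have iS : CircleIntegrable (slit m ρ) c δ := by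
        apply ContinuousOn.circleIntegrable'
        intro w hw
        rw [abs_of_pos hδ] at hw
        exact (slit_continuousAt hm hq (closure_dom hq
          (subset_closure (hball (Metric.sphere_subset_closedBall hw))))).continuousWithinAt
      have i1 : CircleIntegrable (fun z => (-1 / (2 * π)) • pot D z) c δ :=
        ContinuousOn.circleIntegrable' (by fun_prop)
      have i0 : CircleIntegrable (fun _ : ℂ => c₀ - ε * ρ ^ 2 / 4) c δ :=
        ContinuousOn.circleIntegrable' (by fun_prop)
      have i2 : CircleIntegrable (fun z : ℂ => (1 / 4 : ℝ) • ‖z‖ ^ 2) c δ :=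
        ContinuousOn.circleIntegrable' (by fun_prop)
      have i3 : CircleIntegrable (fun z : ℂ => (-κ) • slit m ρ z) c δ := iS.const_fun_smul
      have i01 : CircleIntegrable (fun z => (c₀ - ε * ρ ^ 2 / 4) + (-1 / (2 * π)) • pot D z) c δ :=
        i0.add i1
      have i23 : CircleIntegrable (fun z : ℂ => (1 / 4 : ℝ) • ‖z‖ ^ 2 + (-κ) • slit m ρ z) c δ :=
        i2.add i3
      rw [hf, circleAverage_fun_add i01 i23, circleAverage_fun_add i0 i1,
        circleAverage_fun_add i2 i3, circleAverage_const, circleAverage_fun_smul,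
        circleAverage_fun_smul, circleAverage_fun_smul, circleAverage_normSq,
        hharm.circleAverage_eq, circleAverage_pot hDm hb hδ,
        potT_sub_pot_of_subset hDm hb hδ c (Metric.ball_subset_closedBall.trans hball)]
      simp only [smul_eq_mul]
      field_simp; ring
    · intro w hw
      have hwn := frontier_dom hq ho hw
      have h1 := hst w hw
      have hρw : ρ ≤ ‖w‖ := by rw [hwn]; exact hq.lower (ang_mem m w)
      have hwR : ‖w‖ ≤ q 1 := by rw [hwn]; exact hq.upper (ang_mem m w)
      have hw0 : 0 < ‖w‖ := hρ0.trans_le hρw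
      have h2 := slit_lower (m := m) hρ0 (norm_pos_iff.1 hw0)
      have h3 : Real.log (‖w‖ / ρ) ≤ 2 / m * slit m ρ w := by
        rw [div_mul_eq_mul_div, le_div_iff₀ hm0]; linarith
      have h4 : 1 - (‖w‖ ^ 2 / ρ ^ 2)⁻¹ ≤ Real.log (‖w‖ ^ 2 / ρ ^ 2) :=
        Real.one_sub_inv_le_log_of_pos (by positivity)
      have h5 := hlog _ hρw
      have h6 : ε * ρ ^ 2 / 2 * Real.log (‖w‖ / ρ) ≤ κ * slit m ρ w := by
        rw [hκ, mul_assoc]; gcongr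
      have h7 : f w = ε * (‖w‖ ^ 2 - ρ ^ 2) / 4 - κ * slit m ρ w := by
        simp only [hf, smul_eq_mul]
        have : pot D w / (2 * π) = c₀ + Ω / 2 * ‖w‖ ^ 2 := by linarith
        have e : -1 / (2 * π) * pot D w = - (pot D w / (2 * π)) := by ring
        rw [e, this, hε]; ring
      have hinv : (‖w‖ ^ 2 / ρ ^ 2)⁻¹ = ρ ^ 2 / ‖w‖ ^ 2 := inv_div _ _
      rw [h7]
      have h8 : (‖w‖ ^ 2 - ρ ^ 2) / 4 - ρ ^ 2 / 2 * Real.log (‖w‖ / ρ) ≤ (q 1 ^ 2 - ρ ^ 2) ^ 2 / 2 := by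
        rw [h5]
        have s1 : ρ ^ 2 ≤ ‖w‖ ^ 2 := by gcongr
        have s2 : ‖w‖ ^ 2 ≤ q 1 ^ 2 := by gcongr
        have s3 : ρ ^ 2 * (1 - ρ ^ 2 / ‖w‖ ^ 2) ≤ ρ ^ 2 * Real.log (‖w‖ ^ 2 / ρ ^ 2) := by
          rw [← hinv]; gcongr
        have s4 : ρ ^ 2 * (1 - ρ ^ 2 / ‖w‖ ^ 2) ≥ (‖w‖ ^ 2 - ρ ^ 2) - 2 * (‖w‖ ^ 2 - ρ ^ 2) ^ 2 := by
          have : ρ ^ 2 * (1 - ρ ^ 2 / ‖w‖ ^ 2) =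
              (‖w‖ ^ 2 - ρ ^ 2) - (‖w‖ ^ 2 - ρ ^ 2) ^ 2 / ‖w‖ ^ 2 := by field_simp; ring
          rw [this]
          have : (‖w‖ ^ 2 - ρ ^ 2) ^ 2 / ‖w‖ ^ 2 ≤ 2 * (‖w‖ ^ 2 - ρ ^ 2) ^ 2 := by
            rw [div_le_iff₀ (by positivity)]
            nlinarith [sq_nonneg (‖w‖ ^ 2 - ρ ^ 2)]
          linarith
        have s5 : (‖w‖ ^ 2 - ρ ^ 2) ^ 2 ≤ (q 1 ^ 2 - ρ ^ 2) ^ 2 := by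
          have : 0 ≤ ‖w‖ ^ 2 - ρ ^ 2 := by linarith
          gcongr
        linarith
      have h9 := mul_le_mul_of_nonneg_left h8 hε0.le
      nlinarith
  have h1 := hfD z hz
  have h2 := slit_upper (m := m) hρ0 hzρ
  have h3 : 2 / m * slit m ρ z ≤ Real.log (‖z‖ / ρ) + 3 / m := by
    rw [div_mul_eq_mul_div, div_le_iff₀ hm0]
    have : (Real.log (‖z‖ / ρ) + 3 / m) * m = m * Real.log (‖z‖ / ρ) + 3 := by field_simp
    linarith
  have hz0 : 0 < ‖z‖ := hρ0.trans_le hzρ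
  have h4 : Real.log (‖z‖ ^ 2 / ρ ^ 2) ≤ ‖z‖ ^ 2 / ρ ^ 2 - 1 :=
    Real.log_le_sub_one_of_pos (by positivity)
  have h5 : ρ ^ 2 * Real.log (‖z‖ ^ 2 / ρ ^ 2) ≤ ‖z‖ ^ 2 - ρ ^ 2 := by
    have := mul_le_mul_of_nonneg_left h4 (sq_nonneg ρ)
    have e : ρ ^ 2 * (‖z‖ ^ 2 / ρ ^ 2 - 1) = ‖z‖ ^ 2 - ρ ^ 2 := by field_simp
    linarith
  have h6 : κ * slit m ρ z ≤ ε * (ρ ^ 2 / 2 * (Real.log (‖z‖ / ρ) + 3 / m)) := by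
    have : κ * slit m ρ z = ε * (ρ ^ 2 / 2 * (2 / m * slit m ρ z)) := by rw [hκ]; ring
    rw [this]; gcongr
  have h7 : ρ ^ 2 / 2 * (Real.log (‖z‖ / ρ) + 3 / m) ≤ (‖z‖ ^ 2 - ρ ^ 2) / 4 + 3 / 2 / m := by
    rw [hlog _ hzρ]
    have : ρ ^ 2 / 2 * (3 / m) ≤ 1 / 2 * (3 / m) := by
      have : ρ ^ 2 ≤ 1 := by nlinarith
      gcongr
    have e : 1 / 2 * (3 / (m:ℝ)) = 3 / 2 / m := by ring
    linarith
  have h8 := mul_le_mul_of_nonneg_left h7 hε0.le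
  have h9 : pot D z / (2 * π) - Ω / 2 * ‖z‖ ^ 2 - c₀ =
      - f z - κ * slit m ρ z + ε * (‖z‖ ^ 2 - ρ ^ 2) / 4 := by
    simp only [hf, smul_eq_mul, hε]; ring
  have h10 := mul_le_mul_of_nonneg_left hW hε0.le
  have h11 : 2 * ε / m = ε * (1 / m) / 2 + ε * (3 / 2 / m) := by ring
  rw [h9, h11]
  linarith

/-! ### A one-dimensional differential inequality -/

set_option maxHeartbeats 1000000 in
/-- In the application the variable `s` is a squared radius, `Φ` is the circle average of the relative
stream function, `J` the normalised area of the part of the disk outside the domain, `F` the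
proportion of directions in which the disk sticks out (in essence `F` is the derivative of `J`),
and `M = 1 / m`. Put `e = ε a`.

As long as `J ≤ e / 2`, `Φ` grows at rate at least `e / 16`; the two bounds on `Φ` then show that
`J` reaches `e` within a length `T ≤ 140 M`. Convexity of `J` gives `J ≥ 2 e` from `a + 2 T` on, so
that `Φ` decreases quadratically there, which leaves a length of at most `96 M`. -/
lemma ode_bound {a b ε M : ℝ} {F J Φ : ℝ → ℝ} (ha1 : a ≤ 1) (ha : 1 / 2 ≤ a) (hab : a ≤ b) (hb : b ≤ 2) (hb2 : b ≤ 2 * a)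
    (hε : 0 < ε) (hM : 0 < M) (hJ0 : J a = 0) (hF0 : ∀ s, 0 ≤ F s) (hF1 : ∀ s, F s ≤ 1)
    (hJ1 : ∀ s₁ s₂, a ≤ s₁ → s₁ ≤ s₂ → s₂ ≤ b → (s₂ - s₁) * F s₁ ≤ J s₂ - J s₁)
    (hJ2 : ∀ s₁ s₂, a ≤ s₁ → s₁ ≤ s₂ → s₂ ≤ b → J s₂ - J s₁ ≤ (s₂ - s₁) * F s₂)
    (hΦ : ∀ s ∈ Icc a b, HasDerivAt Φ ((ε * s - J s) / (4 * s)) s)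
    (hlow : ∀ s ∈ Icc a b, -(2 * ε * M) ≤ Φ s) (hup : ∀ s ∈ Icc a b, Φ s ≤ 12 * F s * M ^ 2) :
    b - a ≤ 376 * M := by
  have hmonoJ : ∀ s₁ s₂, a ≤ s₁ → s₁ ≤ s₂ → s₂ ≤ b → J s₁ ≤ J s₂ := by
    intro s₁ s₂ h1 h2 h3
    have := hJ1 s₁ s₂ h1 h2 h3
    have := mul_nonneg (sub_nonneg.2 h2) (hF0 s₁)
    linarith
  have hJlip : ∀ s₁ s₂, a ≤ s₁ → s₁ ≤ s₂ → s₂ ≤ b → J s₂ - J s₁ ≤ s₂ - s₁ := by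
    intro s₁ s₂ h1 h2 h3
    have := hJ2 s₁ s₂ h1 h2 h3
    have := mul_le_mul_of_nonneg_left (hF1 s₂) (sub_nonneg.2 h2)
    linarith
  have hJc : ContinuousOn J (Icc a b) := by
    have : LipschitzOnWith 1 J (Icc a b) := by
      refine LipschitzOnWith.of_dist_le_mul fun x hx y hy => ?_
      rw [NNReal.coe_one, one_mul, Real.dist_eq, Real.dist_eq]
      rcases le_total x y with h | h
      · have h1 := hmonoJ x y hx.1 h hy.2
        have h2 := hJlip x y hx.1 h hy.2
        rw [abs_of_nonpos (by linarith), abs_of_nonpos (by linarith)]; linarith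
      · have h1 := hmonoJ y x hy.1 h hx.2
        have h2 := hJlip y x hy.1 h hx.2
        rw [abs_of_nonneg (by linarith), abs_of_nonneg (by linarith)]; linarith
    exact this.continuousOn
  set e := ε * a with he
  have he0 : 0 < e := by positivity
  have hεe : ε ≤ 2 * e := by rw [he]; nlinarith
  have heε : e ≤ ε := by rw [he]; nlinarith
  -- first phase: `J ≤ e` up to `a + T`
  have phase1 : ∀ T, 0 ≤ T → a + T ≤ b → J (a + T) ≤ e → T ≤ 140 * M := by
    intro T hT hTb hJT
    rcases hT.eq_or_lt with rfl | hT
    · positivity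
    have hmid : a + T / 2 ≤ b := by linarith
    have k1 := hJ2 a (a + T / 2) le_rfl (by linarith) hmid
    have k2 := hJ1 (a + T / 2) (a + T) (by linarith) (by linarith) hTb
    rw [hJ0] at k1
    have hJhalf : J (a + T / 2) ≤ e / 2 := by linarith
    have hJn : 0 ≤ J (a + T / 2) := by
      have := hmonoJ a (a + T / 2) le_rfl (by linarith) hmid; rwa [hJ0] at this
    have hFT : F (a + T / 2) * T ≤ 2 * e := by linarith
    have hmono : MonotoneOn (fun s => Φ s - e / 16 * s) (Icc a (a + T / 2)) := by
      have hd : ∀ s ∈ Icc a (a + T / 2),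
          HasDerivAt (fun s => Φ s - e / 16 * s) ((ε * s - J s) / (4 * s) - e / 16) s := by
        intro s hs
        have h2 := (hasDerivAt_id s).const_mul (e / 16)
        simp only [id, mul_one] at h2
        exact (hΦ s ⟨hs.1, hs.2.trans hmid⟩).sub h2
      refine monotoneOn_of_deriv_nonneg (convex_Icc _ _)
        (fun s hs => (hd s hs).continuousAt.continuousWithinAt)
        (fun s hs => (hd s (interior_subset hs)).differentiableAt.differentiableWithinAt) ?_
      intro s hs
      have hs' := interior_subset hs
      rw [(hd s hs').deriv]
      have hJs : J s ≤ e / 2 := (hmonoJ s _ hs'.1 hs'.2 hmid).trans hJhalf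
      have hs0 : 0 < s := by linarith [hs'.1]
      have h1 : e ≤ ε * s := by rw [he]; have := hs'.1; gcongr
      have h2 : e / 16 ≤ (ε * s - J s) / (4 * s) := by
        rw [le_div_iff₀ (by positivity)]
        have : s ≤ 2 := by linarith [hs'.2]
        nlinarith
      linarith
    have k3 := hmono (left_mem_Icc.2 (by linarith)) (right_mem_Icc.2 (by linarith)) (by linarith : a ≤ a + T / 2)
    have k4 := hlow a ⟨le_rfl, hab⟩
    have k5 := hup (a + T / 2) ⟨by linarith, hmid⟩
    simp only at k3
    have k6 : T * e / 32 ≤ 12 * F (a + T / 2) * M ^ 2 + 4 * e * M := by nlinarith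
    have k7 : e * T ^ 2 / 32 ≤ e * (24 * M ^ 2 + 4 * M * T) := by
      have := mul_le_mul_of_nonneg_right k6 hT.le
      nlinarith [mul_le_mul_of_nonneg_right hFT (sq_nonneg M)]
    have k8 : T ^ 2 / 32 ≤ 24 * M ^ 2 + 4 * M * T := by
      rw [mul_div_assoc] at k7
      exact le_of_mul_le_mul_left k7 he0
    by_contra hc
    push Not at hc
    nlinarith
  by_cases hend : J b ≤ e
  · have := phase1 (b - a) (by linarith) (by linarith) (by simpa using hend)
    linarith
  push Not at hend
  obtain ⟨s, hs, hJs⟩ := intermediate_value_Icc hab hJc ⟨by rw [hJ0]; exact he0.le, hend.le⟩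
  set T := s - a with hTdef
  have hsa : s = a + T := by ring
  have hT140 := phase1 T (by linarith [hs.1]) (by linarith [hs.2]) (by rw [← hsa, hJs])
  have hTpos : 0 < T := by
    rcases (show 0 ≤ T by linarith [hs.1]).eq_or_lt with h | h
    · rw [hsa, ← h, add_zero, hJ0] at hJs; linarith
    · exact h
  by_cases h2T : b ≤ a + 2 * T
  · linarith
  push Not at h2T
  set F₂ := F (a + 2 * T) with hF₂
  have k1 := hJ2 a (a + T) le_rfl (by linarith) (by linarith)
  have k2 := hJ1 (a + T) (a + 2 * T) (by linarith) (by linarith) h2T.le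
  have k3 := hJ2 (a + T) (a + 2 * T) (by linarith) (by linarith) h2T.le
  rw [hsa] at hJs
  have hJ2T : 2 * e ≤ J (a + 2 * T) := by linarith
  have hF₂T : e ≤ T * F₂ := by linarith
  have hF₂pos : 0 < F₂ := by
    by_contra h
    push Not at h
    nlinarith
  -- second phase: `Φ` decreases quadratically beyond `a + 2 * T`
  have hanti : AntitoneOn (fun s => Φ s + F₂ / 16 * (s - (a + 2 * T)) ^ 2) (Icc (a + 2 * T) b) := by
    have hd : ∀ s ∈ Icc (a + 2 * T) b, HasDerivAt (fun s => Φ s + F₂ / 16 * (s - (a + 2 * T)) ^ 2)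
        ((ε * s - J s) / (4 * s) + F₂ / 8 * (s - (a + 2 * T))) s := by
      intro s hs
      have h2 := (((hasDerivAt_id s).sub_const (a + 2 * T)).pow 2).const_mul (F₂ / 16)
      refine ((hΦ s ⟨by linarith [hs.1], hs.2⟩).add h2).congr_deriv ?_
      simp; ring
    refine antitoneOn_of_deriv_nonpos (convex_Icc _ _)
      (fun s hs => (hd s hs).continuousAt.continuousWithinAt)
      (fun s hs => (hd s (interior_subset hs)).differentiableAt.differentiableWithinAt) ?_
    intro s hs
    have hs' := interior_subset hs
    rw [(hd s hs').deriv]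
    have hs0 : 0 < s := by linarith [hs'.1]
    have h1 := hJ1 (a + 2 * T) s (by linarith) hs'.1 hs'.2
    have h3 : ε * s ≤ 2 * e := by
      rw [he]; have : s ≤ 2 * a := by linarith [hs'.2]
      nlinarith
    have h4 : (ε * s - J s) / (4 * s) ≤ -(F₂ / 8 * (s - (a + 2 * T))) := by
      rw [div_le_iff₀ (by positivity)]
      have h5 : s ≤ 2 := by linarith [hs'.2]
      have h6 : 0 ≤ F₂ * (s - (a + 2 * T)) := mul_nonneg hF₂pos.le (by linarith [hs'.1])
      nlinarith
    linarith
  have k4 := hanti (left_mem_Icc.2 h2T.le) (right_mem_Icc.2 h2T.le) h2T.le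
  simp only [sub_self] at k4
  have k5 := hlow b ⟨hab, le_rfl⟩
  have k6 := hup (a + 2 * T) ⟨by linarith, h2T.le⟩
  rw [← hF₂] at k6
  have k7 : ε * M ≤ 280 * M ^ 2 * F₂ := by
    have h1 : ε ≤ 2 * (T * F₂) := by linarith
    have h2 : T * F₂ ≤ 140 * M * F₂ := by gcongr
    nlinarith
  have k8 : F₂ * ((b - (a + 2 * T)) ^ 2 / 16) ≤ F₂ * (572 * M ^ 2) := by
    linarith
  have k9 := le_of_mul_le_mul_left k8 hF₂pos
  have k10 : b - (a + 2 * T) ≤ 96 * M := by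
    have hsq : (b - (a + 2 * T)) ^ 2 ≤ (96 * M) ^ 2 := by
      have := sq_nonneg M
      linarith [mul_pow 96 M 2]
    exact (sq_le_sq₀ (by linarith) (by positivity)).1 hsq
  linarith

/-! ### Areas of annular slices -/

/-- Directions in which the boundary radius is at most `√s`. -/
def thetaSet (m : ℕ) (q : ℝ → ℝ) (s : ℝ) : Set ℝ := {θ | θ ∈ Ioo (-π) π ∧ q (Real.cos (m * θ)) ≤ √s}

/-- Proportion of directions in which the boundary radius is at most `√s`. -/
def Ffun (m : ℕ) (q : ℝ → ℝ) (s : ℝ) : ℝ := volume.real (thetaSet m q s) / (2 * π)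

/-- Normalised area of the part of the disk of radius `√s` lying outside the domain. -/
def Jfun (m : ℕ) (q : ℝ → ℝ) (s : ℝ) : ℝ := volume.real ({y : ℂ | ‖y‖ ^ 2 < s} \ dom m q) / π

lemma measurableSet_thetaSet {m : ℕ} {q : ℝ → ℝ} (hq : Prof q) (s : ℝ) :
    MeasurableSet (thetaSet m q s) := by
  have h : Measurable fun θ : ℝ => q (Real.cos (m * θ)) := by
    have := hq.cont
    exact Continuous.measurable (by fun_prop)
  exact measurableSet_Ioo.inter (measurableSet_le h measurable_const)

lemma thetaSet_finite (m : ℕ) (q : ℝ → ℝ) (s : ℝ) : volume (thetaSet m q s) ≠ ⊤ :=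
  ((measure_mono fun _ h => h.1).trans_lt measure_Ioo_lt_top).ne

lemma Ffun_nonneg (m : ℕ) (q : ℝ → ℝ) (s : ℝ) : 0 ≤ Ffun m q s := by unfold Ffun; positivity

lemma Ffun_le_one (m : ℕ) (q : ℝ → ℝ) (s : ℝ) : Ffun m q s ≤ 1 := by
  unfold Ffun
  rw [div_le_one (by positivity)]
  have h : volume.real (thetaSet m q s) ≤ volume.real (Ioo (-π) π) :=
    measureReal_mono (fun _ h => h.1) measure_Ioo_lt_top.ne
  rw [Real.volume_real_Ioo_of_le (by linarith [Real.pi_pos])] at h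
  linarith

/-- Area of a sector of an annulus. -/
lemma sector_volume {Θ : Set ℝ} (hΘ : MeasurableSet Θ) (hsub : Θ ⊆ Ioo (-π) π) {r₁ r₂ : ℝ}
    (h0 : 0 < r₁) (h12 : r₁ ≤ r₂) :
    volume.real {y : ℂ | (r₁ ≤ ‖y‖ ∧ ‖y‖ < r₂) ∧ y.arg ∈ Θ} =
      volume.real Θ * ((r₂ ^ 2 - r₁ ^ 2) / 2) := by
  set A : Set ℂ := {y : ℂ | (r₁ ≤ ‖y‖ ∧ ‖y‖ < r₂) ∧ y.arg ∈ Θ} with hA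
  have hAm : MeasurableSet A := by
    have hn : Measurable fun y : ℂ => ‖y‖ := continuous_norm.measurable
    exact ((measurableSet_le measurable_const hn).inter (measurableSet_lt hn measurable_const)).inter
      (Complex.measurable_arg hΘ)
  have h1 : volume.real A = ∫ y : ℂ, A.indicator (fun _ => (1:ℝ)) y := by
    rw [integral_indicator_const _ hAm]; simp
  rw [h1, ← Complex.integral_comp_polarCoord_symm]
  have h2 : ∫ p in polarCoord.target, p.1 • A.indicator (fun _ => (1:ℝ)) (Complex.polarCoord.symm p)
      = ∫ p in (Ioi (0:ℝ)) ×ˢ (Ioo (-π) π), (Ico r₁ r₂).indicator (fun r => r) p.1 *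
          Θ.indicator (fun _ => (1:ℝ)) p.2 := by
    refine setIntegral_congr_fun (measurableSet_Ioi.prod measurableSet_Ioo) fun p hp => ?_
    have hp1 : 0 < p.1 := hp.1
    have hp2 : p.2 ∈ Ioo (-π) π := hp.2
    have hsymm : Complex.polarCoord.symm p = p.1 * (Real.cos p.2 + Real.sin p.2 * Complex.I) :=
      Complex.polarCoord_symm_apply p
    have hexp : Complex.polarCoord.symm p = p.1 * Complex.exp (p.2 * Complex.I) := by
      rw [hsymm, Complex.exp_mul_I]; push_cast; rfl
    have hnorm : ‖Complex.polarCoord.symm p‖ = p.1 := by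
      rw [hexp, norm_mul, Complex.norm_exp_ofReal_mul_I, Complex.norm_real,
        Real.norm_of_nonneg hp1.le, mul_one]
    have harg : (Complex.polarCoord.symm p).arg = p.2 := by
      rw [hsymm, Complex.ofReal_cos, Complex.ofReal_sin]
      exact Complex.arg_mul_cos_add_sin_mul_I hp1 ⟨hp2.1, hp2.2.le⟩
    have hmem : Complex.polarCoord.symm p ∈ A ↔ p.1 ∈ Ico r₁ r₂ ∧ p.2 ∈ Θ := by
      show ((r₁ ≤ ‖Complex.polarCoord.symm p‖ ∧ ‖Complex.polarCoord.symm p‖ < r₂) ∧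
        (Complex.polarCoord.symm p).arg ∈ Θ) ↔ _
      rw [hnorm, harg]; rfl
    by_cases c1 : p.1 ∈ Ico r₁ r₂ <;> by_cases c2 : p.2 ∈ Θ
    · rw [indicator_of_mem (hmem.2 ⟨c1, c2⟩), indicator_of_mem c1, indicator_of_mem c2]; simp
    · rw [indicator_of_notMem (fun h => c2 (hmem.1 h).2), indicator_of_notMem c2]; simp
    · rw [indicator_of_notMem (fun h => c1 (hmem.1 h).1), indicator_of_notMem c1]; simp
    · rw [indicator_of_notMem (fun h => c1 (hmem.1 h).1), indicator_of_notMem c1]; simp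
  rw [h2, Measure.volume_eq_prod, setIntegral_prod_mul (fun r => (Ico r₁ r₂).indicator (fun r => r) r)
    (fun t => Θ.indicator (fun _ => (1:ℝ)) t)]
  rw [setIntegral_indicator measurableSet_Ico, setIntegral_indicator hΘ,
    inter_eq_self_of_subset_right hsub]
  have h3 : Ioi (0:ℝ) ∩ Ico r₁ r₂ = Ico r₁ r₂ :=
    inter_eq_self_of_subset_right fun r hr => h0.trans_le hr.1
  rw [h3, integral_Ico_eq_integral_Ioo, ← integral_Ioc_eq_integral_Ioo,
    ← intervalIntegral.integral_of_le h12, integral_id, setIntegral_const]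
  simp; ring

lemma Jfun_diff {m : ℕ} {q : ℝ → ℝ} (hq : Prof q) {s₁ s₂ : ℝ} (h12 : s₁ ≤ s₂) :
    Jfun m q s₂ - Jfun m q s₁ =
      volume.real ({y : ℂ | s₁ ≤ ‖y‖ ^ 2 ∧ ‖y‖ ^ 2 < s₂} \ dom m q) / π := by
  have hn : Measurable fun y : ℂ => ‖y‖ ^ 2 := (continuous_norm.pow 2).measurable
  have hb : ∀ s, IsBounded {y : ℂ | ‖y‖ ^ 2 < s} := by
    intro s
    refine (Metric.isBounded_closedBall (x := (0:ℂ)) (r := √s)).subset fun y hy => ?_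
    rw [mem_closedBall_zero_iff]
    exact Real.le_sqrt_of_sq_le (le_of_lt hy)
  have hfin : ∀ s, volume ({y : ℂ | ‖y‖ ^ 2 < s} \ dom m q) ≠ ⊤ := fun s =>
    ((hb s).subset sdiff_subset).measure_lt_top.ne
  have hms : MeasurableSet ({y : ℂ | ‖y‖ ^ 2 < s₁} \ dom m q) :=
    (measurableSet_lt hn measurable_const).diff (dom_measurable hq)
  have hu : {y : ℂ | s₁ ≤ ‖y‖ ^ 2 ∧ ‖y‖ ^ 2 < s₂} \ dom m q =
      ({y : ℂ | ‖y‖ ^ 2 < s₂} \ dom m q) \ ({y : ℂ | ‖y‖ ^ 2 < s₁} \ dom m q) := by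
    ext y
    constructor
    · rintro ⟨⟨h1, h2⟩, h3⟩
      exact ⟨⟨h2, h3⟩, fun h => absurd h.1 (not_lt.2 h1)⟩
    · rintro ⟨⟨h2, h3⟩, h4⟩
      exact ⟨⟨not_lt.1 fun h => h4 ⟨h, h3⟩, h2⟩, h3⟩
  have hsub : ({y : ℂ | ‖y‖ ^ 2 < s₁} \ dom m q) ⊆ ({y : ℂ | ‖y‖ ^ 2 < s₂} \ dom m q) :=
    sdiff_subset_sdiff_left fun y hy => lt_of_lt_of_le (hy : ‖y‖ ^ 2 < s₁) h12
  rw [hu, measureReal_sdiff hsub hms (hfin s₂)]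
  unfold Jfun; ring

/-- Between `s₁` and `s₂` the part outside the domain contains the annular sector over the directions
already outside at `s₁`, and is contained (up to a null set) in the one over those outside at
`s₂`. -/
lemma Jfun_bounds {m : ℕ} {q : ℝ → ℝ} (hq : Prof q) {s₁ s₂ : ℝ} (h0 : 0 < s₁) (h12 : s₁ ≤ s₂) :
    (s₂ - s₁) * Ffun m q s₁ ≤ Jfun m q s₂ - Jfun m q s₁ ∧
    Jfun m q s₂ - Jfun m q s₁ ≤ (s₂ - s₁) * Ffun m q s₂ := by
  have hsec : ∀ s, volume.real {y : ℂ | (√s₁ ≤ ‖y‖ ∧ ‖y‖ < √s₂) ∧ y.arg ∈ thetaSet m q s} / π =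
      (s₂ - s₁) * Ffun m q s := by
    intro s
    rw [sector_volume (measurableSet_thetaSet hq s) (fun _ h => h.1) (Real.sqrt_pos.2 h0)
      (Real.sqrt_le_sqrt h12), Real.sq_sqrt h0.le, Real.sq_sqrt (h0.le.trans h12), Ffun]
    field_simp
  have hiff : ∀ y : ℂ, (√s₁ ≤ ‖y‖ ∧ ‖y‖ < √s₂) ↔ (s₁ ≤ ‖y‖ ^ 2 ∧ ‖y‖ ^ 2 < s₂) := by
    intro y
    rw [Real.sqrt_le_left (norm_nonneg y), Real.lt_sqrt (norm_nonneg y)]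
  have hbd : IsBounded {y : ℂ | ‖y‖ < √s₂} := by
    refine (Metric.isBounded_ball (x := (0:ℂ)) (r := √s₂)).subset fun y hy => ?_
    rwa [mem_ball_zero_iff]
  rw [Jfun_diff hq h12, ← hsec s₁, ← hsec s₂]
  constructor
  · refine div_le_div_of_nonneg_right (measureReal_mono ?_ ?_) Real.pi_pos.le
    · rintro y ⟨hy, hθ⟩
      refine ⟨(hiff y).1 hy, fun hD => ?_⟩
      have h1 : ‖y‖ < q (ang m y) := hD
      have h2 : q (ang m y) ≤ √s₁ := hθ.2
      linarith [hy.1]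
    · exact (hbd.subset fun y hy => ((hiff y).2 hy.1).2).measure_lt_top.ne
  · -- the negative real axis, where `arg = π`, is a null set
    have hnull : volume {y : ℂ | y.arg = π} = 0 := by
      have hsub : {y : ℂ | y.arg = π} ⊆ {y : ℂ | y.im = 0} := fun y hy =>
        (Complex.arg_eq_pi_iff.1 hy).2
      refine measure_mono_null hsub ?_
      have := Complex.volume_preserving_equiv_real_prod.measure_preimage_equiv
        (Set.univ ×ˢ ({0} : Set ℝ))
      rw [Measure.volume_eq_prod, Measure.prod_prod] at this
      simp at this
      convert this using 2
      ext y
      simp [Complex.measurableEquivRealProd]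
    refine div_le_div_of_nonneg_right ?_ Real.pi_pos.le
    refine ENNReal.toReal_mono ?_ (measure_mono_ae ?_)
    · exact (hbd.subset fun y hy => hy.1.2).measure_lt_top.ne
    · have hae : ∀ᵐ y : ℂ, y.arg ≠ π := by rw [ae_iff]; simpa using hnull
      filter_upwards [hae] with y hy hyA
      have hyA' : (s₁ ≤ ‖y‖ ^ 2 ∧ ‖y‖ ^ 2 < s₂) ∧ y ∉ dom m q := hyA
      have h1 := (hiff y).2 hyA'.1
      refine ⟨h1, ⟨Complex.neg_pi_lt_arg y, lt_of_le_of_ne (Complex.arg_le_pi y) hy⟩, ?_⟩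
      have h2 : q (ang m y) ≤ ‖y‖ := not_lt.1 hyA'.2
      exact h2.trans h1.2.le

lemma Jfun_zero {m : ℕ} {q : ℝ → ℝ} (hq : Prof q) : Jfun m q (q (-1) ^ 2) = 0 := by
  have : {y : ℂ | ‖y‖ ^ 2 < q (-1) ^ 2} \ dom m q = ∅ := by
    rw [sdiff_eq_empty]
    intro y hy
    apply ball_subset_dom hq
    rw [mem_ball_zero_iff]
    exact (sq_lt_sq₀ (norm_nonneg _) hq.pos.le).1 hy
  simp [Jfun, this]

lemma volume_dom_disk {m : ℕ} {q : ℝ → ℝ} (hq : Prof q) {s : ℝ} (hs : 0 ≤ s) :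
    volume.real (dom m q ∩ {y : ℂ | ‖y‖ ^ 2 < s}) = π * (s - Jfun m q s) := by
  have hball : {y : ℂ | ‖y‖ ^ 2 < s} = Metric.ball 0 (√s) := by
    ext y
    rw [mem_ball_zero_iff, Real.lt_sqrt (norm_nonneg y)]; rfl
  have hv : volume.real {y : ℂ | ‖y‖ ^ 2 < s} = π * s := by
    rw [hball, measureReal_def, Complex.volume_ball]
    simp [ENNReal.toReal_ofReal, Real.sq_sqrt hs, mul_comm]
  have := measureReal_inter_add_sdiff (μ := volume) (s := {y : ℂ | ‖y‖ ^ 2 < s}) (dom_measurable hq (m := m))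
    (by rw [hball]; exact measure_ball_lt_top.ne)
  rw [inter_comm, Jfun]
  field_simp
  linarith

/-! ### Circle averages and signs of the relative stream function -/

lemma log_max_lip {a t x y : ℝ} (ha : 0 < a) (hx : a < x) (hy : a < y) :
    |Real.log (max x t) - Real.log (max y t)| ≤ 1 / a * |x - y| := by
  have key : ∀ p r : ℝ, a < p → p ≤ r → |Real.log p - Real.log r| ≤ 1 / a * |p - r| := by
    intro p r hp hpr
    have hp0 : 0 < p := ha.trans hp
    have hr0 : 0 < r := hp0.trans_le hpr
    have h1 : Real.log p ≤ Real.log r := Real.log_le_log hp0 hpr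
    rw [abs_of_nonpos (by linarith), abs_of_nonpos (by linarith)]
    have h2 : Real.log (r / p) ≤ r / p - 1 := Real.log_le_sub_one_of_pos (by positivity)
    rw [Real.log_div hr0.ne' hp0.ne'] at h2
    have h3 : r / p - 1 = 1 / p * (r - p) := by field_simp
    have h4 : 1 / p ≤ 1 / a := one_div_le_one_div_of_le ha hp.le
    have h5 : 1 / p * (r - p) ≤ 1 / a * (r - p) := mul_le_mul_of_nonneg_right h4 (by linarith)
    linarith
  have h1 : |Real.log (max x t) - Real.log (max y t)| ≤ 1 / a * |max x t - max y t| := by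
    rcases le_total (max x t) (max y t) with h | h
    · exact key _ _ (lt_max_of_lt_left hx) h
    · rw [abs_sub_comm, abs_sub_comm (max x t)]
      exact key _ _ (lt_max_of_lt_left hy) h
  refine h1.trans (mul_le_mul_of_nonneg_left ?_ (by positivity))
  simpa using abs_max_sub_max_le_max x t y t

/-- The circle average of the potential, as a function of the squared radius, has derivative
given by the enclosed area. -/
lemma hasDerivAt_potT {E : Set ℂ} (hb : IsBounded E) {s₀ : ℝ} (hs : 0 < s₀) :
    HasDerivAt (fun s => potT E 0 (√s)) (volume.real (E ∩ {y : ℂ | ‖y‖ ^ 2 < s₀}) / (2 * s₀)) s₀ := by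
  have hfin : IsFiniteMeasure (volume.restrict E) := ⟨by simpa using hb.measure_lt_top⟩
  have hlog : ∀ s : ℝ, 0 < s → ∀ y : ℂ,
      Real.log (max (√s) ‖0 - y‖) = 1 / 2 * Real.log (max s (‖y‖ ^ 2)) := by
    intro s hs y
    have : max s (‖y‖ ^ 2) = (max (√s) ‖0 - y‖) ^ 2 := by
      rw [zero_sub, norm_neg]
      rcases le_total (√s) ‖y‖ with h | h
      · rw [max_eq_right h, max_eq_right (Real.sqrt_le_left (norm_nonneg y) |>.1 h)]
      · rw [max_eq_left h, Real.sq_sqrt hs.le, max_eq_left ((Real.le_sqrt (norm_nonneg y) hs.le).1 h)]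
    rw [this, Real.log_pow]; push_cast; ring
  have hcont : ∀ s : ℝ, 0 < s → Continuous fun y : ℂ => 1 / 2 * Real.log (max s (‖y‖ ^ 2)) := by
    intro s hs
    exact continuous_const.mul ((continuous_log_max hs).comp (by fun_prop))
  have hmS : MeasurableSet {y : ℂ | ‖y‖ ^ 2 < s₀} :=
    measurableSet_lt (continuous_norm.pow 2).measurable measurable_const
  have hnhd : Ioi (s₀ / 2) ∈ nhds s₀ := Ioi_mem_nhds (by linarith)
  have hnull : ∀ᵐ y ∂(volume.restrict E), ‖(y:ℂ)‖ ^ 2 ≠ s₀ := by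
    refine ae_restrict_of_ae ?_
    rw [ae_iff]
    refine measure_mono_null (t := Metric.sphere (0:ℂ) (√s₀)) ?_ (Measure.addHaar_sphere _ _ _)
    intro y hy
    have hy' : ‖y‖ ^ 2 = s₀ := not_not.1 hy
    rw [mem_sphere_zero_iff_norm, ← hy', Real.sqrt_sq (norm_nonneg y)]
  have main := (hasDerivAt_integral_of_dominated_loc_of_lip (μ := volume.restrict E) (𝕜 := ℝ)
    (F := fun s (y : ℂ) => 1 / 2 * Real.log (max s (‖y‖ ^ 2))) (bound := fun _ => 1 / s₀)
    (F' := {y : ℂ | ‖y‖ ^ 2 < s₀}.indicator fun _ => 1 / (2 * s₀)) hnhd ?_ ?_ ?_ ?_ ?_ ?_).2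
  · have hval : ∫ y in E, {y : ℂ | ‖y‖ ^ 2 < s₀}.indicator (fun _ => 1 / (2 * s₀)) y =
        volume.real (E ∩ {y : ℂ | ‖y‖ ^ 2 < s₀}) / (2 * s₀) := by
      rw [setIntegral_indicator hmS, setIntegral_const, smul_eq_mul]; ring
    rw [hval] at main
    refine main.congr_of_eventuallyEq ?_
    filter_upwards [Ioi_mem_nhds hs] with s hs'
    exact integral_congr_ae (Filter.Eventually.of_forall fun y => hlog s hs' y)
  · filter_upwards [Ioi_mem_nhds hs] with s hs'
    exact (hcont s hs').aestronglyMeasurable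
  · refine (integrableOn_logT hb (Real.sqrt_pos.2 hs) 0).congr ?_
    exact Filter.Eventually.of_forall fun y => hlog s₀ hs y
  · exact (measurable_const.indicator hmS).aestronglyMeasurable
  · refine Filter.Eventually.of_forall fun y => LipschitzOnWith.of_dist_le_mul fun x hx z hz => ?_
    have := log_max_lip (t := ‖y‖ ^ 2) (half_pos hs) hx hz
    rw [Real.dist_eq, Real.dist_eq, ← mul_sub, abs_mul, Real.coe_nnabs, abs_of_pos (by positivity : 0 < 1 / s₀),
      abs_of_pos (by norm_num : (0:ℝ) < 1 / 2)]
    have h2 : 1 / (s₀ / 2) * |x - z| = 2 * (1 / s₀ * |x - z|) := by field_simp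
    rw [h2] at this; linarith
  · exact integrable_const _
  · filter_upwards [hnull] with y hy
    rcases lt_or_gt_of_ne hy with h | h
    · rw [indicator_of_mem (show y ∈ {y : ℂ | ‖y‖ ^ 2 < s₀} from h)]
      have hd : HasDerivAt (fun s : ℝ => 1 / 2 * Real.log s) (1 / (2 * s₀)) s₀ := by
        have e : 1 / (2 * s₀) = 1 / 2 * s₀⁻¹ := by ring
        rw [e]
        exact (Real.hasDerivAt_log hs.ne').const_mul (1 / 2)
      refine hd.congr_of_eventuallyEq ?_
      filter_upwards [Ioi_mem_nhds h] with s hs'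
      rw [max_eq_left (le_of_lt hs')]
    · rw [indicator_of_notMem (show y ∉ {y : ℂ | ‖y‖ ^ 2 < s₀} from not_lt.2 (le_of_lt h))]
      refine (hasDerivAt_const s₀ (1 / 2 * Real.log (‖y‖ ^ 2))).congr_of_eventuallyEq ?_
      filter_upwards [Iio_mem_nhds h] with s hs'
      rw [max_eq_right (le_of_lt hs')]

lemma ang_circle (m : ℕ) {r : ℝ} (hr : 0 < r) (θ : ℝ) :
    ang m (r * Complex.exp (θ * Complex.I)) = Real.cos (m * θ) := by
  have hn : ‖(r:ℂ) * Complex.exp (θ * Complex.I)‖ = r := by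
    rw [norm_mul, Complex.norm_exp_ofReal_mul_I, Complex.norm_real, Real.norm_of_nonneg hr.le, mul_one]
  have h0 : (r:ℂ) * Complex.exp (θ * Complex.I) ≠ 0 := by
    rw [← norm_ne_zero_iff, hn]; exact hr.ne'
  rw [ang_eq_div h0, hn, mul_pow, ← Complex.exp_nat_mul, ← Complex.ofReal_pow, Complex.re_ofReal_mul]
  have : (m : ℂ) * (θ * Complex.I) = ((m * θ : ℝ) : ℂ) * Complex.I := by push_cast; ring
  rw [this, Complex.exp_ofReal_mul_I_re]
  field_simp

lemma norm_circle {r : ℝ} (hr : 0 ≤ r) (θ : ℝ) : ‖(r:ℂ) * Complex.exp (θ * Complex.I)‖ = r := by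
  rw [norm_mul, Complex.norm_exp_ofReal_mul_I, Complex.norm_real, Real.norm_of_nonneg hr, mul_one]

/-- Every circle of radius between the extreme values of the profile meets the boundary. -/
lemma exists_frontier {m : ℕ} (hm : m ≠ 0) {q : ℝ → ℝ} (hq : Prof q) (ho : IsOpen (dom m q)) {r : ℝ}
    (h1 : q (-1) ≤ r) (h2 : r ≤ q 1) :
    ∃ z ∈ frontier (dom m q), ‖z‖ = r ∧ q (ang m z) = r := by
  obtain ⟨x, hx, hxr⟩ := intermediate_value_Icc (by norm_num : (-1:ℝ) ≤ 1) hq.cont.continuousOn ⟨h1, h2⟩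
  have hr : 0 < r := hq.pos.trans_le h1
  have hm0 : (m:ℝ) ≠ 0 := by exact_mod_cast hm
  have ha : ang m (r * Complex.exp ((Real.arccos x / m : ℝ) * Complex.I)) = x := by
    rw [ang_circle m hr, mul_div_cancel₀ _ hm0, Real.cos_arccos hx.1 hx.2]
  have hn := norm_circle hr.le (Real.arccos x / m)
  refine ⟨_, mem_frontier_dom hq ho ?_, hn, ?_⟩
  · rw [ha, hn, hxr]
  · rw [ha, hxr]

section
variable {m : ℕ} {q : ℝ → ℝ} {Ω c₀ : ℝ}

/-- Sign of the relative stream function on a circle crossing the boundary: it is nonpositive inside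
the domain, nonnegative outside, and at most `12 / m²`. The circle contains a boundary point, where
the value is `0`; the signs follow from `pot_angular`, and the bound holds because the potential is
within `12π / m²` of its circle average at both points. -/
lemma stream_sign (hm : 10 ≤ m) (hq : Prof q) (ho : IsOpen (dom m q))
    (hst : ∀ z ∈ frontier (dom m q), pot (dom m q) z / (2 * π) - Ω / 2 * ‖z‖ ^ 2 = c₀)
    {z : ℂ} (h1 : q (-1) ≤ ‖z‖) (h2 : ‖z‖ ≤ q 1) (hz2 : ‖z‖ ^ 2 ≤ 2) :
    (z ∈ dom m q → pot (dom m q) z / (2 * π) - Ω / 2 * ‖z‖ ^ 2 - c₀ ≤ 0) ∧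
    (z ∉ dom m q → 0 ≤ pot (dom m q) z / (2 * π) - Ω / 2 * ‖z‖ ^ 2 - c₀) ∧
    pot (dom m q) z / (2 * π) - Ω / 2 * ‖z‖ ^ 2 - c₀ ≤ 12 / m ^ 2 := by
  have hm0 : m ≠ 0 := by omega
  obtain ⟨w, hwf, hwn, hwq⟩ := exists_frontier hm0 hq ho h1 h2
  have hw := hst w hwf
  rw [hwn] at hw
  have hz0 : z ≠ 0 := norm_pos_iff.1 (hq.pos.trans_le h1)
  have hw0 : w ≠ 0 := by rw [← norm_pos_iff, hwn]; exact hq.pos.trans_le h1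
  have hpi := Real.pi_pos
  have cmp : ∀ a b : ℝ, a ≤ b → a / (2 * π) ≤ b / (2 * π) := fun a b h =>
    div_le_div_of_nonneg_right h (by positivity)
  refine ⟨fun hD => ?_, fun hD => ?_, ?_⟩
  · have hD' : ‖z‖ < q (ang m z) := hD
    have hle : ang m w ≤ ang m z := by
      by_contra! h
      have := hq.mono (ang_mem m z) (ang_mem m w) h
      linarith
    have := cmp _ _ (pot_angular hm0 hq hwn.symm hle)
    linarith
  · have hD' : q (ang m z) ≤ ‖z‖ := not_lt.1 hD
    have hle : ang m z ≤ ang m w := by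
      by_contra! h
      have := hq.mono (ang_mem m w) (ang_mem m z) h
      linarith
    have := cmp _ _ (pot_angular hm0 hq hwn hle)
    linarith
  · have e1 := pot_le_avg (dom_bounded hq) (dom_mfold hm0 q) hm hz0 hz2
    have e2 := pot_ge_avg (dom_measurable hq) (dom_subset_ball hq) (dom_mfold hm0 q) hm hw0 (by rwa [hwn])
    rw [hwn] at e2
    have e3 : pot (dom m q) z ≤ pot (dom m q) w + 24 * π / m ^ 2 := by
      have : 24 * π / (m:ℝ) ^ 2 = 12 * π / m ^ 2 + 12 * π / m ^ 2 := by ring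
      linarith
    have e4 := cmp _ _ e3
    have e5 : (pot (dom m q) w + 24 * π / (m:ℝ) ^ 2) / (2 * π) = pot (dom m q) w / (2 * π) + 12 / m ^ 2 := by
      have : (m:ℝ) ≠ 0 := by exact_mod_cast hm0
      field_simp
      ring
    rw [e5] at e4
    linarith

/-- Circle averages of the relative stream function. -/
lemma circleAverage_stream (hq : Prof q) {r : ℝ} (hr : 0 < r) :
    circleAverage (fun z => pot (dom m q) z / (2 * π) - Ω / 2 * r ^ 2 - c₀) 0 r =
      potT (dom m q) 0 r / (2 * π) - Ω / 2 * r ^ 2 - c₀ := by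
  have hc : Continuous (pot (dom m q)) := continuous_pot (dom_measurable hq) (dom_bounded hq)
  have hci : CircleIntegrable (pot (dom m q)) 0 r := hc.continuousOn.circleIntegrable'
  have h1 : (fun z => pot (dom m q) z / (2 * π) - Ω / 2 * r ^ 2 - c₀) =
      fun z => (1 / (2 * π)) • pot (dom m q) z + (-(Ω / 2 * r ^ 2) - c₀) := by
    funext z; rw [smul_eq_mul]; ring
  rw [h1, circleAverage_fun_add (hci.const_fun_smul) (circleIntegrable_const _ _ _), circleAverage_fun_smul,
    circleAverage_const, circleAverage_pot (dom_measurable hq) (dom_bounded hq) hr, smul_eq_mul]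
  ring

end

/-! ### Improving the oscillation bound -/

section
variable {m : ℕ} {q : ℝ → ℝ} {Ω c₀ : ℝ}

/-- Upper bound for the circle averages: only the directions leaving the domain contribute. -/
lemma avg_upper (hm : 10 ≤ m) (hq : Prof q) (ho : IsOpen (dom m q))
    (hst : ∀ z ∈ frontier (dom m q), pot (dom m q) z / (2 * π) - Ω / 2 * ‖z‖ ^ 2 = c₀)
    {s : ℝ} (h1 : q (-1) ^ 2 ≤ s) (h2 : s ≤ q 1 ^ 2) (hs2 : s ≤ 2) :
    potT (dom m q) 0 (√s) / (2 * π) - Ω / 2 * s - c₀ ≤ 12 * Ffun m q s * (1 / m) ^ 2 := by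
  have hs0 : 0 < s := (pow_pos hq.pos 2).trans_le h1
  have hr : 0 < √s := Real.sqrt_pos.2 hs0
  have hq1 : 0 < q 1 := hq.pos.trans_le (hq.lower (by simp))
  have hr1 : q (-1) ≤ √s := Real.le_sqrt_of_sq_le h1
  have hr2 : √s ≤ q 1 := Real.sqrt_le_left hq1.le |>.2 h2
  have hc : Continuous (pot (dom m q)) := continuous_pot (dom_measurable hq) (dom_bounded hq)
  have havg := circleAverage_stream (m := m) (Ω := Ω) (c₀ := c₀) hq hr
  rw [Real.sq_sqrt hs0.le] at havg
  rw [← havg, circleAverage_eq_integral_add (-π), smul_eq_mul,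
    intervalIntegral.integral_comp_add_right (fun θ => pot (dom m q) (circleMap 0 (√s) θ) / (2 * π) - Ω / 2 * s - c₀)]
  have e1 : (0:ℝ) + -π = -π := by ring
  have e2 : 2 * π + -π = π := by ring
  rw [e1, e2, intervalIntegral.integral_of_le (by linarith [Real.pi_pos]), integral_Ioc_eq_integral_Ioo]
  have hcirc : Continuous fun θ => pot (dom m q) (circleMap 0 (√s) θ) / (2 * π) - Ω / 2 * s - c₀ :=
    ((hc.comp (by fun_prop)).div_const _ |>.sub continuous_const).sub continuous_const
  have hbd : ∫ θ in Ioo (-π) π, (pot (dom m q) (circleMap 0 (√s) θ) / (2 * π) - Ω / 2 * s - c₀) ≤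
      ∫ θ in Ioo (-π) π, (thetaSet m q s).indicator (fun _ => 12 / (m:ℝ) ^ 2) θ := by
    refine setIntegral_mono_on ?_ ?_ measurableSet_Ioo ?_
    · exact (hcirc.continuousOn.integrableOn_compact isCompact_Icc).mono_set Ioo_subset_Icc_self
    · exact (integrableOn_const measure_Ioo_lt_top.ne).indicator (measurableSet_thetaSet hq s)
    · intro θ hθ
      have hz : circleMap 0 (√s) θ = (√s : ℝ) * Complex.exp (θ * Complex.I) := by simp [circleMap]
      have hn : ‖circleMap 0 (√s) θ‖ = √s := by rw [hz, norm_circle hr.le]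
      have ha : ang m (circleMap 0 (√s) θ) = Real.cos (m * θ) := by rw [hz, ang_circle m hr]
      have hsg := stream_sign hm hq ho hst (z := circleMap 0 (√s) θ) (by rwa [hn]) (by rwa [hn])
        (by rwa [hn, Real.sq_sqrt hs0.le])
      rw [hn, Real.sq_sqrt hs0.le] at hsg
      by_cases hθs : θ ∈ thetaSet m q s
      · rw [indicator_of_mem hθs]; exact hsg.2.2
      · rw [indicator_of_notMem hθs]
        apply hsg.1
        show ‖circleMap 0 (√s) θ‖ < q (ang m (circleMap 0 (√s) θ))
        rw [hn, ha]
        by_contra! h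
        exact hθs ⟨hθ, h⟩
  rw [setIntegral_indicator (measurableSet_thetaSet hq s),
    inter_eq_self_of_subset_right (fun _ h => h.1), setIntegral_const, smul_eq_mul] at hbd
  have hpi := Real.pi_pos
  refine (mul_le_mul_of_nonneg_left hbd (by positivity)).trans (le_of_eq ?_)
  rw [Ffun]
  have : (m:ℝ) ≠ 0 := by positivity
  field_simp

/-- Lower bound for the circle averages, from the slit barrier. -/
lemma avg_lower (hm : 10 ≤ m) (hq : Prof q) (ho : IsOpen (dom m q)) (hΩ : Ω < 1 / 2)
    (hst : ∀ z ∈ frontier (dom m q), pot (dom m q) z / (2 * π) - Ω / 2 * ‖z‖ ^ 2 = c₀)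
    (hρ1 : q (-1) ≤ 1) (hρ2 : 1 / 2 ≤ q (-1) ^ 2) (hW : (q 1 ^ 2 - q (-1) ^ 2) ^ 2 ≤ 1 / m)
    {s : ℝ} (h1 : q (-1) ^ 2 ≤ s) (h2 : s ≤ q 1 ^ 2) (hs2 : s ≤ 2) :
    -(2 * (1 - 2 * Ω) * (1 / m)) ≤ potT (dom m q) 0 (√s) / (2 * π) - Ω / 2 * s - c₀ := by
  have hs0 : 0 < s := (pow_pos hq.pos 2).trans_le h1
  have hr : 0 < √s := Real.sqrt_pos.2 hs0
  have hm0 : m ≠ 0 := by omega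
  have hq1 : 0 < q 1 := hq.pos.trans_le (hq.lower (by simp))
  have hr1 : q (-1) ≤ √s := Real.le_sqrt_of_sq_le h1
  have hr2 : √s ≤ q 1 := Real.sqrt_le_left hq1.le |>.2 h2
  have hc : Continuous (pot (dom m q)) := continuous_pot (dom_measurable hq) (dom_bounded hq)
  have havg := circleAverage_stream (m := m) (Ω := Ω) (c₀ := c₀) hq hr
  rw [Real.sq_sqrt hs0.le] at havg
  rw [← havg, ← circleAverage_const (-(2 * (1 - 2 * Ω) * (1 / (m:ℝ)))) 0 (√s)]
  refine circleAverage_mono (circleIntegrable_const _ _ _) ?_ ?_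
  · have : Continuous fun z => pot (dom m q) z / (2 * π) - Ω / 2 * s - c₀ :=
      ((hc.div_const _).sub continuous_const).sub continuous_const
    exact this.continuousOn.circleIntegrable'
  · intro z hz
    rw [abs_of_pos hr, mem_sphere_zero_iff_norm] at hz
    have hzs : ‖z‖ ^ 2 = s := by rw [hz, Real.sq_sqrt hs0.le]
    by_cases hD : z ∈ dom m q
    · have := slit_bound hm0 hq ho hΩ hst hρ1 hρ2 hW hD (by rwa [hz])
      rw [hzs] at this
      refine le_trans (le_of_eq ?_) this
      ring
    · have := (stream_sign hm hq ho hst (z := z) (by rwa [hz]) (by rwa [hz]) (by rwa [hzs])).2.1 hD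
      rw [hzs] at this
      refine le_trans ?_ this
      have h3 : 0 ≤ 2 * (1 - 2 * Ω) * (1 / (m:ℝ)) := mul_nonneg (by linarith) (by positivity)
      linarith

/-- The improvement step: an oscillation of at most `400 / m` is in fact at most `376 / m`. -/
lemma osc_improve (hm : 10 ^ 7 ≤ m) (hq : Prof q) (ho : IsOpen (dom m q)) (hΩ : Ω < 1 / 2)
    (hst : ∀ z ∈ frontier (dom m q), pot (dom m q) z / (2 * π) - Ω / 2 * ‖z‖ ^ 2 = c₀)
    (hρ1 : q (-1) ≤ 1) (hR : 1 ≤ q 1) (hosc : q 1 - q (-1) ≤ 400 / m) :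
    q 1 - q (-1) ≤ 376 / m := by
  have hm' : (10:ℝ) ^ 7 ≤ m := by exact_mod_cast hm
  have hm0 : (0:ℝ) < m := by linarith
  have hm10 : 10 ≤ m := by omega
  set ρ := q (-1) with hρ
  set R := q 1 with hRd
  have hρ0 : 0 < ρ := hq.pos
  set t : ℝ := 1 / m with ht
  have ht0 : 0 < t := by positivity
  have ht1 : t ≤ 1 / 10 ^ 7 := one_div_le_one_div_of_le (by norm_num) hm'
  have e400 : 400 / (m:ℝ) = 400 * t := by rw [ht]; ring
  have e376 : 376 / (m:ℝ) = 376 * t := by rw [ht]; ring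
  rw [e400] at hosc
  rw [e376]
  have hρlow : 1 - 400 * t ≤ ρ := by linarith
  have hρhalf : 1 / 2 ≤ ρ ^ 2 := by nlinarith
  have hRup : R ≤ 1 + 400 * t := by linarith
  have hR2 : R ^ 2 ≤ 2 := by nlinarith
  have hR2ρ : R ^ 2 ≤ 2 * ρ ^ 2 := by nlinarith
  have hRρ : ρ ^ 2 ≤ R ^ 2 := by nlinarith
  have hdiff : R ^ 2 - ρ ^ 2 ≤ 1000 * t := by nlinarith
  have hW : (R ^ 2 - ρ ^ 2) ^ 2 ≤ 1 / m := by
    have h1 : (R ^ 2 - ρ ^ 2) ^ 2 ≤ (1000 * t) ^ 2 := pow_le_pow_left₀ (by linarith) hdiff 2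
    have h2 : (1000 * t) ^ 2 ≤ t := by nlinarith
    linarith
  have hode := ode_bound (a := ρ ^ 2) (b := R ^ 2) (ε := 1 - 2 * Ω) (M := t) (F := Ffun m q) (J := Jfun m q)
    (Φ := fun s => potT (dom m q) 0 (√s) / (2 * π) - Ω / 2 * s - c₀)
    (by nlinarith) hρhalf hRρ hR2 hR2ρ (by linarith) ht0 (Jfun_zero hq) (Ffun_nonneg m q) (Ffun_le_one m q)
    (fun s₁ s₂ h1 h2 _ => (Jfun_bounds hq (by linarith) h2).1)
    (fun s₁ s₂ h1 h2 _ => (Jfun_bounds hq (by linarith) h2).2)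
    (fun s hs => by
      have hs0 : 0 < s := by linarith [hs.1]
      have hd := (((hasDerivAt_potT (dom_bounded hq (m := m)) hs0).div_const (2 * π)).sub
        ((hasDerivAt_id s).const_mul (Ω / 2))).sub_const c₀
      rw [volume_dom_disk hq hs0.le] at hd
      have e : ((1 - 2 * Ω) * s - Jfun m q s) / (4 * s) =
          π * (s - Jfun m q s) / (2 * s) / (2 * π) - Ω / 2 * 1 := by
        have := Real.pi_pos
        field_simp
        ring
      rw [e]
      exact hd)
    (fun s hs => avg_lower hm10 hq ho hΩ hst hρ1 hρhalf hW hs.1 hs.2 (hs.2.trans hR2))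
    (fun s hs => avg_upper hm10 hq ho hst hs.1 hs.2 (hs.2.trans hR2))
  nlinarith

end

/-! ### Transfer from `ℂ` to the plane -/

/-- The standard isometry from `ℂ` onto the plane. -/
def toPlane : ℂ ≃ₗᵢ[ℝ] R2 := Complex.orthonormalBasisOneI.repr

lemma toPlane_circle (r θ : ℝ) : toPlane (r * Complex.exp (θ * Complex.I)) = polar r θ := by
  have hre : ((r:ℂ) * Complex.exp (θ * Complex.I)).re = r * Real.cos θ := by
    rw [Complex.re_ofReal_mul, Complex.exp_ofReal_mul_I_re]
  have him : ((r:ℂ) * Complex.exp (θ * Complex.I)).im = r * Real.sin θ := by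
    rw [Complex.im_ofReal_mul, Complex.exp_ofReal_mul_I_im]
  ext i
  fin_cases i
  · simp [toPlane, polar, pt, hre]
  · simp [toPlane, polar, pt, him]

lemma patchConv_toPlane (D : Set R2) (z : ℂ) :
    patchConv D (toPlane z) = pot (toPlane ⁻¹' D) z / (2 * π) := by
  have hmp : MeasurePreserving toPlane volume volume := toPlane.measurePreserving
  have hemb : MeasurableEmbedding toPlane := toPlane.toHomeomorph.measurableEmbedding
  rw [patchConv, ← hmp.setIntegral_preimage_emb hemb, pot, div_eq_inv_mul, ← integral_const_mul]
  refine integral_congr_ae (Filter.Eventually.of_forall fun y => ?_)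
  simp only [nker]
  rw [← map_sub, LinearIsometryEquiv.norm_map, one_div]

/-- The profile of a polar graph: the boundary radius `1 + u` in terms of `cos (m θ)`. -/
def profile (m : ℕ) (u : ℝ → ℝ) (x : ℝ) : ℝ := 1 + u (Real.arccos x / m)

section
variable {m : ℕ} {u : ℝ → ℝ}

lemma profile_cos (hm : 0 < m) (he : ∀ θ, u (-θ) = u θ) (hp : Function.Periodic u (2 * π / m)) (θ : ℝ) :
    profile m u (Real.cos (m * θ)) = 1 + u θ := by
  have hm0 : (m:ℝ) ≠ 0 := by positivity
  have hcos : Real.cos (m * θ) = Real.cos (Real.arccos (Real.cos (m * θ))) :=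
    (Real.cos_arccos (Real.neg_one_le_cos _) (Real.cos_le_one _)).symm
  rw [profile]
  congr 1
  obtain ⟨k, hk | hk⟩ := Real.cos_eq_cos_iff.1 hcos
  · have : Real.arccos (Real.cos (m * θ)) / m = θ + k * (2 * π / m) := by
      rw [hk]; field_simp; ring
    rw [this]
    exact hp.int_mul k θ
  · have : Real.arccos (Real.cos (m * θ)) / m = -θ + k * (2 * π / m) := by
      rw [hk]; field_simp; ring
    rw [this, hp.int_mul k (-θ), he]

lemma profile_prof (hm : 0 < m) (hc : Continuous u) (hlow : ∀ θ, -1 < u θ)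
    (hd : ∀ θ ∈ Ioo (0:ℝ) (π / m), deriv u θ < 0) : Prof (profile m u) := by
  have hm0 : (0:ℝ) < m := by positivity
  have hanti : StrictAntiOn u (Icc 0 (π / m)) :=
    strictAntiOn_of_deriv_neg (convex_Icc _ _) hc.continuousOn (by rw [interior_Icc]; exact hd)
  have hmem : ∀ x : ℝ, Real.arccos x / m ∈ Icc (0:ℝ) (π / m) := fun x =>
    ⟨div_nonneg (Real.arccos_nonneg x) hm0.le, div_le_div_of_nonneg_right (Real.arccos_le_pi x) hm0.le⟩
  refine ⟨?_, fun x hx y hy hxy => ?_, ?_⟩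
  · exact continuous_const.add (hc.comp (Real.continuous_arccos.div_const _))
  · have h1 : Real.arccos y < Real.arccos x := Real.strictAntiOn_arccos hx hy hxy
    have h2 := hanti (hmem y) (hmem x) (div_lt_div_of_pos_right h1 hm0)
    simp only [profile]; linarith
  · simp only [profile]; linarith [hlow (Real.arccos (-1) / m)]

lemma preimage_polarDomain (hm : 0 < m) (he : ∀ θ, u (-θ) = u θ) (hp : Function.Periodic u (2 * π / m))
    (hlow : ∀ θ, -1 < u θ) : toPlane ⁻¹' polarDomain u = dom m (profile m u) := by
  ext z
  constructor
  · rintro ⟨r, θ, hr, hru, hz⟩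
    rw [← toPlane_circle] at hz
    have hz' : z = r * Complex.exp (θ * Complex.I) := toPlane.injective hz
    show ‖z‖ < profile m u (ang m z)
    rcases hr.eq_or_lt with h | h
    · have : z = 0 := by rw [hz', ← h]; simp
      rw [this, norm_zero, profile]; linarith [hlow (Real.arccos (ang m 0) / m)]
    · rw [hz', norm_circle hr, ang_circle m h, profile_cos hm he hp]; exact hru
  · intro hz
    have hz' : ‖z‖ < profile m u (ang m z) := hz
    rw [ang, profile_cos hm he hp] at hz'
    refine ⟨‖z‖, z.arg, norm_nonneg z, hz', ?_⟩
    rw [← toPlane_circle, Complex.norm_mul_exp_arg_mul_I]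

end

/-- For a single rotating patch: the oscillation of `u` bounds `|u|` because `u` has zero mean, and
the a priori bound `400 / m` on the oscillation improves itself to `376 / m`. -/
lemma patch_improve {m : ℕ} (hm : 10 ^ 7 ≤ m) {u : ℝ → ℝ} {Ω : ℝ} (hc : Continuous u) (hΩ : Ω < 1 / 2)
    (he : ∀ θ, u (-θ) = u θ) (hp : Function.Periodic u (2 * π / m))
    (hmean : (∫ θ in (0 : ℝ)..(2 * π), u θ) = 0) (hlow : ∀ θ, -1 < u θ)
    (hsol : IsPatchSolution (polarDomain u) Ω) (hd : ∀ θ ∈ Ioo (0:ℝ) (π / m), deriv u θ < 0) :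
    (∀ θ, |u θ| ≤ u 0 - u (π / m)) ∧ (u 0 - u (π / m) ≤ 400 / m → u 0 - u (π / m) ≤ 376 / m) := by
  have hm0 : 0 < m := by omega
  have hq := profile_prof hm0 hc hlow hd
  have hpre := preimage_polarDomain hm0 he hp hlow
  have hq1 : profile m u 1 = 1 + u 0 := by simp [profile]
  have hqm : profile m u (-1) = 1 + u (π / m) := by simp [profile]
  have hub : ∀ θ, u θ ≤ u 0 := by
    intro θ
    have h1 := hq.upper (x := Real.cos (m * θ)) ⟨Real.neg_one_le_cos _, Real.cos_le_one _⟩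
    rw [profile_cos hm0 he hp, hq1] at h1; linarith
  have hlb : ∀ θ, u (π / m) ≤ u θ := by
    intro θ
    have h1 := hq.lower (x := Real.cos (m * θ)) ⟨Real.neg_one_le_cos _, Real.cos_le_one _⟩
    rw [profile_cos hm0 he hp, hqm] at h1; linarith
  have hpi := Real.pi_pos
  have h0 : 0 ≤ u 0 := by
    have := intervalIntegral.integral_mono_on (μ := volume) (by positivity : (0:ℝ) ≤ 2 * π) (hc.intervalIntegrable _ _)
      (intervalIntegrable_const (c := u 0)) (fun θ _ => hub θ)
    rw [hmean, intervalIntegral.integral_const, smul_eq_mul, sub_zero] at this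
    exact nonneg_of_mul_nonneg_right this (by positivity)
  have h1 : u (π / m) ≤ 0 := by
    have := intervalIntegral.integral_mono_on (μ := volume) (by positivity : (0:ℝ) ≤ 2 * π)
      (intervalIntegrable_const (c := u (π / m))) (hc.intervalIntegrable _ _) (fun θ _ => hlb θ)
    rw [hmean, intervalIntegral.integral_const, smul_eq_mul, sub_zero] at this
    by_contra! h
    have := mul_pos (by positivity : 0 < 2 * π) h
    linarith
  refine ⟨fun θ => abs_le.2 ⟨by linarith [hlb θ], by linarith [hub θ]⟩, fun hosc => ?_⟩
  obtain ⟨ho, -, -, -, c₀, hst⟩ := hsol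
  have ho' : IsOpen (dom m (profile m u)) := by
    rw [← hpre]; exact ho.preimage toPlane.continuous
  have hst' : ∀ z ∈ frontier (dom m (profile m u)),
      pot (dom m (profile m u)) z / (2 * π) - Ω / 2 * ‖z‖ ^ 2 = c₀ := by
    intro z hz
    rw [← hpre] at hz ⊢
    have hz' : toPlane z ∈ frontier (polarDomain u) := by
      have := toPlane.toHomeomorph.preimage_frontier (polarDomain u)
      have h2 : z ∈ toPlane.toHomeomorph ⁻¹' frontier (polarDomain u) := by rw [this]; exact hz
      exact h2
    have := hst _ hz'
    rwa [streamFun, patchConv_toPlane, LinearIsometryEquiv.norm_map] at this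
  have := osc_improve hm hq ho' hΩ hst' (by rw [hqm]; linarith) (by rw [hq1]; linarith)
    (by rw [hq1, hqm]; linarith)
  rw [hq1, hqm] at this
  linarith

/-! ### Continuity along the curve -/

/-- Along any global bifurcation curve of `m`-fold symmetric rotating
patches satisfying (A1)-(A4), for `m ≥ m₀` one has `‖u_s‖_{L∞} ≤ c/m` for all `s ≥ 0`. -/
theorem bifurcation_curve_linfty_bound :
    ∃ c > (0 : ℝ), ∃ m₀ : ℕ, 3 ≤ m₀ ∧ ∀ (m : ℕ), m₀ ≤ m →
      ∀ (u : ℝ → ℝ → ℝ) (Ω : ℝ → ℝ),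
      -- the curve takes values in C²(𝕋) × (0, 1/2)
      (∀ s ∈ Set.Ici (0 : ℝ), ContDiff ℝ 2 (u s)) →
      (∀ s ∈ Set.Ici (0 : ℝ), Ω s ∈ Set.Ioo (0 : ℝ) (1/2)) →
      -- continuity of the curve in the C²(𝕋) × ℝ topology
      (∀ s₀ ∈ Set.Ici (0 : ℝ), ∀ ε > (0 : ℝ), ∃ δ > (0 : ℝ),
        ∀ s ∈ Set.Ici (0 : ℝ), |s - s₀| < δ →
          |Ω s - Ω s₀| < ε ∧ ∀ θ : ℝ,
            |u s θ - u s₀ θ| + |deriv (u s) θ - deriv (u s₀) θ| +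
              |deriv (deriv (u s)) θ - deriv (deriv (u s₀)) θ| < ε) →
      -- (A1): each `u_s` is even, `(2π/m)`-periodic, has zero mean and `u_s > -1`
      (∀ s ∈ Set.Ici (0 : ℝ),
        (∀ θ : ℝ, u s (-θ) = u s θ) ∧ Function.Periodic (u s) (2 * π / m) ∧
        (∫ θ in (0 : ℝ)..(2 * π), u s θ) = 0 ∧ (∀ θ : ℝ, -1 < u s θ)) →
      -- (A2): `(D^{u_s}, Ω_s)` solves the rotating patch equation
      (∀ s ∈ Set.Ici (0 : ℝ), IsPatchSolution (polarDomain (u s)) (Ω s)) →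
      -- (A3): strict monotonicity on `(0, π/m)`
      (∀ s ∈ Set.Ioi (0 : ℝ), ∀ θ ∈ Set.Ioo (0 : ℝ) (π / m), deriv (u s) θ < 0) →
      -- (A4): the curve emanates from the disk
      (u 0 = fun _ => 0) → Ω 0 = ((m : ℝ) - 1) / (2 * m) →
      ∀ s ∈ Set.Ici (0 : ℝ), ∀ θ : ℝ, |u s θ| ≤ c / m := by
  refine ⟨400, by norm_num, 10 ^ 7, by norm_num, ?_⟩
  intro m hm u Ω hC hΩ hcont hA1 hA2 hA3 hu0 _
  have hm0 : (0:ℝ) < m := by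
    have : 0 < m := by omega
    exact_mod_cast this
  have himp : ∀ s ∈ Ioi (0:ℝ), (∀ θ, |u s θ| ≤ u s 0 - u s (π / m)) ∧
      (u s 0 - u s (π / m) ≤ 400 / m → u s 0 - u s (π / m) ≤ 376 / m) := by
    intro s hs
    have hs' : s ∈ Ici (0:ℝ) := mem_Ici.2 (le_of_lt (mem_Ioi.1 hs))
    obtain ⟨he, hp, hmean, hlow⟩ := hA1 s hs'
    exact patch_improve hm (hC s hs').continuous (hΩ s hs').2 he hp hmean hlow (hA2 s hs') (hA3 s hs)
  have hWc : ContinuousOn (fun s => u s 0 - u s (π / m)) (Ici 0) := by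
    have hpt : ∀ θ, ContinuousOn (fun s => u s θ) (Ici 0) := by
      intro θ
      rw [Metric.continuousOn_iff]
      intro s₀ hs₀ ε hε
      obtain ⟨δ, hδ, h⟩ := hcont s₀ hs₀ ε hε
      refine ⟨δ, hδ, fun s hs hsd => ?_⟩
      have h1 := (h s hs (by rwa [Real.dist_eq] at hsd)).2 θ
      rw [Real.dist_eq]
      linarith [abs_nonneg (deriv (u s) θ - deriv (u s₀) θ),
        abs_nonneg (deriv (deriv (u s)) θ - deriv (deriv (u s₀)) θ)]
    exact (hpt 0).sub (hpt (π / m))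
  have hW0 : u 0 0 - u 0 (π / m) = 0 := by rw [hu0]; simp
  -- the oscillation starts at `0` and cannot take the value `390 / m`
  have hW : ∀ s ∈ Ici (0:ℝ), u s 0 - u s (π / m) ≤ 400 / m := by
    intro s hs
    by_contra! h
    have h390 : (390:ℝ) / m ≤ 400 / m := div_le_div_of_nonneg_right (by norm_num) hm0.le
    have hpos : (0:ℝ) < 390 / m := by positivity
    obtain ⟨s', hs', hval⟩ := intermediate_value_Icc hs (hWc.mono fun x hx => hx.1)
      (show (390:ℝ) / m ∈ Icc (u 0 0 - u 0 (π / m)) (u s 0 - u s (π / m)) from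
        ⟨by rw [hW0]; exact hpos.le, h390.trans h.le⟩)
    have hval' : u s' 0 - u s' (π / m) = 390 / m := hval
    have hs0 : s' ∈ Ioi (0:ℝ) := by
      refine lt_of_le_of_ne hs'.1 fun h0 => ?_
      rw [← h0, hW0] at hval'
      linarith
    have h1 := (himp s' hs0).2 (by rw [hval']; exact h390)
    rw [hval', div_le_div_iff_of_pos_right hm0] at h1
    norm_num at h1
  intro s hs θ
  rcases (mem_Ici.1 hs).eq_or_lt with h | h
  · rw [← h, hu0]; simp; positivity
  · exact ((himp s h).1 θ).trans (hW s hs)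
end
end

section
/- Let (D, Ω) be a solution of the rotating patch equation, and let p be the unique function that is continuous on the closure of D, twice continuously differentiable in D, satisfies Δp = −2 in D and p = 0 on ∂D. Then Ω · (∫_D |x|² dx − |D|²/(2π)) = (1 − 2Ω) · (|D|²/(4π) − ∫_D p(x) dx). -/
/-!
Identify `ℝ²` with `ℂ` and let `g = 1_D * N - (Ω/2)|x|² - c` be the relative stream function,
normalised to vanish on `∂D`.

Since `Δg = 1 - 2Ω` in `D`, uniqueness for the Dirichlet problem gives `g = -((1 - 2Ω)/2) p`. The
Laplacian of the potential is only used through its mean value formula (`circleAverage_logPot`), so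
that no second derivatives of `1_D * N` are needed: `g + ((1 - 2Ω)/2) p` has the mean value property
on circles and vanishes on `∂D`, hence vanishes (`eq_zero_of_circleAverage`).

On the other hand `-2 ∫_D g = ∫_D x · ∇g` (`integral_stream`). Here the indicator `1_D g` is a
compactly supported Lipschitz function, because `g` is Lipschitz and zero on `∂D`, so Mathlib's
integration by parts for Lipschitz functions applies without any divergence theorem on `D`; the
boundary, being a `C¹` curve, is Lebesgue null (`volume_range_curve`). The right side is computed by
symmetrising the kernel: `⟪x - w, x⟫/|x - w|² + ⟪w - x, w⟫/|w - x|² = 1`, so that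
`∫_D x · ∇(1_D * N) = |D|²/(4π)` (`integral_integral_gradKernel`). Altogether
`(1 - 2Ω) ∫_D p = |D|²/(4π) - Ω ∫_D |x|²`, which is the claim rearranged (`identity_complex`).
-/

open MeasureTheory Set Real Bornology

noncomputable section

/-! ### The kernels `‖z - w‖⁻¹` and `log ‖z - w‖` -/

lemma integrableOn_inv_norm (r : ℝ) :
    IntegrableOn (fun w : ℂ => ‖w‖⁻¹) (Metric.ball 0 r) := by
  refine integrableOn_ball_of_norm_le_rpow (C := 1) (α := 1) (by simp) (by simp) ?_
    (by fun_prop)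
  filter_upwards with x
  simp [Real.rpow_neg_one]

/-- The function `‖z - w‖⁻¹`, which dominates the gradient of `log ‖z - w‖`, has an integral over
`D` bounded uniformly in `z`. -/
lemma inv_norm_sub_bound (D : Set ℂ) (hD : volume D < ⊤) :
    ∃ C : ℝ, 0 ≤ C ∧ ∀ z : ℂ, IntegrableOn (fun w => ‖z - w‖⁻¹) D ∧
      ∫ w in D, ‖z - w‖⁻¹ ≤ C := by
  -- `‖z - w‖⁻¹ ≤ 1` off the unit disc about `z`
  set k : ℂ → ℝ := (Metric.ball (0 : ℂ) 1).indicator (fun w => ‖w‖⁻¹) with hk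
  have hki : Integrable k :=
    (integrable_indicator_iff measurableSet_ball).2 (integrableOn_inv_norm 1)
  have hk0 : ∀ w, 0 ≤ k w := fun w => indicator_nonneg (fun _ _ => by positivity) w
  have hb : ∀ z w : ℂ, ‖z - w‖⁻¹ ≤ k (z - w) + 1 := by
    intro z w
    by_cases h : z - w ∈ Metric.ball (0 : ℂ) 1
    · rw [hk, indicator_of_mem h]; linarith
    · have : 1 ≤ ‖z - w‖ := by simpa using h
      have h2 := inv_le_one_of_one_le₀ this
      linarith [hk0 (z - w)]
  have hfin : IntegrableOn (fun _ : ℂ => (1 : ℝ)) D := integrableOn_const hD.ne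
  have hkz : ∀ z, Integrable (fun w => k (z - w)) := fun z => hki.comp_sub_left z
  have hint : ∀ z : ℂ, IntegrableOn (fun w => ‖z - w‖⁻¹) D := by
    intro z
    refine Integrable.mono' ((hkz z).integrableOn.add hfin)
      (by fun_prop) ?_
    filter_upwards with w
    rw [norm_inv, norm_norm]
    exact hb z w
  refine ⟨(∫ w, k w) + volume.real D, ?_, fun z => ⟨hint z, ?_⟩⟩
  · exact add_nonneg (integral_nonneg hk0) measureReal_nonneg
  · calc ∫ w in D, ‖z - w‖⁻¹ ≤ ∫ w in D, (k (z - w) + 1) :=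
          integral_mono (hint z) ((hkz z).integrableOn.add hfin) (fun w => hb z w)
      _ = (∫ w in D, k (z - w)) + volume.real D := by
          rw [integral_add (hkz z).integrableOn hfin]; simp
      _ ≤ (∫ w, k (z - w)) + volume.real D := by
          gcongr ?_ + _
          exact setIntegral_le_integral (hkz z) (Filter.Eventually.of_forall fun w => hk0 _)
      _ = _ := by rw [integral_sub_left_eq_self k volume z]

/-- Joint integrability of a kernel dominated by `‖f a - y‖⁻¹ + 1`; used for every application of
Fubini. -/
lemma integrable_prod_of_kernel {α : Type*} [MeasurableSpace α] (μ : Measure α)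
    [IsFiniteMeasure μ] (D : Set ℂ) (hDm : MeasurableSet D) (hD : volume D < ⊤)
    (F : α × ℂ → ℝ) (hF : Measurable F) (f : α → ℂ) (M : ℝ) (hM : 0 ≤ M)
    (h : ∀ᵐ a ∂μ, ∀ y ∈ D, |F (a, y)| ≤ M * (‖f a - y‖⁻¹ + 1)) :
    Integrable F (μ.prod (volume.restrict D)) := by
  obtain ⟨C, hC0, hC⟩ := inv_norm_sub_bound D hD
  have hfin : IntegrableOn (fun _ : ℂ => (1 : ℝ)) D := integrableOn_const hD.ne
  have : IsFiniteMeasure (volume.restrict D) := ⟨by simpa using hD⟩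
  have hI : ∀ a, Integrable (fun y => M * (‖f a - y‖⁻¹ + 1)) (volume.restrict D) :=
    fun a => ((hC (f a)).1.add hfin).const_mul M
  have hI2 : ∀ᵐ a ∂μ, Integrable (fun y => F (a, y)) (volume.restrict D) := by
    filter_upwards [h] with a ha
    refine (hI a).mono' (hF.comp measurable_prodMk_left).aestronglyMeasurable ?_
    exact (ae_restrict_iff' hDm).2 (Filter.Eventually.of_forall fun y hy => ha y hy)
  rw [integrable_prod_iff hF.aestronglyMeasurable]
  refine ⟨hI2, ?_⟩
  refine Integrable.mono' (integrable_const (M * (C + volume.real D)))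
    hF.aestronglyMeasurable.norm.integral_prod_right' ?_
  filter_upwards [h, hI2] with a ha hia
  rw [Real.norm_of_nonneg (integral_nonneg fun _ => norm_nonneg _)]
  calc ∫ y in D, ‖F (a, y)‖ ≤ ∫ y in D, M * (‖f a - y‖⁻¹ + 1) :=
        integral_mono_ae hia.norm (hI a)
          ((ae_restrict_iff' hDm).2 (Filter.Eventually.of_forall fun y hy => ha y hy))
    _ = M * ((∫ y in D, ‖f a - y‖⁻¹) + volume.real D) := by
        rw [integral_const_mul, integral_add (hC (f a)).1 hfin]; simp
    _ ≤ _ := by gcongr; exact (hC (f a)).2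

lemma abs_log_le_inv_add {t : ℝ} (ht : 0 ≤ t) : |Real.log t| ≤ t⁻¹ + t := by
  rcases ht.eq_or_lt with rfl | ht
  · simp
  have h1 := Real.log_le_sub_one_of_pos ht
  have h2 := Real.log_le_sub_one_of_pos (inv_pos.2 ht)
  rw [Real.log_inv] at h2
  have := inv_pos.2 ht
  rw [abs_le]; constructor <;> linarith

lemma abs_log_sub_log_le {a b : ℝ} (ha : 0 < a) (hb : 0 < b) :
    |Real.log a - Real.log b| ≤ |a - b| * (a⁻¹ + b⁻¹) := by
  have key : ∀ {a b : ℝ}, 0 < a → 0 < b →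
      Real.log a - Real.log b ≤ |a - b| * (a⁻¹ + b⁻¹) := by
    intro a b ha hb
    have h := Real.log_le_sub_one_of_pos (div_pos ha hb)
    rw [Real.log_div ha.ne' hb.ne'] at h
    have h2 : a / b - 1 = (a - b) * b⁻¹ := by field_simp
    rw [h2] at h
    have h3 : (a - b) * b⁻¹ ≤ |a - b| * b⁻¹ := by
      gcongr; exact le_abs_self _
    have h4 : 0 ≤ |a - b| * a⁻¹ := by positivity
    linarith
  rw [abs_le]
  constructor
  · have := key hb ha
    rw [abs_sub_comm, add_comm] at this
    linarith
  · exact key ha hb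

/-- The logarithmic potential of `D`, i.e. `2π` times the convolution `1_D * N`. -/
def logPot (D : Set ℂ) (z : ℂ) : ℝ := ∫ w in D, Real.log ‖z - w‖

lemma bounded_data {D : Set ℂ} (hb : IsBounded D) :
    volume D < ⊤ ∧ ∃ M : ℝ, 1 ≤ M ∧ ∀ w ∈ D, ‖w‖ ≤ M := by
  refine ⟨hb.measure_lt_top, ?_⟩
  obtain ⟨M, hM⟩ := hb.exists_norm_le
  exact ⟨max M 1, le_max_right _ _, fun w hw => (hM w hw).trans (le_max_left _ _)⟩

lemma integrableOn_log_norm_sub {D : Set ℂ} (hDm : MeasurableSet D) (hb : IsBounded D)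
    (z : ℂ) : IntegrableOn (fun w => Real.log ‖z - w‖) D := by
  obtain ⟨hfin, M, hM1, hM⟩ := bounded_data hb
  obtain ⟨C, -, hC⟩ := inv_norm_sub_bound D hfin
  refine Integrable.mono' ((hC z).1.add (integrableOn_const hfin.ne (C := ‖z‖ + M)))
    (Measurable.aestronglyMeasurable (by fun_prop)) ?_
  refine (ae_restrict_iff' hDm).2 (Filter.Eventually.of_forall fun w hw => ?_)
  refine (abs_log_le_inv_add (norm_nonneg _)).trans ?_
  have := norm_sub_le z w
  have := hM w hw
  simp only [Pi.add_apply]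
  linarith

lemma logPot_lipschitz {D : Set ℂ} (hDm : MeasurableSet D) (hb : IsBounded D) :
    ∃ C : ℝ, 0 ≤ C ∧ ∀ x y : ℂ, |logPot D x - logPot D y| ≤ C * ‖x - y‖ := by
  obtain ⟨hfin, -⟩ := bounded_data hb
  obtain ⟨C, hC0, hC⟩ := inv_norm_sub_bound D hfin
  refine ⟨2 * C, by positivity, fun x y => ?_⟩
  have hae : ∀ z : ℂ, ∀ᵐ w ∂(volume.restrict D), z - w ≠ 0 := by
    intro z
    refine ae_restrict_of_ae ?_
    have : ∀ᵐ w ∂(volume : Measure ℂ), w ∉ ({z} : Set ℂ) :=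
      measure_eq_zero_iff_ae_notMem.1 (by simp)
    filter_upwards [this] with w hw h
    exact hw (by simpa using (sub_eq_zero.1 h).symm)
  unfold logPot
  rw [← integral_sub (integrableOn_log_norm_sub hDm hb x) (integrableOn_log_norm_sub hDm hb y)]
  calc |∫ w in D, (Real.log ‖x - w‖ - Real.log ‖y - w‖)|
      ≤ ∫ w in D, ‖x - y‖ * (‖x - w‖⁻¹ + ‖y - w‖⁻¹) := by
        rw [← Real.norm_eq_abs]
        refine norm_integral_le_of_norm_le (((hC x).1.add (hC y).1).const_mul _) ?_
        filter_upwards [hae x, hae y] with w h1 h2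
        refine (abs_log_sub_log_le (norm_pos_iff.2 h1) (norm_pos_iff.2 h2)).trans ?_
        gcongr
        refine (abs_norm_sub_norm_le _ _).trans ?_
        simp
    _ = ‖x - y‖ * ((∫ w in D, ‖x - w‖⁻¹) + ∫ w in D, ‖y - w‖⁻¹) := by
        rw [integral_const_mul, integral_add (hC x).1 (hC y).1]
    _ ≤ ‖x - y‖ * (C + C) := by
        gcongr
        exacts [(hC x).2, (hC y).2]
    _ = _ := by ring

/-! ### Mean value property of the logarithmic potential -/

lemma integral_mul_log_div (r : ℝ) (hr : 0 < r) :
    ∫ s in (0 : ℝ)..r, s * (Real.log r - Real.log s) = r ^ 2 / 4 := by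
  have hc : Continuous fun s : ℝ => s * Real.log s := Real.continuous_mul_log
  have h := intervalIntegral.integral_eq_sub_of_hasDerivAt_of_le (a := 0) (b := r)
    (f := fun s => s ^ 2 / 2 * Real.log r - s * (s * Real.log s) / 2 + s ^ 2 / 4)
    (f' := fun s => s * (Real.log r - Real.log s)) hr.le (by fun_prop) ?_ ?_
  · rw [h]; ring
  · intro s hs
    have hs0 : s ≠ 0 := hs.1.ne'
    have h1 : HasDerivAt (fun s : ℝ => s ^ 2) (2 * s) s := by
      simpa using hasDerivAt_pow 2 s
    have h2 := Real.hasDerivAt_mul_log hs0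
    have h3 := (((h1.div_const 2).mul_const (Real.log r)).sub
      (((hasDerivAt_id s).mul h2).div_const 2)).add (h1.div_const 4)
    refine (h3.congr_deriv ?_)
    simp
    ring
  · apply Continuous.intervalIntegrable
    have : (fun s : ℝ => s * (Real.log r - Real.log s))
        = fun s => s * Real.log r - s * Real.log s := by ext; ring
    rw [this]; fun_prop

lemma integral_ball_log (r : ℝ) (hr : 0 < r) (z : ℂ) :
    ∫ w in Metric.ball z r, (Real.log r - Real.log ‖z - w‖) = π * r ^ 2 / 2 := by
  set f : ℝ → ℝ := (Iio r).indicator (fun s => Real.log r - Real.log s) with hf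
  have h1 : ∫ w in Metric.ball z r, (Real.log r - Real.log ‖z - w‖) = ∫ w : ℂ, f ‖w‖ := by
    rw [← integral_indicator measurableSet_ball, ← integral_sub_left_eq_self _ volume z]
    congr 1
    ext w
    by_cases h : ‖w‖ < r
    · rw [hf, indicator_of_mem (by simpa [dist_eq_norm] using h), indicator_of_mem (by simpa using h)]
      simp
    · rw [hf, indicator_of_notMem (by simpa [dist_eq_norm] using h),
        indicator_of_notMem (by simpa using h)]
  have h2 : ∫ y in Ioi (0 : ℝ), y * f y = r ^ 2 / 4 := by
    rw [← integral_mul_log_div r hr, intervalIntegral.integral_of_le hr.le,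
      ← integral_Ioc_eq_integral_Ioo.symm, ← integral_indicator measurableSet_Ioi,
      ← integral_indicator measurableSet_Ioo]
    congr 1
    ext y
    by_cases h0 : 0 < y <;> by_cases h : y < r <;> simp [hf, indicator, h0, h]
  rw [h1, integral_fun_norm_addHaar volume f]
  have h3 : (volume : Measure ℂ).real (Metric.ball 0 1) = π := by
    simp [Measure.real, Complex.volume_ball]
  rw [h3]
  simp only [Complex.finrank_real_complex, Nat.add_one_sub_one, pow_one, smul_eq_mul, nsmul_eq_mul]
  rw [h2]
  push_cast
  ring

lemma circleAverage_log_norm_eq (z w : ℂ) (r : ℝ) (hr : 0 < r) :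
    circleAverage (fun x => Real.log ‖x - w‖) z r = Real.log ‖z - w‖ +
      (Metric.ball z r).indicator (fun w => Real.log r - Real.log ‖z - w‖) w := by
  rw [circleAverage_log_norm_sub_const_eq_log_radius_add_posLog hr.ne']
  by_cases h : w ∈ Metric.ball z r
  · rw [indicator_of_mem h, (posLog_eq_zero_iff _).2]
    · ring
    · rw [Metric.mem_ball, dist_comm, dist_eq_norm] at h
      rw [abs_of_nonneg (by positivity), inv_mul_le_one₀ hr]
      exact h.le
  · rw [indicator_of_notMem h]
    rw [Metric.mem_ball, dist_comm, dist_eq_norm, not_lt] at h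
    rw [posLog_eq_log, Real.log_mul (by positivity) (by linarith), Real.log_inv]
    · ring
    · rw [abs_of_nonneg (by positivity), ← div_eq_inv_mul, one_le_div hr]
      exact h

/-- Mean value formula expressing `Δ (logPot D) = 2π` in `D`. -/
lemma circleAverage_logPot {D : Set ℂ} (hDm : MeasurableSet D) (hb : IsBounded D)
    (z : ℂ) (r : ℝ) (hr : 0 < r) (hsub : Metric.ball z r ⊆ D) :
    circleAverage (logPot D) z r = logPot D z + π * r ^ 2 / 2 := by
  obtain ⟨hfin, M, hM1, hM⟩ := bounded_data hb
  have hint : Integrable (fun q : ℝ × ℂ => Real.log ‖circleMap z r q.1 - q.2‖)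
      ((volume.restrict (Ioc 0 (2 * π))).prod (volume.restrict D)) := by
    refine integrable_prod_of_kernel _ D hDm hfin _ ?_ (circleMap z r) (‖z‖ + r + M)
      (by positivity) ?_
    · have : Measurable (circleMap z r) := (continuous_circleMap z r).measurable
      fun_prop
    · refine Filter.Eventually.of_forall fun θ y hy => ?_
      refine (abs_log_le_inv_add (norm_nonneg _)).trans ?_
      have h1 := norm_sub_le (circleMap z r θ) y
      have h2 : ‖circleMap z r θ‖ ≤ ‖z‖ + r := by
        have : ‖circleMap z r θ - z‖ = r := by simp [abs_of_pos hr]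
        have h3 := norm_add_le z (circleMap z r θ - z)
        rw [add_sub_cancel] at h3
        linarith
      have h3 := hM y hy
      have h4 : 0 ≤ ‖circleMap z r θ - y‖⁻¹ := by positivity
      have h5 : 1 ≤ ‖z‖ + r + M := by linarith [norm_nonneg z]
      nlinarith
  have hlog := integrableOn_log_norm_sub hDm hb z
  have hind : Integrable ((Metric.ball z r).indicator
      (fun w => Real.log r - Real.log ‖z - w‖)) := by
    rw [integrable_indicator_iff measurableSet_ball]
    exact (integrableOn_const measure_ball_lt_top.ne).sub
      (integrableOn_log_norm_sub measurableSet_ball Metric.isBounded_ball z)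
  calc circleAverage (logPot D) z r
      = (2 * π)⁻¹ * ∫ θ in Ioc 0 (2 * π), ∫ w in D, Real.log ‖circleMap z r θ - w‖ := by
        rw [circleAverage_def, intervalIntegral.integral_of_le (by positivity)]
        rfl
    _ = ∫ w in D, (2 * π)⁻¹ * ∫ θ in Ioc 0 (2 * π), Real.log ‖circleMap z r θ - w‖ := by
        rw [integral_integral_swap hint, integral_const_mul]
    _ = ∫ w in D, (Real.log ‖z - w‖ +
          (Metric.ball z r).indicator (fun w => Real.log r - Real.log ‖z - w‖) w) := by
        congr 1
        ext w
        rw [← circleAverage_log_norm_eq z w r hr, circleAverage_def,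
          intervalIntegral.integral_of_le (by positivity)]
        rfl
    _ = _ := by
        rw [integral_add hlog hind.integrableOn, integral_indicator measurableSet_ball,
          Measure.restrict_restrict measurableSet_ball, inter_eq_left.2 hsub,
          integral_ball_log r hr z]
        rfl

lemma logPot_ball_rotate (z c : ℂ) (r : ℝ) (u : Circle) :
    logPot (Metric.ball c r) (c + u * z) = logPot (Metric.ball c r) (c + z) := by
  unfold logPot
  have key : ∀ x : ℂ, ∫ w in Metric.ball c r, Real.log ‖c + x - w‖
      = ∫ w, (Metric.ball (0 : ℂ) r).indicator (fun w => Real.log ‖x - w‖) w := by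
    intro x
    rw [← integral_indicator measurableSet_ball, ← integral_add_left_eq_self _ c]
    congr 1
    ext w
    by_cases h : ‖w‖ < r
    · rw [indicator_of_mem (by simpa [dist_eq_norm] using h),
        indicator_of_mem (by simpa using h)]
      congr 2; ring
    · rw [indicator_of_notMem (by simpa [dist_eq_norm] using h),
        indicator_of_notMem (by simpa using h)]
  rw [key, key, ← (rotation u).measurePreserving.integral_comp
    (rotation u).toHomeomorph.measurableEmbedding]
  congr 1
  ext w
  have hn : ‖rotation u w‖ = ‖w‖ := (rotation u).norm_map w
  have hs : (u : ℂ) * z - rotation u w = (u : ℂ) * (z - w) := by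
    rw [mul_sub]; rfl
  by_cases h : ‖w‖ < r
  · rw [indicator_of_mem (by rw [mem_ball_zero_iff, hn]; exact h),
      indicator_of_mem (by simpa using h), hs, norm_mul, Circle.norm_coe, one_mul]
  · rw [indicator_of_notMem (by rw [mem_ball_zero_iff, hn]; exact h),
      indicator_of_notMem (by simpa using h)]

/-- The potential of a disc is a radial paraboloid inside the disc. -/
lemma logPot_ball (c x : ℂ) (R : ℝ) (hx : ‖x‖ < R) :
    logPot (Metric.ball c R) (c + x) = logPot (Metric.ball c R) c + π * ‖x‖ ^ 2 / 2 := by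
  rcases eq_or_ne x 0 with rfl | hx0
  · simp
  have hpos : 0 < ‖x‖ := norm_pos_iff.2 hx0
  rw [← circleAverage_logPot measurableSet_ball Metric.isBounded_ball c ‖x‖ hpos
    (Metric.ball_subset_ball hx.le)]
  -- by rotation invariance the potential is constant on the circle of radius `‖x‖`
  have h : EqOn (logPot (Metric.ball c R)) (fun _ => logPot (Metric.ball c R) (c + x))
      (Metric.sphere c |‖x‖|) := by
    intro y hy
    rw [abs_norm, mem_sphere_iff_norm] at hy
    have hu : (y - c) / x ∈ Submonoid.unitSphere ℂ := by
      simp [Submonoid.unitSphere, hy, hpos.ne']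
    have := logPot_ball_rotate x c R ⟨(y - c) / x, hu⟩
    simp only at this ⊢
    rw [← this]
    congr 1
    field_simp
    ring
  rw [circleAverage_congr_sphere h, circleAverage_const]

/-! ### First derivative of the logarithmic potential -/

lemma abs_inner_div_le (v e : ℂ) : |inner ℝ v e / ‖v‖ ^ 2| ≤ ‖e‖ * ‖v‖⁻¹ := by
  rcases eq_or_ne v 0 with rfl | hv
  · simp
  have hpos : 0 < ‖v‖ := norm_pos_iff.2 hv
  rw [abs_div, abs_of_nonneg (sq_nonneg ‖v‖), div_le_iff₀ (by positivity)]
  refine (abs_real_inner_le_norm v e).trans (le_of_eq ?_)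
  field_simp

lemma integrableOn_gradKernel {D : Set ℂ} (hb : IsBounded D) (x e : ℂ) :
    IntegrableOn (fun w => inner ℝ (x - w) e / ‖x - w‖ ^ 2) D := by
  obtain ⟨C, -, hC⟩ := inv_norm_sub_bound D (bounded_data hb).1
  refine ((hC x).1.const_mul ‖e‖).mono' (Measurable.aestronglyMeasurable (by fun_prop)) ?_
  filter_upwards with w
  exact abs_inner_div_le _ _

/-- By oddness of the kernel, the field of a disc vanishes at its centre. -/
lemma integral_ball_gradKernel (x e : ℂ) (R : ℝ) :
    ∫ w in Metric.ball x R, inner ℝ (x - w) e / ‖x - w‖ ^ 2 = 0 := by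
  have h : ∫ w in Metric.ball x R, inner ℝ (x - w) e / ‖x - w‖ ^ 2
      = -∫ w in Metric.ball x R, inner ℝ (x - w) e / ‖x - w‖ ^ 2 := by
    conv_lhs => rw [← integral_indicator measurableSet_ball,
      ← integral_sub_left_eq_self _ volume (2 * x)]
    rw [← integral_neg, ← integral_indicator measurableSet_ball]
    congr 1
    ext w
    have hw : x - (2 * x - w) = -(x - w) := by ring
    have hm : 2 * x - w ∈ Metric.ball x R ↔ w ∈ Metric.ball x R := by
      rw [Metric.mem_ball', Metric.mem_ball', dist_eq_norm, dist_eq_norm, hw, norm_neg]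
    by_cases hwm : w ∈ Metric.ball x R
    · rw [indicator_of_mem (hm.2 hwm), indicator_of_mem hwm, hw, inner_neg_left, norm_neg, neg_div]
    · rw [indicator_of_notMem (fun h => hwm (hm.1 h)), indicator_of_notMem hwm]
  linarith

lemma hasDerivAt_log_norm (v e : ℂ) (t : ℝ) (h : v + t • e ≠ 0) :
    HasDerivAt (fun s : ℝ => Real.log ‖v + s • e‖)
      (inner ℝ (v + t • e) e / ‖v + t • e‖ ^ 2) t := by
  have h1 : HasDerivAt (fun s : ℝ => v + s • e) e t := by
    simpa using ((hasDerivAt_id t).smul_const e).const_add v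
  have h2 := (h1.norm_sq.log (by positivity)).div_const 2
  have h3 : (fun s : ℝ => Real.log (‖v + s • e‖ ^ 2) / 2)
      = fun s : ℝ => Real.log ‖v + s • e‖ := by
    ext s; rw [Real.log_pow]; push_cast; ring
  rw [h3] at h2
  refine h2.congr_deriv ?_
  ring

/-- Inside `D` the directional derivative of the potential is obtained by differentiating
under the integral sign. A small disc around the point is split off; its potential is explicit. -/
lemma hasDerivAt_logPot {D : Set ℂ} (hD : IsOpen D) (hb : IsBounded D) {x : ℂ} (hx : x ∈ D)
    (e : ℂ) : HasDerivAt (fun t : ℝ => logPot D (x + t • e))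
      (∫ w in D, inner ℝ (x - w) e / ‖x - w‖ ^ 2) 0 := by
  obtain ⟨R, hR, hsub⟩ := Metric.isOpen_iff.1 hD x hx
  set B := Metric.ball x R with hB
  have hBm : MeasurableSet B := measurableSet_ball
  have hdiffm : MeasurableSet (D \ B) := hD.measurableSet.diff hBm
  have hdb : IsBounded (D \ B) := hb.subset sdiff_subset
  have hsplit : ∀ f : ℂ → ℝ, IntegrableOn f D →
      ∫ w in D, f w = (∫ w in B, f w) + ∫ w in D \ B, f w := by
    intro f hf
    rw [← setIntegral_union disjoint_sdiff_self_right hdiffm (hf.mono_set hsub)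
      (hf.mono_set sdiff_subset), union_sdiff_cancel hsub]
  have hs : Metric.ball (0 : ℝ) (R / (2 * (‖e‖ + 1))) ∈ nhds (0 : ℝ) :=
    Metric.ball_mem_nhds _ (by positivity)
  have hsm : ∀ t ∈ Metric.ball (0 : ℝ) (R / (2 * (‖e‖ + 1))), ‖t • e‖ < R / 2 := by
    intro t ht
    rw [mem_ball_zero_iff, lt_div_iff₀ (by positivity)] at ht
    rw [norm_smul]
    nlinarith [norm_nonneg t, norm_nonneg e]
  have hlow : ∀ w ∈ D \ B, ∀ t ∈ Metric.ball (0 : ℝ) (R / (2 * (‖e‖ + 1))),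
      R / 2 ≤ ‖x - w + t • e‖ := by
    intro w hw t ht
    have h1 : R ≤ ‖x - w‖ := by
      have := hw.2
      rwa [hB, Metric.mem_ball', dist_eq_norm, not_lt] at this
    have h2 := hsm t ht
    have h3 := norm_sub_le (x - w + t • e) (t • e)
    rw [add_sub_cancel_right] at h3
    linarith
  -- outside `B` the kernel is smooth and its derivative bounded, for small `t`
  have h1 : HasDerivAt (fun t : ℝ => ∫ w in D \ B, Real.log ‖x - w + t • e‖)
      (∫ w in D \ B, inner ℝ (x - w + (0 : ℝ) • e) e / ‖x - w + (0 : ℝ) • e‖ ^ 2) 0 := by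
    refine (hasDerivAt_integral_of_dominated_loc_of_deriv_le
      (F' := fun t w => inner ℝ (x - w + t • e) e / ‖x - w + t • e‖ ^ 2)
      (bound := fun _ => ‖e‖ * (R / 2)⁻¹) hs ?_ ?_ ?_ ?_ ?_ ?_).2
    · exact Filter.Eventually.of_forall fun t =>
        Measurable.aestronglyMeasurable (by fun_prop)
    · simpa [IntegrableOn] using integrableOn_log_norm_sub hdiffm hdb x
    · exact Measurable.aestronglyMeasurable (by fun_prop)
    · refine (ae_restrict_iff' hdiffm).2 (Filter.Eventually.of_forall fun w hw t ht => ?_)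
      refine (abs_inner_div_le _ _).trans ?_
      gcongr
      exact hlow w hw t ht
    · exact integrableOn_const hdb.measure_lt_top.ne
    · refine (ae_restrict_iff' hdiffm).2 (Filter.Eventually.of_forall fun w hw t ht => ?_)
      refine hasDerivAt_log_norm _ _ _ (norm_pos_iff.1 ?_)
      exact lt_of_lt_of_le (by positivity) (hlow w hw t ht)
  -- inside `B` the potential is `logPot B x + π ‖t • e‖² / 2`, which is stationary at `t = 0`
  have h2 : HasDerivAt (fun t : ℝ => logPot B x + π * ‖t • e‖ ^ 2 / 2) 0 0 := by
    have h : HasDerivAt (fun t : ℝ => logPot B x + π * (‖e‖ ^ 2 * t ^ 2) / 2) 0 0 := by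
      have := ((((hasDerivAt_pow 2 (0 : ℝ)).const_mul (‖e‖ ^ 2)).const_mul π).div_const 2).const_add
        (logPot B x)
      simpa using this
    refine h.congr_of_eventuallyEq (Filter.Eventually.of_forall fun t => ?_)
    simp only [norm_smul, mul_pow, Real.norm_eq_abs, sq_abs]
    ring
  have h3 : HasDerivAt (fun t : ℝ => logPot D (x + t • e)) (0 +
      ∫ w in D \ B, inner ℝ (x - w + (0 : ℝ) • e) e / ‖x - w + (0 : ℝ) • e‖ ^ 2) 0 := by
    refine (h2.add h1).congr_of_eventuallyEq ?_
    filter_upwards [hs] with t ht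
    have h4 : logPot D (x + t • e) = logPot B (x + t • e) + logPot (D \ B) (x + t • e) :=
      hsplit _ (integrableOn_log_norm_sub hD.measurableSet hb _)
    rw [h4, hB, logPot_ball x (t • e) R (by linarith [hsm t ht])]
    simp only [Pi.add_apply]
    congr 1
    unfold logPot
    congr 1
    ext w
    congr 2
    ring
  refine h3.congr_deriv ?_
  rw [hsplit _ (integrableOn_gradKernel hb x e), hB, integral_ball_gradKernel]
  simp

/-- The virial of the potential: `∫_D x · ∇(logPot D) = |D|²/2`. -/
lemma integral_integral_gradKernel {D : Set ℂ} (hD : IsOpen D) (hb : IsBounded D) :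
    Integrable (fun q : ℂ × ℂ => inner ℝ (q.1 - q.2) q.1 / ‖q.1 - q.2‖ ^ 2)
      ((volume.restrict D).prod (volume.restrict D)) ∧
    ∫ x in D, ∫ w in D, inner ℝ (x - w) x / ‖x - w‖ ^ 2 = volume.real D ^ 2 / 2 := by
  obtain ⟨hfin, M, hM1, hM⟩ := bounded_data hb
  have : IsFiniteMeasure (volume.restrict D) := ⟨by simpa using hfin⟩
  have hint : Integrable (fun q : ℂ × ℂ => inner ℝ (q.1 - q.2) q.1 / ‖q.1 - q.2‖ ^ 2)
      ((volume.restrict D).prod (volume.restrict D)) := by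
    refine integrable_prod_of_kernel _ D hD.measurableSet hfin _ (by fun_prop) id M
      (by linarith) ?_
    refine (ae_restrict_iff' hD.measurableSet).2 (Filter.Eventually.of_forall fun x hx y hy => ?_)
    refine (abs_inner_div_le _ _).trans ?_
    have h0 : 0 ≤ ‖x - y‖⁻¹ := by positivity
    have := hM x hx
    simp only [id]
    nlinarith [norm_nonneg x]
  refine ⟨hint, ?_⟩
  have hswap := integral_integral_swap (f := fun x w : ℂ => inner ℝ (x - w) x / ‖x - w‖ ^ 2) hint
  have hint2 : Integrable (fun q : ℂ × ℂ => inner ℝ (q.2 - q.1) q.2 / ‖q.2 - q.1‖ ^ 2)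
      ((volume.restrict D).prod (volume.restrict D)) := hint.swap
  -- exchanging the variables and adding, the kernel becomes `1` off the diagonal
  have hsum : (∫ x in D, ∫ w in D, inner ℝ (x - w) x / ‖x - w‖ ^ 2) +
      ∫ x in D, ∫ w in D, inner ℝ (w - x) w / ‖w - x‖ ^ 2 = volume.real D ^ 2 := by
    rw [integral_integral hint, integral_integral hint2, ← integral_add hint hint2]
    refine (integral_prod _ (hint.add hint2)).trans ?_
    have hone : ∀ x : ℂ, ∫ w in D, (inner ℝ (x - w) x / ‖x - w‖ ^ 2
        + inner ℝ (w - x) w / ‖w - x‖ ^ 2) = volume.real D := by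
      intro x
      have hae : ∀ᵐ w ∂(volume.restrict D), inner ℝ (x - w) x / ‖x - w‖ ^ 2
        + inner ℝ (w - x) w / ‖w - x‖ ^ 2 = (1 : ℝ) := by
        refine ae_restrict_of_ae ?_
        have : ∀ᵐ w ∂(volume : Measure ℂ), w ∉ ({x} : Set ℂ) :=
          measure_eq_zero_iff_ae_notMem.1 (by simp)
        filter_upwards [this] with w hw
        have hne : x - w ≠ 0 := fun h => hw (by simpa using (sub_eq_zero.1 h).symm)
        have hpos : 0 < ‖x - w‖ := norm_pos_iff.2 hne
        rw [← norm_neg (w - x), neg_sub, ← add_div, div_eq_one_iff_eq (by positivity),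
          ← real_inner_self_eq_norm_sq, inner_sub_right (x - w) x w, ← neg_sub x w, inner_neg_left]
        ring
      rw [integral_congr_ae hae]
      simp
    simp only [Pi.add_apply, hone]
    simp [sq]
  linarith

/-! ### Uniqueness for the Dirichlet problem via the mean value property -/

lemma circleAverage_norm_sq (x : ℂ) (r : ℝ) :
    circleAverage (fun z : ℂ => ‖z‖ ^ 2) x r = ‖x‖ ^ 2 + r ^ 2 := by
  -- on the circle, `‖z‖²` agrees with a harmonic function
  have h : EqOn (fun z : ℂ => ‖z‖ ^ 2)
      (fun z : ℂ => (((r : ℂ) ^ 2 - (‖x‖ : ℂ) ^ 2) + 2 * (starRingEnd ℂ x * z)).re)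
      (Metric.sphere x |r|) := by
    intro z hz
    rw [mem_sphere_iff_norm] at hz
    have h1 : ‖z - x‖ ^ 2 = r ^ 2 := by rw [hz, sq_abs]
    simp only [← Complex.normSq_eq_norm_sq, Complex.normSq_apply, Complex.sub_re,
      Complex.sub_im] at h1
    have h2 : (‖x‖ : ℂ) ^ 2 = ((x.re * x.re + x.im * x.im : ℝ) : ℂ) := by
      rw [← Complex.normSq_apply, Complex.normSq_eq_norm_sq]; push_cast; rfl
    have h3 : (r : ℂ) ^ 2 = ((r ^ 2 : ℝ) : ℂ) := by push_cast; rfl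
    simp only [← Complex.normSq_eq_norm_sq, Complex.normSq_apply, h2, h3, Complex.add_re,
      Complex.sub_re, Complex.ofReal_re, Complex.mul_re, Complex.re_ofNat, Complex.im_ofNat,
      Complex.conj_re, Complex.conj_im]
    linarith
  rw [circleAverage_congr_sphere h, InnerProductSpace.HarmonicOnNhd.circleAverage_eq]
  · have h2 : (‖x‖ : ℂ) ^ 2 = ((‖x‖ ^ 2 : ℝ) : ℂ) := by push_cast; rfl
    have h3 : (r : ℂ) ^ 2 = ((r ^ 2 : ℝ) : ℂ) := by push_cast; rfl
    rw [Complex.conj_mul', h2, h3]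
    simp only [Complex.add_re, Complex.sub_re, Complex.ofReal_re, Complex.mul_re,
      Complex.re_ofNat, Complex.im_ofNat]
    ring
  · intro z _
    exact AnalyticAt.harmonicAt_re (by fun_prop)

/-- Weak maximum principle for functions whose value at each interior point is the average over
some circle in `D`. -/
lemma nonpos_of_circleAverage {D : Set ℂ} (hD : IsOpen D) (hb : IsBounded D) (u : ℂ → ℝ)
    (hc : ContinuousOn u (closure D)) (h0 : ∀ x ∈ frontier D, u x = 0)
    (hmv : ∀ x ∈ D, ∃ r > 0, Metric.closedBall x r ⊆ D ∧ circleAverage u x r = u x) :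
    ∀ x ∈ D, u x ≤ 0 := by
  intro x₁ hx₁
  by_contra! hpos
  obtain ⟨-, M, hM1, hM⟩ := bounded_data hb.closure
  set ε := u x₁ / (2 * M ^ 2) with hε
  have hε0 : 0 < ε := by positivity
  have hεM : ε * M ^ 2 < u x₁ := by
    have : ε * M ^ 2 = u x₁ / 2 := by rw [hε]; field_simp
    linarith
  -- a strictly subharmonic perturbation cannot peak in the interior
  have hK : IsCompact (closure D) := hb.isCompact_closure
  have hwc : ContinuousOn (fun z => u z + ε * ‖z‖ ^ 2) (closure D) := by fun_prop
  obtain ⟨x₀, hx₀, hmax⟩ := hK.exists_isMaxOn ⟨x₁, subset_closure hx₁⟩ hwc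
  have h1 : u x₁ + ε * ‖x₁‖ ^ 2 ≤ u x₀ + ε * ‖x₀‖ ^ 2 := hmax (subset_closure hx₁)
  have h2 : ε * ‖x₀‖ ^ 2 ≤ ε * M ^ 2 := by
    have := hM x₀ hx₀
    gcongr
  have h3 : 0 ≤ ε * ‖x₁‖ ^ 2 := by positivity
  have hx₀D : x₀ ∈ D := by
    by_contra hn
    have := h0 x₀ ⟨hx₀, by rwa [hD.interior_eq]⟩
    linarith
  obtain ⟨r, hr, hsub, havg⟩ := hmv x₀ hx₀D
  have hsph : Metric.sphere x₀ |r| ⊆ closure D := by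
    rw [abs_of_pos hr]
    exact Metric.sphere_subset_closedBall.trans (hsub.trans subset_closure)
  have hi1 : CircleIntegrable u x₀ r := (hc.mono hsph).circleIntegrable'
  have hi2 : CircleIntegrable (fun z : ℂ => ε * ‖z‖ ^ 2) x₀ r :=
    ContinuousOn.circleIntegrable' (by fun_prop)
  have hle : circleAverage (u + fun z : ℂ => ε * ‖z‖ ^ 2) x₀ r ≤ u x₀ + ε * ‖x₀‖ ^ 2 :=
    circleAverage_mono_on_of_le_circle (hi1.add hi2) fun z hz => hmax (hsph hz)
  rw [circleAverage_add hi1 hi2, havg] at hle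
  have h4 : circleAverage (fun z : ℂ => ε * ‖z‖ ^ 2) x₀ r = ε * (‖x₀‖ ^ 2 + r ^ 2) := by
    rw [← circleAverage_norm_sq]
    exact circleAverage_fun_smul (a := ε) (f := fun z : ℂ => ‖z‖ ^ 2)
  rw [h4] at hle
  have : 0 < ε * r ^ 2 := by positivity
  linarith

lemma eq_zero_of_circleAverage {D : Set ℂ} (hD : IsOpen D) (hb : IsBounded D) (u : ℂ → ℝ)
    (hc : ContinuousOn u (closure D)) (h0 : ∀ x ∈ frontier D, u x = 0)
    (hmv : ∀ x ∈ D, ∃ r > 0, Metric.closedBall x r ⊆ D ∧ circleAverage u x r = u x) :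
    ∀ x ∈ D, u x = 0 := by
  intro x hx
  refine le_antisymm (nonpos_of_circleAverage hD hb u hc h0 hmv x hx) ?_
  have := nonpos_of_circleAverage hD hb (-u) hc.neg (by simpa using h0) ?_ x hx
  · simpa using this
  · intro y hy
    obtain ⟨r, hr, hs, ha⟩ := hmv y hy
    refine ⟨r, hr, hs, ?_⟩
    rw [Pi.neg_apply, ← ha]
    have := circleAverage_fun_smul (a := (-1 : ℝ)) (f := u) (c := y) (R := r)
    simpa [Pi.neg_def] using this

/-- Mean value formula for a `C²` function with `Δ q = -2`. -/
lemma circleAverage_of_laplacian {D : Set ℂ} (hD : IsOpen D) (q : ℂ → ℝ)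
    (hq : ContDiffOn ℝ 2 q D) (hlap : ∀ z ∈ D, Laplacian.laplacian q z = -2)
    (x : ℂ) (r : ℝ) (hr : 0 < r) (hsub : Metric.closedBall x r ⊆ D) :
    circleAverage q x r = q x - r ^ 2 / 2 := by
  set n : ℂ → ℝ := fun z => (1 / 2 : ℝ) • ‖z‖ ^ 2 with hn
  have hnC : ContDiff ℝ 2 n := (contDiff_norm_sq ℝ).const_smul _
  have hnl : ∀ z, Laplacian.laplacian n z = 2 := by
    intro z
    have hfd : fderiv ℝ n = fun z => innerSL ℝ z := by
      ext z v
      rw [hn, fderiv_fun_const_smul ((contDiff_norm_sq ℝ (n := 1)).differentiable (by simp) z),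
        fderiv_norm_sq_apply]
      simp
      ring
    rw [InnerProductSpace.laplacian_eq_iteratedFDeriv_complexPlane]
    simp only [iteratedFDeriv_two_apply, hfd]
    have : fderiv ℝ (fun z : ℂ => innerSL ℝ z) z = innerSL ℝ :=
      (innerSL ℝ : ℂ →L[ℝ] ℂ →L[ℝ] ℝ).fderiv
    rw [this]
    change inner ℝ (1 : ℂ) 1 + inner ℝ Complex.I Complex.I = 2
    simp only [real_inner_self_eq_norm_sq, norm_one, Complex.norm_I]
    norm_num
  have hqat : ∀ z ∈ D, ContDiffAt ℝ 2 q z := fun z hz => hq.contDiffAt (hD.mem_nhds hz)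
  have hharm : InnerProductSpace.HarmonicOnNhd (q + n) (Metric.closedBall x |r|) := by
    rw [abs_of_pos hr]
    intro z hz
    refine ⟨(hqat z (hsub hz)).add hnC.contDiffAt, ?_⟩
    filter_upwards [hD.mem_nhds (hsub hz)] with y hy
    rw [(hqat y hy).laplacian_add hnC.contDiffAt, hlap y hy, hnl]
    simp
  have h := hharm.circleAverage_eq
  have hi : CircleIntegrable q x r := by
    apply ContinuousOn.circleIntegrable'
    rw [abs_of_pos hr]
    exact hq.continuousOn.mono (Metric.sphere_subset_closedBall.trans hsub)
  rw [circleAverage_add hi (hnC.continuous.continuousOn.circleIntegrable'), hn,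
    circleAverage_fun_smul, circleAverage_norm_sq] at h
  simp only [Pi.add_apply, smul_eq_mul] at h
  linarith

/-! ### The integral identity for a Lipschitz function vanishing on the boundary -/

/-- A Lipschitz function vanishing on `∂D`, cut off by the indicator of the open set `D`, is still
Lipschitz: a segment leaving `D` crosses `∂D`. -/
lemma lipschitz_indicator {D : Set ℂ} (hD : IsOpen D) (g : ℂ → ℝ) (C : ℝ) (hC : 0 ≤ C)
    (hg : ∀ x ∈ closure D, ∀ y ∈ closure D, |g x - g y| ≤ C * ‖x - y‖)
    (h0 : ∀ x ∈ frontier D, g x = 0) :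
    LipschitzWith C.toNNReal (D.indicator g) := by
  have key : ∀ x ∈ D, ∀ y ∉ D, |g x| ≤ C * ‖x - y‖ := by
    intro x hx y hy
    obtain ⟨z, hz, hzf⟩ : (segment ℝ x y ∩ frontier D).Nonempty := by
      by_contra hne
      rw [not_nonempty_iff_eq_empty] at hne
      have hconn : IsPreconnected (segment ℝ x y) := (convex_segment x y).isPreconnected
      have hsub : segment ℝ x y ⊆ D ∪ (closure D)ᶜ := by
        intro z hz
        by_cases hzD : z ∈ D
        · exact Or.inl hzD
        · refine Or.inr fun hzc => ?_
          have : z ∈ segment ℝ x y ∩ frontier D := ⟨hz, hzc, by rwa [hD.interior_eq]⟩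
          rw [hne] at this
          exact this
      have hyc : y ∈ (closure D)ᶜ := (hsub (right_mem_segment ℝ x y)).resolve_left hy
      obtain ⟨z, -, hz1, hz2⟩ := hconn D (closure D)ᶜ hD isClosed_closure.isOpen_compl hsub
        ⟨x, left_mem_segment ℝ x y, hx⟩ ⟨y, right_mem_segment ℝ x y, hyc⟩
      exact hz2 (subset_closure hz1)
    have h1 := hg x (subset_closure hx) z hzf.1
    rw [h0 z hzf, sub_zero] at h1
    have h2 : ‖x - z‖ ≤ ‖x - y‖ := by
      have := dist_add_dist_of_mem_segment hz
      rw [← dist_eq_norm, ← dist_eq_norm]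
      linarith [dist_nonneg (x := z) (y := y)]
    exact h1.trans (by gcongr)
  refine LipschitzWith.of_dist_le_mul fun x y => ?_
  rw [Real.coe_toNNReal _ hC, Real.dist_eq, dist_eq_norm]
  by_cases hx : x ∈ D <;> by_cases hy : y ∈ D
  · simpa [hx, hy] using hg x (subset_closure hx) y (subset_closure hy)
  · simpa [hx, hy] using key x hx y hy
  · rw [norm_sub_rev]
    simpa [hx, hy] using key y hy x hx
  · simp only [hx, hy, not_false_eq_true, indicator_of_notMem, sub_self, abs_zero]
    positivity

/-- Integration by parts in the direction `e` for a function `g` that vanishes on `∂D` and has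
directional derivative `G` along `-e` inside `D`. -/
lemma integral_eq_integral_deriv_mul {D : Set ℂ} (hD : IsOpen D) (hb : IsBounded D)
    (hnull : volume (frontier D) = 0) (g : ℂ → ℝ) (C : ℝ) (hC : 0 ≤ C)
    (hg : ∀ x ∈ closure D, ∀ y ∈ closure D, |g x - g y| ≤ C * ‖x - y‖)
    (h0 : ∀ x ∈ frontier D, g x = 0) (e : ℂ) (he : ‖e‖ = 1) (G : ℂ → ℝ)
    (hG : ∀ x ∈ D, HasDerivAt (fun t : ℝ => g (x + t • (-e))) (G x) 0) :
    ∫ x in D, g x = ∫ x in D, G x * inner ℝ e x := by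
  have hlip := lipschitz_indicator hD g C hC hg h0
  have hcs : HasCompactSupport (D.indicator g) := by
    refine HasCompactSupport.of_support_subset_isCompact hb.isCompact_closure ?_
    exact support_indicator_subset.trans subset_closure
  have hlin : LipschitzWith ‖(innerSL ℝ e : ℂ →L[ℝ] ℝ)‖₊ (fun x : ℂ => inner ℝ e x) :=
    (innerSL ℝ e : ℂ →L[ℝ] ℝ).lipschitz
  have h := hlin.integral_lineDeriv_mul_eq (μ := volume) hlip hcs e
  have h1 : ∀ x : ℂ, lineDeriv ℝ (fun x : ℂ => inner ℝ e x) x e = 1 := by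
    intro x
    have : HasDerivAt (fun t : ℝ => inner ℝ e (x + t • e)) (1 : ℝ) 0 := by
      have h3 : (fun t : ℝ => inner ℝ e (x + t • e)) = fun t : ℝ => inner ℝ e x + t := by
        ext t
        rw [inner_add_right, real_inner_smul_right, real_inner_self_eq_norm_sq, he]
        ring
      rw [h3]
      simpa using (hasDerivAt_id (0 : ℝ)).const_add (inner ℝ e x)
    exact this.deriv
  simp only [h1, one_mul] at h
  rw [integral_indicator hD.measurableSet] at h
  rw [h, ← integral_indicator hD.measurableSet]
  refine integral_congr_ae ?_
  filter_upwards [measure_eq_zero_iff_ae_notMem.1 hnull] with x hx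
  -- the line derivative is computed locally: on `D`, respectively off its closure
  have hcont : Filter.Tendsto (fun t : ℝ => x + t • (-e)) (nhds 0) (nhds x) := by
    have : Continuous fun t : ℝ => x + t • (-e) := by fun_prop
    simpa using this.tendsto 0
  by_cases hxD : x ∈ D
  · rw [indicator_of_mem hxD]
    congr 1
    refine HasDerivAt.deriv ((hG x hxD).congr_of_eventuallyEq ?_)
    filter_upwards [hcont (hD.mem_nhds hxD)] with t ht
    exact indicator_of_mem (mem_preimage.1 ht) g
  · rw [indicator_of_notMem hxD]
    have hxc : x ∈ (closure D)ᶜ := fun hc => hx ⟨hc, by rwa [hD.interior_eq]⟩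
    have : lineDeriv ℝ (D.indicator g) x (-e) = 0 := by
      refine HasDerivAt.deriv ((hasDerivAt_const (0 : ℝ) (0 : ℝ)).congr_of_eventuallyEq ?_)
      filter_upwards [hcont (isClosed_closure.isOpen_compl.mem_nhds hxc)] with t ht
      exact indicator_of_notMem (fun hm => ht (subset_closure hm)) g
    rw [this, zero_mul]

/-- The identity `-2 ∫_D g = ∫_D x · ∇g` for the relative stream function `g`, normalised to vanish
on `∂D`, with the right side evaluated. -/
lemma integral_stream {D : Set ℂ} (hD : IsOpen D) (hb : IsBounded D)
    (hnull : volume (frontier D) = 0) (Ω c : ℝ)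
    (h0 : ∀ x ∈ frontier D, 1 / (2 * π) * logPot D x - Ω / 2 * ‖x‖ ^ 2 = c) :
    -2 * ∫ x in D, (1 / (2 * π) * logPot D x - Ω / 2 * ‖x‖ ^ 2 - c)
      = volume.real D ^ 2 / (4 * π) - Ω * ∫ x in D, ‖x‖ ^ 2 := by
  obtain ⟨hfin, M, hM1, hM⟩ := bounded_data hb
  obtain ⟨-, M', hM1', hM'⟩ := bounded_data hb.closure
  have : IsFiniteMeasure (volume.restrict D) := ⟨by simpa using hfin⟩
  obtain ⟨L, hL0, hL⟩ := logPot_lipschitz hD.measurableSet hb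
  set g : ℂ → ℝ := fun x => 1 / (2 * π) * logPot D x - Ω / 2 * ‖x‖ ^ 2 - c with hgdef
  set K : ℂ → ℂ → ℝ := fun e x => ∫ w in D, inner ℝ (x - w) e / ‖x - w‖ ^ 2 with hK
  have hg : ∀ x ∈ closure D, ∀ y ∈ closure D,
      |g x - g y| ≤ (1 / (2 * π) * L + |Ω| * M') * ‖x - y‖ := by
    intro x hx y hy
    have hsq : |‖x‖ ^ 2 - ‖y‖ ^ 2| ≤ 2 * M' * ‖x - y‖ := by
      rw [sq_sub_sq, abs_mul, abs_of_nonneg (by positivity)]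
      have := hM' x hx
      have := hM' y hy
      have := abs_norm_sub_norm_le x y
      gcongr
      linarith
    have heq : g x - g y = 1 / (2 * π) * (logPot D x - logPot D y)
        + (-(Ω / 2)) * (‖x‖ ^ 2 - ‖y‖ ^ 2) := by
      simp only [hgdef]; ring
    rw [heq]
    refine (abs_add_le _ _).trans ?_
    rw [abs_mul, abs_mul, abs_neg, abs_div Ω, abs_two,
      abs_of_pos (show 0 < 1 / (2 * π) by positivity)]
    calc 1 / (2 * π) * |logPot D x - logPot D y| + |Ω| / 2 * |‖x‖ ^ 2 - ‖y‖ ^ 2|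
        ≤ 1 / (2 * π) * (L * ‖x - y‖) + |Ω| / 2 * (2 * M' * ‖x - y‖) := by
          gcongr
          exact hL x y
      _ = _ := by ring
  have hder : ∀ e : ℂ, ∀ x ∈ D, HasDerivAt (fun t : ℝ => g (x + t • (-e)))
      (-(1 / (2 * π) * K e x - Ω * inner ℝ e x)) 0 := by
    intro e x hx
    have h1 := hasDerivAt_logPot hD hb hx (-e)
    have h2 : HasDerivAt (fun t : ℝ => ‖x + t • (-e)‖ ^ 2) (-2 * inner ℝ e x) 0 := by
      have hl : HasDerivAt (fun t : ℝ => x + t • (-e)) (-e) 0 := by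
        simpa using ((hasDerivAt_id (0 : ℝ)).smul_const (-e)).const_add x
      have := hl.norm_sq
      simp only [zero_smul, add_zero, inner_neg_right, real_inner_comm] at this
      convert this using 1
      rw [real_inner_comm]; ring
    have h3 := ((h1.const_mul (1 / (2 * π))).sub (h2.const_mul (Ω / 2))).sub_const c
    refine HasDerivAt.congr_deriv h3 ?_
    simp only [hK, inner_neg_right, neg_div, integral_neg]
    ring
  have hparts : ∀ e : ℂ, ‖e‖ = 1 → ∫ x in D, g x
      = ∫ x in D, -(1 / (2 * π) * K e x - Ω * inner ℝ e x) * inner ℝ e x := fun e he =>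
    integral_eq_integral_deriv_mul hD hb hnull g _ (by positivity) hg
      (fun x hx => by simp only [hgdef]; rw [h0 x hx, sub_self]) e he _ (hder e)
  have hcontI : ∀ f : ℂ → ℝ, Continuous f → IntegrableOn f D := fun f hf =>
    (hf.continuousOn.integrableOn_compact hb.isCompact_closure).mono_set subset_closure
  have hKint : ∀ e : ℂ, ‖e‖ = 1 → IntegrableOn (fun x => K e x * inner ℝ e x) D := by
    intro e he
    have : Integrable (fun q : ℂ × ℂ => inner ℝ (q.1 - q.2) e / ‖q.1 - q.2‖ ^ 2 * inner ℝ e q.1)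
        ((volume.restrict D).prod (volume.restrict D)) := by
      refine integrable_prod_of_kernel _ D hD.measurableSet hfin _ (by fun_prop) id M
        (by linarith) ?_
      refine (ae_restrict_iff' hD.measurableSet).2
        (Filter.Eventually.of_forall fun x hx y hy => ?_)
      rw [abs_mul]
      have h1 := abs_inner_div_le (x - y) e
      have h2 := abs_real_inner_le_norm e x
      have := hM x hx
      rw [he] at h1 h2
      have h3 : 0 ≤ ‖x - y‖⁻¹ := by positivity
      simp only [id]
      calc _ ≤ (‖x - y‖⁻¹) * M := by gcongr <;> linarith
        _ ≤ _ := by nlinarith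
    have h2 := this.integral_prod_left
    simp only [integral_mul_const] at h2
    exact h2
  have hint : ∀ e : ℂ, ‖e‖ = 1 → IntegrableOn
      (fun x => -(1 / (2 * π) * K e x - Ω * inner ℝ e x) * inner ℝ e x) D := by
    intro e he
    have h1 := ((hKint e he).const_mul (-(1 / (2 * π)))).add
      (hcontI (fun x => Ω * inner ℝ e x * inner ℝ e x) (by fun_prop))
    refine h1.congr (Filter.Eventually.of_forall fun x => ?_)
    simp only [Pi.add_apply]
    ring
  have hKx : ∀ x, K 1 x * inner ℝ 1 x + K Complex.I x * inner ℝ Complex.I x = K x x := by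
    intro x
    simp only [hK]
    rw [← integral_mul_const, ← integral_mul_const, ← integral_add
      ((integrableOn_gradKernel hb x 1).mul_const _)
      ((integrableOn_gradKernel hb x Complex.I).mul_const _)]
    congr 1
    ext w
    simp only [Complex.inner, Complex.mul_re, Complex.conj_re, Complex.conj_im, Complex.one_re,
      Complex.one_im, Complex.I_re, Complex.I_im]
    ring
  obtain ⟨hjoint, hval⟩ := integral_integral_gradKernel hD hb
  have hKxint : IntegrableOn (fun x => K x x) D := hjoint.integral_prod_left
  have hsum : 2 * ∫ x in D, g x = ∫ x in D, (-(1 / (2 * π)) * K x x + Ω * ‖x‖ ^ 2) := by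
    rw [two_mul]
    nth_rewrite 1 [hparts 1 (by simp)]
    rw [hparts Complex.I (by simp), ← integral_add (hint 1 (by simp)) (hint _ (by simp))]
    congr 1
    ext x
    rw [← hKx, ← Complex.normSq_eq_norm_sq, Complex.normSq_apply]
    simp only [Complex.inner, Complex.mul_re, Complex.conj_re, Complex.conj_im, Complex.one_re,
      Complex.one_im, Complex.I_re, Complex.I_im]
    ring
  rw [integral_add (hKxint.const_mul _) (hcontI _ (by fun_prop)), integral_const_mul,
    integral_const_mul, hval] at hsum
  have hπ : π ≠ 0 := pi_ne_zero
  have : 1 / (2 * π) * (volume.real D ^ 2 / 2) = volume.real D ^ 2 / (4 * π) := by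
    field_simp; ring
  linarith

/-! ### The identity in the complex plane -/

lemma identity_complex {D : Set ℂ} (hD : IsOpen D) (hb : IsBounded D)
    (hnull : volume (frontier D) = 0) (Ω c : ℝ)
    (h0 : ∀ x ∈ frontier D, 1 / (2 * π) * logPot D x - Ω / 2 * ‖x‖ ^ 2 = c)
    (q : ℂ → ℝ) (hqc : ContinuousOn q (closure D)) (hq : ContDiffOn ℝ 2 q D)
    (hlap : ∀ z ∈ D, Laplacian.laplacian q z = -2) (hq0 : ∀ x ∈ frontier D, q x = 0) :
    Ω * ((∫ x in D, ‖x‖ ^ 2) - volume.real D ^ 2 / (2 * π))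
      = (1 - 2 * Ω) * (volume.real D ^ 2 / (4 * π) - ∫ x in D, q x) := by
  obtain ⟨L, hL0, hL⟩ := logPot_lipschitz hD.measurableSet hb
  have hpc : Continuous (logPot D) := by
    refine LipschitzWith.continuous (K := L.toNNReal) (LipschitzWith.of_dist_le_mul fun x y => ?_)
    rw [Real.coe_toNNReal _ hL0, Real.dist_eq, dist_eq_norm]
    exact hL x y
  -- the stream function is a multiple of the torsion function, by uniqueness
  have hu := eq_zero_of_circleAverage hD hb
    (((fun x => (1 / (2 * π)) • logPot D x) + fun x => (-(Ω / 2)) • ‖x‖ ^ 2) +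
      ((fun _ => -c) + fun x => ((1 - 2 * Ω) / 2) • q x)) ?_ ?_ ?_
  · have hI := integral_stream hD hb hnull Ω c h0
    have hcongr : ∫ x in D, (1 / (2 * π) * logPot D x - Ω / 2 * ‖x‖ ^ 2 - c)
        = ∫ x in D, (-((1 - 2 * Ω) / 2)) * q x := by
      refine setIntegral_congr_fun hD.measurableSet fun x hx => ?_
      have := hu x hx
      simp only [Pi.add_apply, smul_eq_mul] at this
      linarith
    rw [hcongr, integral_const_mul] at hI
    have hπ : π ≠ 0 := pi_ne_zero
    have h2 : volume.real D ^ 2 / (2 * π) = 2 * (volume.real D ^ 2 / (4 * π)) := by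
      field_simp; ring
    rw [h2]
    linarith
  · have h1 : Continuous ((fun x => (1 / (2 * π)) • logPot D x) +
        fun x : ℂ => (-(Ω / 2)) • ‖x‖ ^ 2) := by
      fun_prop
    exact h1.continuousOn.add (continuousOn_const.add (hqc.fun_const_smul _))
  · intro x hx
    have := h0 x hx
    simp only [Pi.add_apply, smul_eq_mul, hq0 x hx]
    linarith
  · intro x hx
    obtain ⟨r, hr, hsub⟩ := Metric.nhds_basis_closedBall.mem_iff.1 (hD.mem_nhds hx)
    refine ⟨r, hr, hsub, ?_⟩
    have hqi : CircleIntegrable (fun x => ((1 - 2 * Ω) / 2) • q x) x r := by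
      apply ContinuousOn.circleIntegrable'
      rw [abs_of_pos hr]
      exact (hq.continuousOn.mono
        (Metric.sphere_subset_closedBall.trans hsub)).fun_const_smul _
    have hci : ∀ f : ℂ → ℝ, Continuous f → CircleIntegrable f x r := fun f hf =>
      hf.continuousOn.circleIntegrable'
    have hc1 : CircleIntegrable (fun x => (1 / (2 * π)) • logPot D x) x r := hci _ (by fun_prop)
    have hc2 : CircleIntegrable (fun x : ℂ => (-(Ω / 2)) • ‖x‖ ^ 2) x r := hci _ (by fun_prop)
    have hc3 : CircleIntegrable (fun _ : ℂ => -c) x r := hci _ (by fun_prop)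
    rw [circleAverage_add (hc1.add hc2) (hc3.add hqi), circleAverage_add hc1 hc2,
      circleAverage_add hc3 hqi, circleAverage_fun_smul, circleAverage_fun_smul,
      circleAverage_fun_smul, circleAverage_const,
      circleAverage_logPot hD.measurableSet hb x r hr (Metric.ball_subset_closedBall.trans hsub),
      circleAverage_norm_sq, circleAverage_of_laplacian hD q hq hlap x r hr hsub]
    simp only [Pi.add_apply, smul_eq_mul]
    have hπ : π ≠ 0 := pi_ne_zero
    field_simp
    ring

/-! ### Transfer between `ℂ` and `ℝ²` -/

lemma volume_range_curve (γ : ℝ → R2) (hγ : ContDiff ℝ 2 γ) : volume (range γ) = 0 := by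
  have hdim : dimH (range γ) ≤ 1 := by
    have h := (hγ.of_le (by norm_num : (1 : WithTop ℕ∞) ≤ 2)).dimH_range_le
    simpa using h
  have hac : (volume : Measure R2) ≪ μH[((2 : NNReal) : ℝ)] := by
    have h2 : ((2 : NNReal) : ℝ) = (Module.finrank ℝ R2 : ℝ) := by simp
    rw [h2]
    exact Measure.absolutelyContinuous_isAddHaarMeasure _ _
  refine measure_zero_of_dimH_lt hac (hdim.trans_lt ?_)
  norm_num

lemma laplacian_comp_repr {D : Set R2} (hD : IsOpen D) {p : R2 → ℝ} (hp : ContDiffOn ℝ 2 p D)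
    (z : ℂ) (hz : Complex.orthonormalBasisOneI.repr z ∈ D) :
    Laplacian.laplacian (p ∘ Complex.orthonormalBasisOneI.repr) z
      = lap p (Complex.orthonormalBasisOneI.repr z) := by
  set T := Complex.orthonormalBasisOneI.repr with hT
  have hpz : ContDiffAt ℝ 2 p (T z) := hp.contDiffAt (hD.mem_nhds hz)
  have hd : DifferentiableAt ℝ (fderiv ℝ p) (T z) :=
    (hpz.fderiv_right (m := 1) (by norm_num)).differentiableAt (by norm_num)
  rw [InnerProductSpace.laplacian_eq_iteratedFDeriv_orthonormalBasis _
    Complex.orthonormalBasisOneI, lap]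
  refine Finset.sum_congr rfl fun i _ => ?_
  have hcomp := T.toContinuousLinearEquiv.iteratedFDerivWithin_comp_right p uniqueDiffOn_univ
    (mem_univ (T.toContinuousLinearEquiv z)) 2
  rw [preimage_univ, iteratedFDerivWithin_univ, iteratedFDerivWithin_univ] at hcomp
  change iteratedFDeriv ℝ 2 (p ∘ T.toContinuousLinearEquiv) z _ = _
  rw [hcomp, ContinuousMultilinearMap.compContinuousLinearMap_apply, iteratedFDeriv_two_apply,
    fderiv_clm_apply hd (differentiableAt_const _)]
  have hTi : T (![1, Complex.I] i) = EuclideanSpace.single i 1 := by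
    rw [← Complex.coe_orthonormalBasisOneI]
    exact Complex.orthonormalBasisOneI.repr_self i
  simp [hTi]

/-- The first variational identity for rotating patches, involving the
torsion function `p` of `D`. -/
theorem rotating_patch_identity_torsion (D : Set R2) (Ω : ℝ)
    (hsol : IsPatchSolution D Ω) (p : R2 → ℝ)
    (hpcont : ContinuousOn p (closure D)) (hpC2 : ContDiffOn ℝ 2 p D)
    (hplap : ∀ x ∈ D, lap p x = -2) (hpbdry : ∀ x ∈ frontier D, p x = 0) :
    Ω * ((∫ x in D, ‖x‖ ^ 2) - (volume D).toReal ^ 2 / (2 * π))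
      = (1 - 2 * Ω) * ((volume D).toReal ^ 2 / (4 * π) - ∫ x in D, p x) := by
  obtain ⟨hD, hb, -, ⟨γ, hγ, -, -, -, hrange⟩, c, hc⟩ := hsol
  set T : ℂ ≃ₗᵢ[ℝ] R2 := Complex.orthonormalBasisOneI.repr with hT
  have hmp : MeasurePreserving T := Complex.orthonormalBasisOneI.measurePreserving_repr
  have hemb : MeasurableEmbedding T := T.toHomeomorph.measurableEmbedding
  have hcl : T ⁻¹' closure D = closure (T ⁻¹' D) := T.toHomeomorph.preimage_closure D
  have hfr : T ⁻¹' frontier D = frontier (T ⁻¹' D) := T.toHomeomorph.preimage_frontier D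
  have hInt : ∀ f : R2 → ℝ, ∫ z in T ⁻¹' D, f (T z) = ∫ x in D, f x := fun f =>
    hmp.setIntegral_preimage_emb hemb f D
  have hvol : volume.real (T ⁻¹' D) = (volume D).toReal := by
    rw [measureReal_def, hmp.measure_preimage_emb hemb]
  have hpot : ∀ z, patchConv D (T z) = 1 / (2 * π) * logPot (T ⁻¹' D) z := by
    intro z
    rw [patchConv, ← hInt, logPot, ← integral_const_mul]
    simp only [nker, ← map_sub, LinearIsometryEquiv.norm_map]
  have hnull : volume (frontier (T ⁻¹' D)) = 0 := by
    rw [← hfr, hmp.measure_preimage_emb hemb, ← hrange]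
    exact volume_range_curve γ hγ
  have hbT : IsBounded (T ⁻¹' D) := T.antilipschitz.isBounded_preimage hb
  have h := identity_complex (hD.preimage T.continuous) hbT hnull Ω c ?_ (p ∘ T) ?_ ?_ ?_ ?_
  · rw [hvol] at h
    have h1 := hInt fun x => ‖x‖ ^ 2
    simp only [LinearIsometryEquiv.norm_map] at h1
    have h2 : ∫ z in T ⁻¹' D, (p ∘ T) z = ∫ x in D, p x := hInt p
    rwa [h1, h2] at h
  · intro z hz
    rw [← hfr] at hz
    have := hc (T z) hz
    rwa [streamFun, hpot, LinearIsometryEquiv.norm_map] at this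
  · rw [← hcl]
    exact hpcont.comp T.continuous.continuousOn fun z hz => hz
  · exact hpC2.comp T.contDiff.contDiffOn fun z hz => hz
  · intro z hz
    rw [laplacian_comp_repr hD hpC2 z hz]
    exact hplap _ hz
  · intro z hz
    rw [← hfr] at hz
    exact hpbdry _ hz
end
end
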